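/- Assume (H2). There exist constants C₁ > 1 and C₀' > 0, depending only on a₀ and C₀, such that for every ε₀ ∈ (0, 1/(2C₁)), every λ > 1 and every η ∈ (0, 1/2), if ε₀⁻²/C₀' ≤ β := b(x₀, e^{t₀}), then for every τ ∈ (0,1): (1 - τ)² (|K| β / (2π e^{t₀})) Σ_{k=0}^∞ [Λ_m(λ) - 1/4 - C₀'/(τ ε₀)² - (2k+1)β]₊⁰ ≤ N(λ; q̂^Ã_K), where Λ_m(λ) = (1 + η²)⁻¹ ( λ/(1 + ε₀ C₁) - (ε₀⁴/η²) C₁ β² ), and [ρ]₊⁰ = 1 if ρ > 0 and 0 otherwise. -/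

import Mathlib

open MeasureTheory Real Filter

noncomputable section

/-- The upper half-plane ℍ as a subset of ℝ². -/
def UHP : Set (ℝ × ℝ) := {p : ℝ × ℝ | 0 < p.2}

/-- The hyperbolic measure `dv = y⁻² dx dy` on ℍ. -/
def volH : Measure (ℝ × ℝ) :=
  (volume.restrict UHP).withDensity fun p => ENNReal.ofReal ((p.2 ^ 2)⁻¹)

/-- x-derivative of a complex function on ℝ². -/
def dX (f : ℝ × ℝ → ℂ) (p : ℝ × ℝ) : ℂ := fderiv ℝ f p (1, 0)

/-- y-derivative of a complex function on ℝ². -/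
def dY (f : ℝ × ℝ → ℂ) (p : ℝ × ℝ) : ℂ := fderiv ℝ f p (0, 1)

/-- x-derivative of a real function on ℝ². -/
def dXr (f : ℝ × ℝ → ℝ) (p : ℝ × ℝ) : ℝ := fderiv ℝ f p (1, 0)

/-- y-derivative of a real function on ℝ². -/
def dYr (f : ℝ × ℝ → ℝ) (p : ℝ × ℝ) : ℝ := fderiv ℝ f p (0, 1)

/-- The magnetic field `b̃ = y² (∂ₓA₂ - ∂_yA₁)`. -/
def fieldB (A₁ A₂ : ℝ × ℝ → ℝ) (p : ℝ × ℝ) : ℝ := p.2 ^ 2 * (dXr A₂ p - dYr A₁ p)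

/-- The magnetic intensity `b = |b̃|`. -/
def intenB (A₁ A₂ : ℝ × ℝ → ℝ) (p : ℝ × ℝ) : ℝ := |fieldB A₁ A₂ p|

/-- Smooth compactly supported test functions with support inside a set `Ω`. -/
def IsTestOn (Ω : Set (ℝ × ℝ)) (f : ℝ × ℝ → ℂ) : Prop :=
  ContDiff ℝ (⊤ : ℕ∞) f ∧ HasCompactSupport f ∧ tsupport f ⊆ Ω

/-- The quadratic form of the magnetic Laplacian on ℍ. -/
def qA (A₁ A₂ : ℝ × ℝ → ℝ) (f : ℝ × ℝ → ℂ) : ℝ :=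
  ∫ p, p.2 ^ 2 * (‖-Complex.I * dX f p - (A₁ p : ℂ) * f p‖ ^ 2 +
    ‖-Complex.I * dY f p - (A₂ p : ℂ) * f p‖ ^ 2) ∂volH

/-- hyperbolic distance from `(x,y)` to `(0,1)`. -/
def hDist (p : ℝ × ℝ) : ℝ :=
  2 * Real.arsinh (Real.sqrt (p.1 ^ 2 + (p.2 - 1) ^ 2) / (2 * Real.sqrt p.2))

/-- (H1) : the magnetic intensity tends to +∞ at infinity. -/
def H1 (A₁ A₂ : ℝ × ℝ → ℝ) : Prop :=
  ∀ M : ℝ, ∃ R : ℝ, ∀ p ∈ UHP, R ≤ hDist p → M ≤ intenB A₁ A₂ p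

/-- (H2) : control of the derivative of the magnetic field. -/
def H2 (C₀ : ℝ) (A₁ A₂ : ℝ × ℝ → ℝ) : Prop :=
  ∀ p ∈ UHP, p.2 * Real.sqrt ((dXr (fieldB A₁ A₂) p) ^ 2 + (dYr (fieldB A₁ A₂) p) ^ 2)
    ≤ C₀ * (intenB A₁ A₂ p + 1)

/-- Counting function of a quadratic form `q` with form domain `dom` and squared
norm `nsq`, via Glazman's lemma. -/
def NN (q : (ℝ × ℝ → ℂ) → ℝ) (dom : Set (ℝ × ℝ → ℂ)) (nsq : (ℝ × ℝ → ℂ) → ℝ)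
    (lam : ℝ) : ℕ :=
  sSup {n : ℕ | ∃ V : Submodule ℂ (ℝ × ℝ → ℂ), (V : Set (ℝ × ℝ → ℂ)) ⊆ dom ∧
    Module.finrank ℂ V = n ∧ ∀ u ∈ V, u ≠ 0 → q u < lam * nsq u}

/-- Heaviside function `[ρ]₊⁰`. -/
def heav (ρ : ℝ) : ℝ := if 0 < ρ then 1 else 0


/-- The rectangle `K = X₀ + K₀` with `K₀ = (-ε₀ a e^{t₀}/2, ε₀ a e^{t₀}/2) × (-ε₀/2, ε₀/2)`. -/
def Krect (x₀ t₀ a ε₀ : ℝ) : Set (ℝ × ℝ) :=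
  Set.Ioo (x₀ - ε₀ * a * Real.exp t₀ / 2) (x₀ + ε₀ * a * Real.exp t₀ / 2) ×ˢ
    Set.Ioo (t₀ - ε₀ / 2) (t₀ + ε₀ / 2)

/-- `Ã₁(x,t) = -∫_{e^{t₀}}^{e^t} b̃(x,s) s⁻² ds`. -/
def Atil (A₁ A₂ : ℝ × ℝ → ℝ) (t₀ : ℝ) (p : ℝ × ℝ) : ℝ :=
  -∫ s in Real.exp t₀..Real.exp p.2, fieldB A₁ A₂ (p.1, s) / s ^ 2

/-- `A₁⁰(x,t) = -(t - t₀) e^{-t₀} b̃₀`. -/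
def Azero (t₀ b₀ : ℝ) (p : ℝ × ℝ) : ℝ := -(p.2 - t₀) * Real.exp (-t₀) * b₀

/-- The Dirichlet form `q̂^Ã_K`. -/
def qhatK (A₁ A₂ : ℝ × ℝ → ℝ) (x₀ t₀ a ε₀ : ℝ) (w : ℝ × ℝ → ℂ) : ℝ :=
  ∫ p in Krect x₀ t₀ a ε₀,
    (Real.exp (2 * p.2) * ‖-Complex.I * dX w p - (Atil A₁ A₂ t₀ p : ℂ) * w p‖ ^ 2
      + ‖dY w p‖ ^ 2 + (1/4) * ‖w p‖ ^ 2)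

/-- The Dirichlet form `q̂^{Ã,0}_K` (with frozen factor `e^{2t₀}`). -/
def qhatK0 (A₁ A₂ : ℝ × ℝ → ℝ) (x₀ t₀ a ε₀ : ℝ) (w : ℝ × ℝ → ℂ) : ℝ :=
  ∫ p in Krect x₀ t₀ a ε₀,
    (Real.exp (2 * t₀) * ‖-Complex.I * dX w p - (Atil A₁ A₂ t₀ p : ℂ) * w p‖ ^ 2
      + ‖dY w p‖ ^ 2 + (1/4) * ‖w p‖ ^ 2)

/-- The Dirichlet form `q^{A⁰,0}_K` of the frozen constant magnetic field `b̃₀`. -/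
def qK0 (x₀ t₀ a ε₀ b₀ : ℝ) (w : ℝ × ℝ → ℂ) : ℝ :=
  ∫ p in Krect x₀ t₀ a ε₀,
    (Real.exp (2 * t₀) * ‖-Complex.I * dX w p - (Azero t₀ b₀ p : ℂ) * w p‖ ^ 2
      + ‖dY w p‖ ^ 2 + (1/4) * ‖w p‖ ^ 2)


/-- Dirichlet eigenvalue counting function of `q̂^Ã_K` on `L²(K)`. -/
def NKA (A₁ A₂ : ℝ × ℝ → ℝ) (x₀ t₀ a ε₀ lam : ℝ) : ℕ :=
  NN (qhatK A₁ A₂ x₀ t₀ a ε₀) {w | IsTestOn (Krect x₀ t₀ a ε₀) w}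
    (fun w => ∫ p in Krect x₀ t₀ a ε₀, ‖w p‖ ^ 2) lam


/-!
Let `N` be the counting function. Since `q̂^Ã_K` satisfies a Poincaré inequality on small cells,
`N` is finite and attained on a maximal subspace where `q̂^Ã_K < λ ‖·‖²`; pairing with a basis of
that subspace gives `N` linear functionals on whose common kernel `q̂^Ã_K ≥ λ ‖·‖²`. Freezing the
field at the centre of `K` changes the form by at most the factor `1 + ε₀ C₁` and the two
`η`-errors, so on this kernel the constant field form is at least `Λ_m(λ) ‖·‖²`.

Now take `k` Landau states per level up to level `m`, on a cylinder of circumference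
`L = (1 - τ/2) ε₀ a e^{t₀}`: plane waves in `x` times polynomials of degree at most `m` times a
Gaussian in `t`, the centres of the Gaussians being `κ = 2π e^{t₀} / (L β)` apart. A quadratic
partition of unity in `t` with period `L' = (1 - τ/2) ε₀` cuts the states into about `n = k κ / L'`
tiles, and each tile, moved by a gauge translation, fits into `K`. If `n N < k (m + 1)`, some
nonzero combination is annihilated by all `N` functionals on all tiles, whereas its energy is at
most `(2m + 1) β + 1/4 + O((τ ε₀)⁻²)` times its mass. So `k (m + 1) ≤ n N` as long as this is less
than `Λ_m(λ)`, and `k → ∞` gives `(m + 1) L' / κ ≤ N`.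
-/

open scoped ContDiff in
/-- Cutoffs tiling the line: the translates `χ (· - j L)`, `j ∈ ℤ`, are smooth, of width `L + δ`,
overlap on intervals of length `δ`, and have squares summing to `1`. The partition of unity is
recorded through a smooth step `P` from `0` to `1`, so that sums over tiles telescope, and `D`
bounds the derivatives of `χ` and `P`. -/
structure TileCutoff (L δ D : ℝ) (χ P : ℝ → ℝ) : Prop where
  overlap_pos : 0 < δ
  overlap_lt : δ < L
  contDiff : ContDiff ℝ ∞ χ
  contDiff_step : ContDiff ℝ ∞ P
  sq_eq : ∀ x, χ x ^ 2 = P (x + L / 2) - P (x - L / 2)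
  step_eq_zero : ∀ x, x ≤ -δ / 2 → P x = 0
  step_eq_one : ∀ x, δ / 2 ≤ x → P x = 1
  step_nonneg : ∀ x, 0 ≤ P x
  step_le_one : ∀ x, P x ≤ 1
  abs_deriv_le : ∀ x, |deriv χ x| ≤ D
  abs_deriv_step_le : ∀ x, |deriv P x| ≤ D
  eq_zero : ∀ x, (L + δ) / 2 ≤ |x| → χ x = 0

section CutoffConstruction

open scoped ContDiff

lemma deriv_eq_zero_of_eqOn_const {f : ℝ → ℝ} {s : Set ℝ} (hs : IsOpen s) {c : ℝ}
    (hf : ∀ y ∈ s, f y = c) {x : ℝ} (hx : x ∈ s) : deriv f x = 0 := by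
  have hloc : f =ᶠ[nhds x] fun _ => c := by
    filter_upwards [hs.mem_nhds hx] with y hy using hf y hy
  rw [hloc.deriv_eq, deriv_const]

lemma exists_abs_deriv_smoothTransition_le :
    ∃ C : ℝ, 0 < C ∧ ∀ x, |deriv smoothTransition x| ≤ C := by
  have hcont : Continuous (deriv smoothTransition) :=
    (smoothTransition.contDiff (n := 1)).continuous_deriv le_rfl
  obtain ⟨C, hC⟩ :=
    (isCompact_Icc (a := (0 : ℝ)) (b := 1)).exists_bound_of_continuousOn hcont.continuousOn
  refine ⟨max C 1, by positivity, fun x => ?_⟩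
  by_cases hx : x ∈ Set.Icc (0 : ℝ) 1
  · exact (hC x hx).trans (le_max_left _ _)
  have hzero : deriv smoothTransition x = 0 := by
    rw [Set.mem_Icc, not_and_or, not_le, not_le] at hx
    rcases hx with hx | hx
    · exact deriv_eq_zero_of_eqOn_const isOpen_Iio
        (fun y hy => smoothTransition.zero_of_nonpos (le_of_lt hy)) hx
    · exact deriv_eq_zero_of_eqOn_const isOpen_Ioi
        (fun y hy => smoothTransition.one_of_one_le (le_of_lt hy)) hx
  rw [hzero, abs_zero]
  positivity

/-- Smooth monotone transition from the angle `0` to the angle `π / 2` across `[-δ/2, δ/2]`; its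
sine and cosine are the two halves of a quadratic partition of unity. -/
def stepAngle (δ x : ℝ) : ℝ := π / 2 * smoothTransition (x / δ + 1 / 2)

variable {δ : ℝ}

lemma contDiff_stepAngle : ContDiff ℝ ∞ (stepAngle δ) :=
  contDiff_const.mul
    (smoothTransition.contDiff.comp ((contDiff_id.div_const _).add contDiff_const))

lemma hasDerivAt_stepAngle (x : ℝ) : HasDerivAt (stepAngle δ) (deriv (stepAngle δ) x) x :=
  (contDiff_stepAngle.differentiable (by simp) x).hasDerivAt

lemma stepAngle_of_le (hδ : 0 < δ) {x : ℝ} (hx : x ≤ -δ / 2) : stepAngle δ x = 0 := by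
  have hle : x / δ ≤ -1 / 2 := by rw [div_le_iff₀ hδ]; linarith
  rw [stepAngle, smoothTransition.zero_of_nonpos (by linarith), mul_zero]

lemma stepAngle_of_ge (hδ : 0 < δ) {x : ℝ} (hx : δ / 2 ≤ x) : stepAngle δ x = π / 2 := by
  have hge : 1 / 2 ≤ x / δ := by rw [le_div_iff₀ hδ]; linarith
  rw [stepAngle, smoothTransition.one_of_one_le (by linarith), mul_one]

lemma abs_deriv_stepAngle_le {C : ℝ} (hC : ∀ x, |deriv smoothTransition x| ≤ C) (hδ : 0 < δ)
    (x : ℝ) : |deriv (stepAngle δ) x| ≤ π * C / δ / 2 := by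
  have hinner : HasDerivAt (fun x : ℝ => x / δ + 1 / 2) (1 / δ) x :=
    ((hasDerivAt_id x).div_const δ).add_const _
  have houter : HasDerivAt smoothTransition (deriv smoothTransition (x / δ + 1 / 2))
      (x / δ + 1 / 2) :=
    ((smoothTransition.contDiff (n := 1)).differentiable (by simp) _).hasDerivAt
  have hderiv : deriv (stepAngle δ) x
      = π / 2 * (deriv smoothTransition (x / δ + 1 / 2) * (1 / δ)) :=
    ((houter.comp x hinner).const_mul (π / 2)).deriv
  rw [hderiv, abs_mul, abs_mul, abs_of_pos pi_div_two_pos, abs_of_pos (one_div_pos.2 hδ)]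
  calc π / 2 * (|deriv smoothTransition (x / δ + 1 / 2)| * (1 / δ))
      ≤ π / 2 * (C * (1 / δ)) := by gcongr; exact hC _
    _ = π * C / δ / 2 := by ring

lemma abs_deriv_sin_mul_cos_le {f g : ℝ → ℝ} {f' g' M x : ℝ} (hf : HasDerivAt f f' x)
    (hg : HasDerivAt g g' x) (hf' : |f'| ≤ M) (hg' : |g'| ≤ M) :
    |deriv (fun x => sin (f x) * cos (g x)) x| ≤ 2 * M := by
  have hderiv : deriv (fun x => sin (f x) * cos (g x)) x
      = cos (f x) * f' * cos (g x) + sin (f x) * (-sin (g x) * g') := (hf.sin.mul hg.cos).deriv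
  rw [hderiv]
  have hM : 0 ≤ M := (abs_nonneg _).trans hf'
  have hcc : |cos (f x) * f' * cos (g x)| ≤ 1 * M * 1 := by
    rw [abs_mul, abs_mul]
    gcongr
    exacts [abs_cos_le_one _, abs_cos_le_one _]
  have hss : |sin (f x) * (-sin (g x) * g')| ≤ 1 * (1 * M) := by
    rw [abs_mul, abs_mul, abs_neg]
    gcongr
    exacts [abs_sin_le_one _, abs_sin_le_one _]
  linarith [abs_add_le (cos (f x) * f' * cos (g x)) (sin (f x) * (-sin (g x) * g'))]

lemma abs_deriv_sin_sq_le {f : ℝ → ℝ} {f' M x : ℝ} (hf : HasDerivAt f f' x) (hf' : |f'| ≤ M) :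
    |deriv (fun x => sin (f x) ^ 2) x| ≤ 2 * M := by
  have hderiv : deriv (fun x => sin (f x) ^ 2) x = 2 * sin (f x) * (cos (f x) * f') :=
    (hf.sin.pow 2).deriv.trans (by push_cast; ring)
  rw [hderiv, abs_mul, abs_mul, abs_mul, abs_two]
  calc 2 * |sin (f x)| * (|cos (f x)| * |f'|) ≤ 2 * 1 * (1 * M) := by
        gcongr
        exacts [abs_sin_le_one _, abs_cos_le_one _]
    _ = 2 * M := by ring

lemma tileCutoff_sin_mul_cos_stepAngle {L C : ℝ} (hC : ∀ x, |deriv smoothTransition x| ≤ C)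
    (hδ : 0 < δ) (hL : δ < L) :
    TileCutoff L δ (π * C / δ)
      (fun x => sin (stepAngle δ (x + L / 2)) * cos (stepAngle δ (x - L / 2)))
      (fun x => sin (stepAngle δ x) ^ 2) where
  overlap_pos := hδ
  overlap_lt := hL
  contDiff :=
    (contDiff_sin.comp (contDiff_stepAngle.comp (contDiff_id.add contDiff_const))).mul
      (contDiff_cos.comp (contDiff_stepAngle.comp (contDiff_id.sub contDiff_const)))
  contDiff_step := (contDiff_sin.comp contDiff_stepAngle).pow 2
  sq_eq x := by
    by_cases hx : x - L / 2 ≤ -δ / 2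
    · simp [stepAngle_of_le hδ hx]
    · rw [stepAngle_of_ge hδ (by linarith : δ / 2 ≤ x + L / 2), sin_pi_div_two]
      linarith [sin_sq_add_cos_sq (stepAngle δ (x - L / 2))]
  step_eq_zero x hx := by simp [stepAngle_of_le hδ hx]
  step_eq_one x hx := by simp [stepAngle_of_ge hδ hx]
  step_nonneg x := sq_nonneg _
  step_le_one x := sin_sq_le_one _
  abs_deriv_le x := (abs_deriv_sin_mul_cos_le ((hasDerivAt_stepAngle _).comp_add_const x (L / 2))
    ((hasDerivAt_stepAngle _).comp_sub_const x (L / 2)) (abs_deriv_stepAngle_le hC hδ _)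
    (abs_deriv_stepAngle_le hC hδ _)).trans_eq (by ring)
  abs_deriv_step_le x := (abs_deriv_sin_sq_le (hasDerivAt_stepAngle x)
    (abs_deriv_stepAngle_le hC hδ x)).trans_eq (by ring)
  eq_zero x hx := by
    rcases le_abs.1 hx with hx | hx
    · simp [stepAngle_of_ge hδ (by linarith : δ / 2 ≤ x - L / 2)]
    · simp [stepAngle_of_le hδ (by linarith : x + L / 2 ≤ -δ / 2)]

lemma exists_tileCutoff :
    ∃ C : ℝ, 0 < C ∧ ∀ L δ : ℝ, 0 < δ → δ < L → ∃ χ P, TileCutoff L δ (C / δ) χ P := by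
  obtain ⟨C, hC, hbound⟩ := exists_abs_deriv_smoothTransition_le
  exact ⟨π * C, by positivity, fun L δ hδ hL =>
    ⟨_, _, tileCutoff_sin_mul_cos_stepAngle hbound hδ hL⟩⟩

end CutoffConstruction

namespace TileCutoff

variable {L δ D : ℝ} {χ P : ℝ → ℝ}

lemma length_pos (h : TileCutoff L δ D χ P) : 0 < L := h.overlap_pos.trans h.overlap_lt

lemma bound_nonneg (h : TileCutoff L δ D χ P) : 0 ≤ D := (abs_nonneg _).trans (h.abs_deriv_le 0)

lemma continuous (h : TileCutoff L δ D χ P) : Continuous χ := h.contDiff.continuous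

lemma continuous_deriv (h : TileCutoff L δ D χ P) : Continuous (deriv χ) :=
  h.contDiff.continuous_deriv (by simp)

lemma hasDerivAt (h : TileCutoff L δ D χ P) (x : ℝ) : HasDerivAt χ (deriv χ x) x :=
  (h.contDiff.differentiable (by simp) x).hasDerivAt

lemma hasDerivAt_step (h : TileCutoff L δ D χ P) (x : ℝ) : HasDerivAt P (deriv P x) x :=
  (h.contDiff_step.differentiable (by simp) x).hasDerivAt

lemma support_subset (h : TileCutoff L δ D χ P) :
    Function.support χ ⊆ Set.Ioo (-((L + δ) / 2)) ((L + δ) / 2) := fun x hx =>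
  abs_lt.1 (not_le.1 fun hle => hx (h.eq_zero x hle))

lemma hasCompactSupport (h : TileCutoff L δ D χ P) : HasCompactSupport χ :=
  HasCompactSupport.intro isCompact_Icc fun _ hx => Function.notMem_support.1 fun hmem =>
    hx (Set.Ioo_subset_Icc_self (h.support_subset hmem))

lemma deriv_eq_zero (h : TileCutoff L δ D χ P) {x : ℝ} (hx : L ≤ |x|) : deriv χ x = 0 := by
  refine deriv_eq_zero_of_eqOn_const (isOpen_lt continuous_const continuous_abs)
    (fun y hy => h.eq_zero y (le_of_lt hy)) (?_ : (L + δ) / 2 < |x|)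
  linarith [h.overlap_lt]

lemma deriv_step_eq_zero (h : TileCutoff L δ D χ P) {x : ℝ} (hx : δ / 2 < |x|) :
    deriv P x = 0 := by
  rcases lt_abs.1 hx with hx | hx
  · exact deriv_eq_zero_of_eqOn_const isOpen_Ioi (fun y hy => h.step_eq_one y (le_of_lt hy)) hx
  · exact deriv_eq_zero_of_eqOn_const isOpen_Iio (fun y hy => h.step_eq_zero y (le_of_lt hy))
      (by linarith : x < -δ / 2)

lemma sum_sq (h : TileCutoff L δ D χ P) (n : ℕ) (x : ℝ) :
    ∑ j ∈ Finset.range n, χ (x - j * L) ^ 2 = P (x + L / 2) - P (x + L / 2 - n * L) := by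
  have htel := Finset.sum_range_sub' (fun j : ℕ => P (x + L / 2 - j * L)) n
  simp only [Nat.cast_zero, zero_mul, sub_zero] at htel
  rw [← htel]
  refine Finset.sum_congr rfl fun j _ => ?_
  rw [h.sq_eq]
  push_cast
  ring_nf

lemma sum_sq_le_one (h : TileCutoff L δ D χ P) (n : ℕ) (x : ℝ) :
    ∑ j ∈ Finset.range n, χ (x - j * L) ^ 2 ≤ 1 := by
  rw [h.sum_sq]
  linarith [h.step_le_one (x + L / 2), h.step_nonneg (x + L / 2 - n * L)]

lemma sum_sq_eq_one (h : TileCutoff L δ D χ P) {n : ℕ} {x : ℝ} (h0 : 0 ≤ x)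
    (hn : x ≤ (n - 1) * L) : ∑ j ∈ Finset.range n, χ (x - j * L) ^ 2 = 1 := by
  have hL := h.overlap_lt
  rw [h.sum_sq, h.step_eq_one _ (by linarith), h.step_eq_zero _ (by linarith), sub_zero]

lemma two_mul_mul_deriv (h : TileCutoff L δ D χ P) (x : ℝ) :
    2 * χ x * deriv χ x = deriv P (x + L / 2) - deriv P (x - L / 2) := by
  have hsq : HasDerivAt (fun x => χ x ^ 2) (2 * χ x * deriv χ x) x :=
    ((h.hasDerivAt x).pow 2).congr_deriv (by push_cast; ring)
  have hstep : HasDerivAt (fun x => P (x + L / 2) - P (x - L / 2))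
      (deriv P (x + L / 2) - deriv P (x - L / 2)) x :=
    ((h.hasDerivAt_step _).comp_add_const x (L / 2)).sub
      ((h.hasDerivAt_step _).comp_sub_const x (L / 2))
  rw [funext h.sq_eq] at hsq
  exact hsq.unique hstep

lemma sum_two_mul_mul_deriv (h : TileCutoff L δ D χ P) (n : ℕ) (x : ℝ) :
    ∑ j ∈ Finset.range n, 2 * χ (x - j * L) * deriv χ (x - j * L)
      = deriv P (x + L / 2) - deriv P (x + L / 2 - n * L) := by
  have htel := Finset.sum_range_sub' (fun j : ℕ => deriv P (x + L / 2 - j * L)) n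
  simp only [Nat.cast_zero, zero_mul, sub_zero] at htel
  rw [← htel]
  refine Finset.sum_congr rfl fun j _ => ?_
  rw [h.two_mul_mul_deriv]
  push_cast
  ring_nf

lemma sum_deriv_sq_le (h : TileCutoff L δ D χ P) (n : ℕ) (x : ℝ) :
    ∑ j ∈ Finset.range n, deriv χ (x - j * L) ^ 2 ≤ 2 * D ^ 2 := by
  have hL := h.length_pos
  -- at most two of the intervals `(j L - L, j L + L)` contain `x`
  let s := (Finset.range n).filter fun j : ℕ => |x - j * L| < L
  have hcard : s.card ≤ 2 := by
    have hsub : s.image (fun j : ℕ => (j : ℤ)) ⊆ {⌊x / L⌋, ⌊x / L⌋ + 1} := by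
      intro z hz
      obtain ⟨j, hj, rfl⟩ := Finset.mem_image.1 hz
      obtain ⟨hlo, hhi⟩ := abs_lt.1 (Finset.mem_filter.1 hj).2
      have hlow : x / L < (j : ℤ) + 1 := by rw [div_lt_iff₀ hL]; push_cast; linarith
      have hhigh : (j : ℤ) - 1 < x / L := by rw [lt_div_iff₀ hL]; push_cast; linarith
      have hfloor : ⌊x / L⌋ < (j : ℤ) + 1 := Int.floor_lt.2 (by exact_mod_cast hlow)
      have hle_floor : (j : ℤ) - 1 ≤ ⌊x / L⌋ := Int.le_floor.2 (by exact_mod_cast hhigh.le)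
      simp only [Finset.mem_insert, Finset.mem_singleton]
      omega
    calc s.card = (s.image fun j : ℕ => (j : ℤ)).card :=
          (Finset.card_image_of_injective _ Nat.cast_injective).symm
      _ ≤ _ := Finset.card_le_card hsub
      _ ≤ 2 := Finset.card_le_two
  calc ∑ j ∈ Finset.range n, deriv χ (x - j * L) ^ 2
      = ∑ j ∈ s, deriv χ (x - j * L) ^ 2 := by
        refine (Finset.sum_filter_of_ne fun j _ hne => ?_).symm
        contrapose! hne
        rw [h.deriv_eq_zero hne, zero_pow two_ne_zero]
    _ ≤ s.card • D ^ 2 := Finset.sum_le_card_nsmul _ _ _ fun j _ =>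
        sq_le_sq' (abs_le.1 (h.abs_deriv_le _)).1 (abs_le.1 (h.abs_deriv_le _)).2
    _ ≤ 2 * D ^ 2 := by
        rw [nsmul_eq_mul]
        gcongr
        exact_mod_cast hcard

end TileCutoff

section Periodic

variable {E : Type*} [NormedAddCommGroup E] [NormedSpace ℝ E] {L δ D : ℝ} {χ P : ℝ → ℝ}

namespace TileCutoff

lemma integrable_smul (h : TileCutoff L δ D χ P) {f : ℝ → ℝ} (hf : Continuous f) {g : ℝ → E}
    (hg : Continuous g) : Integrable fun x => (χ x * f x) • g x := by
  have hχ := h.continuous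
  exact Continuous.integrable_of_hasCompactSupport (by fun_prop)
    h.hasCompactSupport.mul_right.smul_right

lemma integral_sq_smul_periodic (h : TileCutoff L δ D χ P) {g : ℝ → E} (hg : Continuous g)
    (hper : Function.Periodic g L) : ∫ x, χ x ^ 2 • g x = ∫ x in (0 : ℝ)..L, g x := by
  have hL := h.length_pos
  have hδ := h.overlap_lt
  have hsupp : Function.support (fun x => χ x ^ 2 • g x) ⊆ Set.Ioc (-L) L := by
    intro x hx
    have hχ : x ∈ Function.support χ := fun hzero => hx (by simp [hzero])
    obtain ⟨hlo, hhi⟩ := h.support_subset hχ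
    exact ⟨by linarith, by linarith⟩
  -- `χ² g` is the difference of a translate of `F` and `F`, and `F` joins `0` to `g`.
  let F : ℝ → E := fun x => P (x - L / 2) • g x
  have hF : Continuous F := by
    have hP := h.contDiff_step.continuous
    fun_prop
  have hFi (a b : ℝ) : IntervalIntegrable F volume a b := hF.intervalIntegrable a b
  have hFshift : IntervalIntegrable (fun x => F (x + L)) volume (-L) L :=
    (hF.comp (continuous_add_const L)).intervalIntegrable _ _
  have hdiff (x : ℝ) : χ x ^ 2 • g x = F (x + L) - F x := by
    change _ = P (x + L - L / 2) • g (x + L) - P (x - L / 2) • g x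
    rw [h.sq_eq, hper x, sub_smul, show x + L - L / 2 = x + L / 2 by ring]
  have hleft : ∫ x in (-L)..0, F x = 0 := by
    refine intervalIntegral.integral_zero_ae (ae_of_all _ fun x hx => ?_)
    rw [Set.uIoc_of_le (by linarith)] at hx
    simp only [F, h.step_eq_zero (x - L / 2) (by linarith [hx.2]), zero_smul]
  have hright : ∫ x in L..(L + L), F x = ∫ x in (0 : ℝ)..L, g x := by
    rw [intervalIntegral.integral_congr (g := g), hper.intervalIntegral_add_eq L 0, zero_add]
    intro x hx
    rw [Set.uIcc_of_le (by linarith)] at hx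
    simp only [F, h.step_eq_one (x - L / 2) (by linarith [hx.1]), one_smul]
  rw [← intervalIntegral.integral_eq_integral_of_support_subset hsupp]
  simp_rw [hdiff]
  rw [intervalIntegral.integral_sub hFshift (hFi _ _),
    intervalIntegral.integral_comp_add_right, neg_add_cancel,
    ← intervalIntegral.integral_add_adjacent_intervals (hFi 0 L) (hFi L (L + L)),
    ← intervalIntegral.integral_add_adjacent_intervals (hFi (-L) 0) (hFi 0 L), hleft, hright]
  abel

lemma integral_mul_deriv_smul_periodic [CompleteSpace E] (h : TileCutoff L δ D χ P)
    {g g' : ℝ → E} (hg : ∀ x, HasDerivAt g (g' x) x) (hg' : Continuous g')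
    (hper : Function.Periodic g L) : ∫ x, (χ x * deriv χ x) • g x = 0 := by
  have hgc : Continuous g := continuous_iff_continuousAt.2 fun x => (hg x).continuousAt
  have hper' : Function.Periodic g' L := fun x =>
    ((hg (x + L)).comp_add_const x L).unique (by simpa only [hper _] using hg x)
  have hderiv (x : ℝ) : HasDerivAt (fun x => χ x ^ 2 • g x)
      (χ x ^ 2 • g' x + (2 : ℝ) • (χ x * deriv χ x) • g x) x :=
    (((h.hasDerivAt x).pow 2).smul (hg x)).congr_deriv (by
      simp only [smul_smul, Pi.pow_apply]; push_cast; ring_nf)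
  have hint : Integrable fun x => (2 : ℝ) • (χ x * deriv χ x) • g x :=
    (h.integrable_smul h.continuous_deriv hgc).smul (2 : ℝ)
  have hsq {f : ℝ → E} (hf : Continuous f) : Integrable fun x => χ x ^ 2 • f x := by
    simpa only [sq] using h.integrable_smul h.continuous hf
  have hparts := integral_eq_zero_of_hasDerivAt_of_integrable hderiv
    ((hsq hg').add hint) (hsq hgc)
  have hperiod : ∫ x in (0 : ℝ)..L, g' x = 0 := by
    rw [intervalIntegral.integral_eq_sub_of_hasDerivAt (fun x _ => hg x)
      (hg'.intervalIntegrable _ _), hper.eq, sub_self]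
  rw [integral_add (hsq hg') hint, h.integral_sq_smul_periodic hg' hper', hperiod,
    zero_add, integral_smul] at hparts
  exact (smul_eq_zero.1 hparts).resolve_left two_ne_zero

lemma integral_deriv_sq_mul_periodic_le (h : TileCutoff L δ D χ P) {g : ℝ → ℝ}
    (hg : Continuous g) (hg0 : ∀ x, 0 ≤ g x) (hper : Function.Periodic g L) :
    ∫ x, deriv χ x ^ 2 * g x ≤ 2 * D ^ 2 * ∫ x in (0 : ℝ)..L, g x := by
  have hL := h.length_pos
  have hχ := h.continuous_deriv
  have hsupp : Function.support (fun x => deriv χ x ^ 2 * g x) ⊆ Set.Ioc (-L) L := by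
    intro x hx
    have hlt : |x| < L := not_le.1 fun hle => hx (by simp [h.deriv_eq_zero hle])
    exact ⟨(abs_lt.1 hlt).1, (abs_lt.1 hlt).2.le⟩
  have hgi (a b : ℝ) : IntervalIntegrable g volume a b := hg.intervalIntegrable a b
  calc ∫ x, deriv χ x ^ 2 * g x = ∫ x in (-L)..L, deriv χ x ^ 2 * g x :=
        (intervalIntegral.integral_eq_integral_of_support_subset hsupp).symm
    _ ≤ ∫ x in (-L)..L, D ^ 2 * g x := by
        refine intervalIntegral.integral_mono_on (by linarith)
          (Continuous.intervalIntegrable (by fun_prop) _ _)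
          (Continuous.intervalIntegrable (by fun_prop) _ _) fun x _ => ?_
        have hsq := sq_le_sq' (abs_le.1 (h.abs_deriv_le x)).1 (abs_le.1 (h.abs_deriv_le x)).2
        gcongr
        exact hg0 x
    _ = D ^ 2 * ((∫ x in (-L)..0, g x) + ∫ x in (0 : ℝ)..L, g x) := by
        rw [intervalIntegral.integral_const_mul,
          intervalIntegral.integral_add_adjacent_intervals (hgi _ _) (hgi _ _)]
    _ = 2 * D ^ 2 * ∫ x in (0 : ℝ)..L, g x := by
        have hshift := hper.intervalIntegral_add_eq (-L) 0
        rw [neg_add_cancel, zero_add] at hshift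
        rw [hshift]
        ring

end TileCutoff

end Periodic

section TrigSum

open scoped ContDiff ComplexConjugate

/-- The plane wave `x ↦ e^{iνx}`. -/
def planeWave (ν x : ℝ) : ℂ := Complex.exp (Complex.I * (ν * x : ℝ))

lemma planeWave_zero (x : ℝ) : planeWave 0 x = 1 := by simp [planeWave]

lemma contDiff_planeWave (ν : ℝ) : ContDiff ℝ ∞ (planeWave ν) :=
  (contDiff_const.mul
    (Complex.ofRealCLM.contDiff.comp (contDiff_const.mul contDiff_id))).cexp

lemma continuous_planeWave (ν : ℝ) : Continuous (planeWave ν) := (contDiff_planeWave ν).continuous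

lemma hasDerivAt_planeWave (ν x : ℝ) :
    HasDerivAt (planeWave ν) (Complex.I * ν * planeWave ν x) x := by
  have hphase : HasDerivAt (fun x : ℝ => Complex.I * ((ν * x : ℝ) : ℂ)) (Complex.I * ν) x := by
    simpa using (((hasDerivAt_id x).const_mul ν).ofReal_comp).const_mul Complex.I
  exact hphase.cexp.congr_deriv (mul_comm _ _)

lemma planeWave_mul_conj (ν μ x : ℝ) :
    planeWave ν x * conj (planeWave μ x) = planeWave (ν - μ) x := by
  simp only [planeWave, ← Complex.exp_conj, ← Complex.exp_add, map_mul, Complex.conj_I,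
    Complex.conj_ofReal]
  push_cast
  ring_nf

lemma planeWave_periodic {ν L : ℝ} {n : ℤ} (h : ν * L = 2 * π * n) :
    Function.Periodic (planeWave ν) L := fun x => by
  have hphase : Complex.I * ((ν * x + 2 * π * n : ℝ) : ℂ)
      = Complex.I * (ν * x : ℝ) + n * (2 * π * Complex.I) := by push_cast; ring
  rw [planeWave, mul_add, h, hphase, Complex.exp_add, Complex.exp_int_mul_two_pi_mul_I, mul_one,
    planeWave]

lemma integral_planeWave_period {ν L : ℝ} (hν : ν ≠ 0) {n : ℤ} (h : ν * L = 2 * π * n) :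
    ∫ x in (0 : ℝ)..L, planeWave ν x = 0 := by
  have hderiv (x : ℝ) :
      HasDerivAt (fun x => planeWave ν x / (Complex.I * ν)) (planeWave ν x) x := by
    have hν' : Complex.I * (ν : ℂ) ≠ 0 := mul_ne_zero Complex.I_ne_zero (by exact_mod_cast hν)
    exact ((hasDerivAt_planeWave ν x).div_const _).congr_deriv (mul_div_cancel_left₀ _ hν')
  rw [intervalIntegral.integral_eq_sub_of_hasDerivAt (fun x _ => hderiv x)
    ((continuous_planeWave ν).intervalIntegrable _ _), (planeWave_periodic h).eq, sub_self]

/-- The trigonometric sum `∑ᵢ aᵢ e^{iνᵢx}`. -/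
def trigSum {ι : Type*} [Fintype ι] (ν : ι → ℝ) (a : ι → ℂ) (x : ℝ) : ℂ :=
  ∑ i, a i * planeWave (ν i) x

/-- The frequencies `ν` differ pairwise by nonzero multiples of `2π / L`, so that their plane waves
are orthogonal on an interval of length `L`. -/
def OrthogonalFrequencies {ι : Type*} (L : ℝ) (ν : ι → ℝ) : Prop :=
  Pairwise fun i j => ∃ n : ℤ, n ≠ 0 ∧ (ν i - ν j) * L = 2 * π * n

variable {ι : Type*} {L δ D : ℝ} {χ P : ℝ → ℝ} {ν : ι → ℝ}

namespace OrthogonalFrequencies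

lemma exists_sub_mul_eq (hν : OrthogonalFrequencies L ν) (i j : ι) :
    ∃ n : ℤ, (ν i - ν j) * L = 2 * π * n := by
  by_cases hij : i = j
  · exact ⟨0, by simp [hij]⟩
  · exact (hν hij).imp fun _ => And.right

lemma sub_ne_zero (hν : OrthogonalFrequencies L ν) {i j : ι} (hij : i ≠ j) : ν i - ν j ≠ 0 := by
  obtain ⟨n, hn, heq⟩ := hν hij
  intro hzero
  have hprod : 2 * π * (n : ℝ) ≠ 0 :=
    mul_ne_zero two_pi_pos.ne' (Int.cast_ne_zero.2 hn)
  exact hprod (by rw [← heq, hzero, zero_mul])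

end OrthogonalFrequencies

variable [Fintype ι]

lemma contDiff_trigSum (ν : ι → ℝ) (a : ι → ℂ) : ContDiff ℝ ∞ (trigSum ν a) :=
  ContDiff.sum fun _ _ => contDiff_const.mul (contDiff_planeWave _)

lemma continuous_trigSum (ν : ι → ℝ) (a : ι → ℂ) : Continuous (trigSum ν a) :=
  (contDiff_trigSum ν a).continuous

lemma hasDerivAt_trigSum (ν : ι → ℝ) (a : ι → ℂ) (x : ℝ) :
    HasDerivAt (trigSum ν a) (trigSum ν (fun i => Complex.I * ν i * a i) x) x := by
  refine (HasDerivAt.fun_sum fun i _ =>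
    (hasDerivAt_planeWave (ν i) x).const_mul (a i)).congr_deriv ?_
  exact Finset.sum_congr rfl fun i _ => by ring

lemma trigSum_mul_conj (ν : ι → ℝ) (a b : ι → ℂ) (x : ℝ) :
    trigSum ν a x * conj (trigSum ν b x)
      = ∑ i, ∑ j, a i * conj (b j) * planeWave (ν i - ν j) x := by
  simp only [trigSum, map_sum, Finset.sum_mul_sum, map_mul, ← planeWave_mul_conj]
  exact Finset.sum_congr rfl fun i _ => Finset.sum_congr rfl fun j _ => by ring

namespace OrthogonalFrequencies

lemma periodic_trigSum_mul_conj (hν : OrthogonalFrequencies L ν) (a b : ι → ℂ) :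
    Function.Periodic (fun x => trigSum ν a x * conj (trigSum ν b x)) L := fun x => by
  simp only [trigSum_mul_conj]
  refine Finset.sum_congr rfl fun i _ => Finset.sum_congr rfl fun j _ => ?_
  obtain ⟨n, hn⟩ := hν.exists_sub_mul_eq i j
  rw [planeWave_periodic hn]

lemma periodic_norm_sq_trigSum (hν : OrthogonalFrequencies L ν) (a : ι → ℂ) :
    Function.Periodic (fun x => ‖trigSum ν a x‖ ^ 2) L := fun x => by
  have hper := hν.periodic_trigSum_mul_conj a a x
  simp only [Complex.mul_conj'] at hper
  exact_mod_cast hper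

lemma integral_norm_sq_trigSum (hν : OrthogonalFrequencies L ν) (a : ι → ℂ) :
    ∫ x in (0 : ℝ)..L, ‖trigSum ν a x‖ ^ 2 = L * ∑ i, ‖a i‖ ^ 2 := by
  have hcont (c : ℂ) (μ : ℝ) : Continuous fun x => c * planeWave μ x :=
    continuous_const.mul (continuous_planeWave μ)
  have hpair : ∫ x in (0 : ℝ)..L, trigSum ν a x * conj (trigSum ν a x)
      = ∑ i, L * (a i * conj (a i)) := by
    simp only [trigSum_mul_conj]
    rw [intervalIntegral.integral_finsetSum fun i _ =>
      (continuous_finsetSum _ fun j _ => hcont _ _).intervalIntegrable _ _]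
    refine Finset.sum_congr rfl fun i _ => ?_
    rw [intervalIntegral.integral_finsetSum fun j _ =>
      (hcont _ _).intervalIntegrable _ _, Finset.sum_eq_single i]
    · simp [planeWave_zero, mul_left_comm]
    · intro j _ hji
      obtain ⟨n, hn⟩ := hν.exists_sub_mul_eq i j
      rw [intervalIntegral.integral_const_mul,
        integral_planeWave_period (hν.sub_ne_zero hji.symm) hn, mul_zero]
    · simp
  apply Complex.ofReal_injective
  simp only [Complex.mul_conj'] at hpair
  rw [← intervalIntegral.integral_ofReal, Finset.mul_sum]
  push_cast
  exact hpair

end OrthogonalFrequencies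

lemma momentum_trigSum (ν : ι → ℝ) (a : ι → ℂ) (A x : ℝ) :
    -Complex.I * trigSum ν (fun i => Complex.I * ν i * a i) x - A * trigSum ν a x
      = trigSum ν (fun i => ((ν i - A : ℝ) : ℂ) * a i) x := by
  simp only [trigSum, Finset.mul_sum, ← Finset.sum_sub_distrib]
  refine Finset.sum_congr rfl fun i _ => ?_
  push_cast
  linear_combination -(a i * ν i * planeWave (ν i) x) * Complex.I_mul_I

namespace TileCutoff

lemma integral_sq_mul_norm_sq_trigSum (h : TileCutoff L δ D χ P) (hν : OrthogonalFrequencies L ν)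
    (a : ι → ℂ) : ∫ x, χ x ^ 2 * ‖trigSum ν a x‖ ^ 2 = L * ∑ i, ‖a i‖ ^ 2 := by
  rw [← hν.integral_norm_sq_trigSum]
  exact h.integral_sq_smul_periodic ((continuous_trigSum ν a).norm.pow 2)
    (hν.periodic_norm_sq_trigSum a)

lemma integral_mul_deriv_mul_im_trigSum (h : TileCutoff L δ D χ P)
    (hν : OrthogonalFrequencies L ν) (a b : ι → ℂ) :
    ∫ x, χ x * deriv χ x * (trigSum ν a x * conj (trigSum ν b x)).im = 0 := by
  have hsmooth : ContDiff ℝ ∞ fun x => (trigSum ν a x * conj (trigSum ν b x)).im :=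
    Complex.imCLM.contDiff.comp ((contDiff_trigSum ν a).mul
      (Complex.conjCLE.contDiff.comp (contDiff_trigSum ν b)))
  exact h.integral_mul_deriv_smul_periodic
    (fun x => (hsmooth.differentiable (by simp) x).hasDerivAt)
    (hsmooth.continuous_deriv (by simp))
    fun x => congrArg Complex.im (hν.periodic_trigSum_mul_conj a b x)

lemma norm_sq_magnetic_deriv_trigSum (h : TileCutoff L δ D χ P) (a : ι → ℂ) (A x : ℝ) :
    ‖-Complex.I * deriv (fun y => (χ y : ℂ) * trigSum ν a y) x
        - A * ((χ x : ℂ) * trigSum ν a x)‖ ^ 2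
      = χ x ^ 2 * ‖trigSum ν (fun i => ((ν i - A : ℝ) : ℂ) * a i) x‖ ^ 2
        + deriv χ x ^ 2 * ‖trigSum ν a x‖ ^ 2
        + 2 * (χ x * deriv χ x * (trigSum ν a x
          * conj (trigSum ν (fun i => ((ν i - A : ℝ) : ℂ) * a i) x)).im) := by
  have hderiv := ((h.hasDerivAt x).ofReal_comp.mul (hasDerivAt_trigSum ν a x)).deriv
  have hmomentum : -Complex.I * deriv (fun y => (χ y : ℂ) * trigSum ν a y) x
      - A * ((χ x : ℂ) * trigSum ν a x)
      = χ x * trigSum ν (fun i => ((ν i - A : ℝ) : ℂ) * a i) x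
        - Complex.I * ((deriv χ x : ℝ) * trigSum ν a x) := by
    rw [← momentum_trigSum]
    linear_combination -Complex.I * hderiv
  rw [hmomentum]
  simp only [← Complex.normSq_eq_norm_sq, Complex.normSq_apply, Complex.sub_re, Complex.sub_im,
    Complex.mul_re, Complex.mul_im, Complex.I_re, Complex.I_im, Complex.ofReal_re,
    Complex.ofReal_im, Complex.conj_re, Complex.conj_im]
  ring

lemma integral_norm_sq_magnetic_deriv_trigSum_le (h : TileCutoff L δ D χ P)
    (hν : OrthogonalFrequencies L ν) (a : ι → ℂ) (A : ℝ) :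
    ∫ x, ‖-Complex.I * deriv (fun y => (χ y : ℂ) * trigSum ν a y) x
        - A * ((χ x : ℂ) * trigSum ν a x)‖ ^ 2
      ≤ L * ∑ i, ((ν i - A) ^ 2 + 2 * D ^ 2) * ‖a i‖ ^ 2 := by
  let F := trigSum ν a
  let H := trigSum ν fun i => ((ν i - A : ℝ) : ℂ) * a i
  have hF : Continuous F := continuous_trigSum ν a
  have hH : Continuous H := continuous_trigSum ν _
  have hmain : Integrable fun x => χ x ^ 2 * ‖H x‖ ^ 2 := by
    have hint := h.integrable_smul h.continuous (hH.norm.pow 2)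
    simpa only [sq, Pi.mul_apply, smul_eq_mul] using hint
  have hloc : Integrable fun x => deriv χ x ^ 2 * ‖F x‖ ^ 2 := by
    have hχ := h.continuous_deriv
    exact Continuous.integrable_of_hasCompactSupport (by fun_prop)
      (h.hasCompactSupport.deriv.comp_left (zero_pow two_ne_zero)).mul_right
  have hcross : Integrable fun x => 2 * (χ x * deriv χ x * (F x * conj (H x)).im) :=
    (h.integrable_smul h.continuous_deriv (by fun_prop)).const_mul 2
  have hloc_le : ∫ x, deriv χ x ^ 2 * ‖F x‖ ^ 2 ≤ 2 * D ^ 2 * (L * ∑ i, ‖a i‖ ^ 2) := by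
    rw [← hν.integral_norm_sq_trigSum]
    exact h.integral_deriv_sq_mul_periodic_le (hF.norm.pow 2) (fun _ => by positivity)
      (hν.periodic_norm_sq_trigSum a)
  calc _ = ∫ x, (χ x ^ 2 * ‖H x‖ ^ 2 + deriv χ x ^ 2 * ‖F x‖ ^ 2
        + 2 * (χ x * deriv χ x * (F x * conj (H x)).im)) :=
        integral_congr_ae (ae_of_all _ (h.norm_sq_magnetic_deriv_trigSum a A))
    _ = L * ∑ i, ‖((ν i - A : ℝ) : ℂ) * a i‖ ^ 2 + ∫ x, deriv χ x ^ 2 * ‖F x‖ ^ 2 := by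
        have hsum : Integrable fun x => χ x ^ 2 * ‖H x‖ ^ 2 + deriv χ x ^ 2 * ‖F x‖ ^ 2 :=
          hmain.add hloc
        rw [integral_add hsum hcross, integral_const_mul,
          h.integral_mul_deriv_mul_im_trigSum hν, mul_zero, add_zero, integral_add hmain hloc,
          h.integral_sq_mul_norm_sq_trigSum hν]
    _ ≤ L * ∑ i, ‖((ν i - A : ℝ) : ℂ) * a i‖ ^ 2 + 2 * D ^ 2 * (L * ∑ i, ‖a i‖ ^ 2) := by gcongr
    _ = L * ∑ i, ((ν i - A) ^ 2 + 2 * D ^ 2) * ‖a i‖ ^ 2 := by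
        simp only [norm_mul, mul_pow, Complex.norm_real, norm_eq_abs, sq_abs, add_mul,
          Finset.sum_add_distrib, ← Finset.mul_sum]
        ring

end TileCutoff

end TrigSum

section PolyGauss

open Polynomial
open scoped ContDiff ComplexConjugate

/-- The polynomial multiple `p(t) e^{-βt²/2}` of the ground state of the harmonic oscillator
`-∂ₜ² + β²t²`; polynomials of degree at most `m` span its first `m + 1` eigenspaces. -/
def polyGauss (β : ℝ) (p : ℂ[X]) (t : ℝ) : ℂ :=
  p.eval (t : ℂ) * ((rexp (-(β / 2) * t ^ 2) : ℝ) : ℂ)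

variable {β : ℝ}

lemma polyGauss_add (p q : ℂ[X]) (t : ℝ) :
    polyGauss β (p + q) t = polyGauss β p t + polyGauss β q t := by
  simp [polyGauss, add_mul]

lemma polyGauss_smul (c : ℂ) (p : ℂ[X]) (t : ℝ) :
    polyGauss β (c • p) t = c * polyGauss β p t := by
  simp [polyGauss, mul_assoc]

lemma polyGauss_X_mul (p : ℂ[X]) (t : ℝ) : polyGauss β (X * p) t = t * polyGauss β p t := by
  simp [polyGauss, mul_assoc]

lemma polyGauss_mul_conj (p q : ℂ[X]) (t : ℝ) :
    polyGauss β p t * conj (polyGauss β q t)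
      = polyGauss (2 * β) (p * q.map (starRingEnd ℂ)) t := by
  have hconj : conj (q.eval (t : ℂ)) = (q.map (starRingEnd ℂ)).eval (t : ℂ) := by
    rw [← Complex.conj_ofReal t, eval_map_apply, Complex.conj_ofReal]
  have hexp : rexp (-(2 * β / 2) * t ^ 2)
      = rexp (-(β / 2) * t ^ 2) * rexp (-(β / 2) * t ^ 2) := by
    rw [← Real.exp_add]; ring_nf
  simp only [polyGauss, map_mul, Complex.conj_ofReal, hconj, eval_mul, hexp, Complex.ofReal_mul]
  ring

lemma contDiff_polyGauss (β : ℝ) (p : ℂ[X]) : ContDiff ℝ ∞ (polyGauss β p) := by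
  have hpoly : ContDiff ℂ ∞ fun z : ℂ => p.eval z := p.differentiable.contDiff
  exact ((hpoly.restrict_scalars ℝ).comp Complex.ofRealCLM.contDiff).mul
    (Complex.ofRealCLM.contDiff.comp
      (Real.contDiff_exp.comp (contDiff_const.mul (contDiff_id.pow 2))))

lemma continuous_polyGauss (β : ℝ) (p : ℂ[X]) : Continuous (polyGauss β p) :=
  (contDiff_polyGauss β p).continuous

lemma hasDerivAt_polyGauss (β : ℝ) (p : ℂ[X]) (t : ℝ) :
    HasDerivAt (polyGauss β p) (polyGauss β (derivative p - β • (X * p)) t) t := by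
  have hpoly : HasDerivAt (fun t : ℝ => p.eval (t : ℂ)) ((derivative p).eval (t : ℂ)) t :=
    (p.hasDerivAt (t : ℂ)).comp_ofReal
  have hexp : HasDerivAt (fun t : ℝ => rexp (-(β / 2) * t ^ 2))
      (rexp (-(β / 2) * t ^ 2) * (-(β / 2) * (2 * t))) t :=
    ((by simpa using hasDerivAt_pow 2 t : HasDerivAt (fun t : ℝ => t ^ 2) (2 * t) t).const_mul
      _).exp
  refine (hpoly.mul hexp.ofReal_comp).congr_deriv ?_
  simp only [polyGauss, eval_sub, eval_smul, eval_mul, eval_X, Complex.real_smul]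
  push_cast
  ring

lemma deriv_polyGauss (β : ℝ) (p : ℂ[X]) (t : ℝ) :
    deriv (polyGauss β p) t = polyGauss β (derivative p - β • (X * p)) t :=
  (hasDerivAt_polyGauss β p t).deriv

lemma integrable_polyGauss (hβ : 0 < β) (p : ℂ[X]) : Integrable (polyGauss β p) := by
  have hmonomial (n : ℕ) :
      Integrable fun t : ℝ => (t : ℂ) ^ n * ((rexp (-(β / 2) * t ^ 2) : ℝ) : ℂ) := by
    have hn : (-1 : ℝ) < n := neg_one_lt_zero.trans_le n.cast_nonneg
    refine (integrable_rpow_mul_exp_neg_mul_sq (half_pos hβ) hn).ofReal (𝕜 := ℂ) |>.congr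
      (ae_of_all _ fun t => ?_)
    simp
  have hsum : polyGauss β p = fun t : ℝ =>
      ∑ i ∈ p.support, p.coeff i * ((t : ℂ) ^ i * ((rexp (-(β / 2) * t ^ 2) : ℝ) : ℂ)) := by
    ext t
    rw [polyGauss, eval_eq_sum, Polynomial.sum, Finset.sum_mul]
    exact Finset.sum_congr rfl fun i _ => by ring
  rw [hsum]
  exact integrable_finsetSum _ fun i _ => (hmonomial i).const_mul _

lemma integrable_polyGauss_mul_conj (hβ : 0 < β) (p q : ℂ[X]) :
    Integrable fun t => polyGauss β p t * conj (polyGauss β q t) := by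
  simp only [polyGauss_mul_conj]
  exact integrable_polyGauss (by positivity) _

/-- The real `L²` inner product of `polyGauss β p` and `polyGauss β q`. -/
def gaussInner (hβ : 0 < β) : LinearMap.BilinForm ℝ ℂ[X] :=
  LinearMap.mk₂ ℝ (fun p q => ∫ t, (polyGauss β p t * conj (polyGauss β q t)).re)
    (fun p p' q => by
      simp only [polyGauss_add, add_mul, Complex.add_re]
      exact integral_add (integrable_polyGauss_mul_conj hβ p q).re
        (integrable_polyGauss_mul_conj hβ p' q).re)
    (fun c p q => by
      simp only [← Complex.coe_smul, polyGauss_smul, mul_assoc, Complex.re_ofReal_mul,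
        integral_const_mul, smul_eq_mul])
    (fun p q q' => by
      simp only [polyGauss_add, map_add, mul_add, Complex.add_re]
      exact integral_add (integrable_polyGauss_mul_conj hβ p q).re
        (integrable_polyGauss_mul_conj hβ p q').re)
    (fun c p q => by
      simp only [← Complex.coe_smul, polyGauss_smul, map_mul, Complex.conj_ofReal,
        mul_left_comm _ (c : ℂ), Complex.re_ofReal_mul, integral_const_mul, smul_eq_mul])

lemma gaussInner_apply (hβ : 0 < β) (p q : ℂ[X]) :
    gaussInner hβ p q = ∫ t, (polyGauss β p t * conj (polyGauss β q t)).re := rfl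

/-- The squared `L²` norm of `polyGauss β p`. -/
def gaussNormSq (β : ℝ) (p : ℂ[X]) : ℝ := ∫ t, ‖polyGauss β p t‖ ^ 2

lemma gaussNormSq_nonneg (β : ℝ) (p : ℂ[X]) : 0 ≤ gaussNormSq β p :=
  integral_nonneg fun _ => by positivity

lemma re_polyGauss_mul_conj_self (p : ℂ[X]) (t : ℝ) :
    (polyGauss β p t * conj (polyGauss β p t)).re = ‖polyGauss β p t‖ ^ 2 := by
  rw [Complex.mul_conj']
  exact_mod_cast Complex.ofReal_re _

lemma gaussInner_self (hβ : 0 < β) (p : ℂ[X]) : gaussInner hβ p p = gaussNormSq β p := by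
  simp only [gaussInner_apply, re_polyGauss_mul_conj_self, gaussNormSq]

lemma integrable_norm_sq_polyGauss (hβ : 0 < β) (p : ℂ[X]) :
    Integrable fun t => ‖polyGauss β p t‖ ^ 2 := by
  simp only [← re_polyGauss_mul_conj_self]
  exact (integrable_polyGauss_mul_conj hβ p p).re

lemma gaussInner_comm (hβ : 0 < β) (p q : ℂ[X]) : gaussInner hβ p q = gaussInner hβ q p := by
  simp only [gaussInner_apply]
  congr with t
  rw [← Complex.conj_re, map_mul, Complex.conj_conj, mul_comm]

lemma gaussInner_X_mul_left (hβ : 0 < β) (p q : ℂ[X]) :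
    gaussInner hβ (X * p) q = gaussInner hβ p (X * q) := by
  simp only [gaussInner_apply, polyGauss_X_mul, map_mul, Complex.conj_ofReal]
  congr with t
  ring_nf

lemma gaussInner_deriv_add (hβ : 0 < β) (p q : ℂ[X]) :
    gaussInner hβ (derivative p - β • (X * p)) q
      + gaussInner hβ p (derivative q - β • (X * q)) = 0 := by
  have hint (p q : ℂ[X]) : Integrable fun t => (polyGauss β p t * conj (polyGauss β q t)).re :=
    (integrable_polyGauss_mul_conj hβ p q).re
  have hderiv (t : ℝ) : HasDerivAt (fun t => (polyGauss β p t * conj (polyGauss β q t)).re)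
      ((polyGauss β (derivative p - β • (X * p)) t * conj (polyGauss β q t)).re
        + (polyGauss β p t * conj (polyGauss β (derivative q - β • (X * q)) t)).re) t :=
    Complex.reCLM.hasFDerivAt.comp_hasDerivAt t
      ((hasDerivAt_polyGauss β p t).mul (hasDerivAt_polyGauss β q t).star)
  simp only [gaussInner_apply]
  rw [← integral_add (hint _ _) (hint _ _)]
  exact integral_eq_zero_of_hasDerivAt_of_integrable hderiv ((hint _ _).add (hint _ _)) (hint _ _)

/-- The creation operator in the polynomial representation: the adjoint of `derivative`. -/
def creation (β : ℝ) (p : ℂ[X]) : ℂ[X] := (2 * β) • (X * p) - derivative p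

lemma gaussInner_derivative_left (hβ : 0 < β) (p q : ℂ[X]) :
    gaussInner hβ (derivative p) q = gaussInner hβ p (creation β q) := by
  have hparts := gaussInner_deriv_add hβ p q
  simp only [creation, map_sub, map_smul, LinearMap.sub_apply, LinearMap.smul_apply, smul_eq_mul,
    gaussInner_X_mul_left] at hparts ⊢
  linarith

lemma derivative_creation (β : ℝ) (p : ℂ[X]) :
    derivative (creation β p) = creation β (derivative p) + (2 * β) • p := by
  simp only [creation, derivative_sub, derivative_smul, derivative_mul, derivative_X, one_mul,
    smul_add]
  abel

lemma gaussNormSq_creation (hβ : 0 < β) (p : ℂ[X]) :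
    gaussNormSq β (creation β p) = gaussNormSq β (derivative p) + 2 * β * gaussNormSq β p := by
  simp only [← gaussInner_self hβ]
  rw [← gaussInner_derivative_left, derivative_creation, map_add, LinearMap.add_apply, map_smul,
    LinearMap.smul_apply, smul_eq_mul, gaussInner_comm hβ _ p, ← gaussInner_derivative_left]

lemma gaussNormSq_derivative_le (hβ : 0 < β) (m : ℕ) (p : ℂ[X]) (hp : p.natDegree ≤ m) :
    gaussNormSq β (derivative p) ≤ 2 * m * β * gaussNormSq β p := by
  induction m generalizing p with
  | zero =>
    rw [derivative_of_natDegree_zero (by omega)]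
    simp [gaussNormSq, polyGauss]
  | succ m ih =>
    let q := derivative p
    have hcreation : gaussNormSq β (creation β q) ≤ 2 * (m + 1) * β * gaussNormSq β q := by
      rw [gaussNormSq_creation hβ]
      linarith [ih q ((natDegree_derivative_le p).trans (by omega))]
    have hcauchy : gaussNormSq β q ^ 2 ≤ gaussNormSq β p * gaussNormSq β (creation β q) := by
      have hcs := LinearMap.BilinForm.apply_mul_apply_le_of_forall_zero_le (gaussInner hβ)
        (fun r => (gaussInner_self hβ r).symm ▸ gaussNormSq_nonneg β r) p (creation β q)
      rw [gaussInner_comm hβ (creation β q), ← gaussInner_derivative_left] at hcs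
      rwa [← sq, gaussInner_self, gaussInner_self, gaussInner_self] at hcs
    rcases (gaussNormSq_nonneg β q).eq_or_lt with hzero | hpos
    · rw [← show gaussNormSq β q = gaussNormSq β (derivative p) from rfl, ← hzero]
      have := gaussNormSq_nonneg β p
      positivity
    · refine le_of_mul_le_mul_right ?_ hpos
      push_cast
      nlinarith [gaussNormSq_nonneg β p]

lemma gaussNormSq_deriv_add_gaussNormSq_X_mul (hβ : 0 < β) (p : ℂ[X]) :
    gaussNormSq β (derivative p - β • (X * p)) + β ^ 2 * gaussNormSq β (X * p)
      = gaussNormSq β (derivative p) + β * gaussNormSq β p := by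
  have hcreation := gaussNormSq_creation hβ p
  simp only [← gaussInner_self hβ, creation, map_sub, map_smul, LinearMap.sub_apply,
    LinearMap.smul_apply, smul_eq_mul, gaussInner_comm hβ (X * p) (derivative p)] at hcreation ⊢
  linarith

lemma gaussNormSq_pos (hβ : 0 < β) {p : ℂ[X]} (hp : p ≠ 0) : 0 < gaussNormSq β p := by
  have hc : Continuous fun t => ‖polyGauss β p t‖ ^ 2 := (continuous_polyGauss β p).norm.pow 2
  obtain ⟨t, ht⟩ : ∃ t : ℝ, p.eval (t : ℂ) ≠ 0 := by
    by_contra! hzero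
    refine hp (eq_zero_of_infinite_isRoot p
      ((Set.infinite_range_of_injective Complex.ofReal_injective).mono ?_))
    rintro _ ⟨t, rfl⟩
    exact hzero t
  refine integral_pos_of_integrable_nonneg_nonzero (x := t) hc
    (integrable_norm_sq_polyGauss hβ p) (fun _ => by positivity) ?_
  simp [polyGauss, ht]

lemma norm_sq_polyGauss_X_mul (p : ℂ[X]) (t : ℝ) :
    ‖polyGauss β (X * p) t‖ ^ 2 = t ^ 2 * ‖polyGauss β p t‖ ^ 2 := by
  rw [polyGauss_X_mul, norm_mul, mul_pow, Complex.norm_real, norm_eq_abs, sq_abs]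

lemma integral_oscillator_energy_le (hβ : 0 < β) {m : ℕ} {p : ℂ[X]} (hp : p.natDegree ≤ m) :
    (∫ t, ‖deriv (polyGauss β p) t‖ ^ 2) + β ^ 2 * (∫ t, t ^ 2 * ‖polyGauss β p t‖ ^ 2)
      ≤ (2 * m + 1) * β * gaussNormSq β p := by
  simp only [deriv_polyGauss, ← norm_sq_polyGauss_X_mul]
  have henergy := gaussNormSq_deriv_add_gaussNormSq_X_mul hβ p
  have hdegree := gaussNormSq_derivative_le hβ m p hp
  simp only [gaussNormSq] at henergy hdegree ⊢
  linarith

lemma integrable_norm_sq_deriv_polyGauss (hβ : 0 < β) (p : ℂ[X]) :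
    Integrable fun t => ‖deriv (polyGauss β p) t‖ ^ 2 := by
  simp only [deriv_polyGauss]
  exact integrable_norm_sq_polyGauss hβ _

lemma integrable_sq_mul_norm_sq_polyGauss (hβ : 0 < β) (p : ℂ[X]) :
    Integrable fun t => t ^ 2 * ‖polyGauss β p t‖ ^ 2 := by
  simp only [← norm_sq_polyGauss_X_mul]
  exact integrable_norm_sq_polyGauss hβ _

end PolyGauss

section Windows

open Polynomial
open scoped ContDiff

/-- The part of `u` near `d` seen through the window `ψ`, moved back to the origin. -/
def windowed (ψ : ℝ → ℝ) (d : ℝ) (u : ℝ → ℂ) (t : ℝ) : ℂ := ψ t * u (t + d)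

/-- The energy of `h` in the oscillator potential `β² (t + d)²` centred at `-d`. -/
def oscillatorEnergy (β d : ℝ) (h : ℝ → ℂ) : ℝ :=
  ∫ t, (β ^ 2 * (t + d) ^ 2 * ‖h t‖ ^ 2 + ‖deriv h t‖ ^ 2)

lemma integrable_of_eq_zero_of_hasCompactSupport {h : ℝ → ℂ} {F : ℝ → ℝ} (hF : Continuous F)
    (hh : HasCompactSupport h) (h0 : ∀ t, h t = 0 → deriv h t = 0 → F t = 0) : Integrable F := by
  refine hF.integrable_of_hasCompactSupport (HasCompactSupport.intro hh fun t ht => h0 t ?_ ?_)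
  · exact image_eq_zero_of_notMem_tsupport ht
  · exact Function.notMem_support.1 fun h' => ht (support_deriv_subset h')

lemma integrable_norm_sq_of_hasCompactSupport {h : ℝ → ℂ} (hh : ContDiff ℝ ∞ h)
    (hc : HasCompactSupport h) : Integrable fun t => ‖h t‖ ^ 2 :=
  integrable_of_eq_zero_of_hasCompactSupport (hh.continuous.norm.pow 2) hc
    fun t h0 _ => by simp [h0]

lemma integrable_oscillatorEnergy {h : ℝ → ℂ} (hh : ContDiff ℝ ∞ h) (hc : HasCompactSupport h)
    (β d : ℝ) : Integrable fun t => β ^ 2 * (t + d) ^ 2 * ‖h t‖ ^ 2 + ‖deriv h t‖ ^ 2 := by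
  have hcont := hh.continuous
  have hcont' : Continuous (deriv h) := hh.continuous_deriv (by simp)
  refine integrable_of_eq_zero_of_hasCompactSupport (by fun_prop) hc fun t h0 h1 => ?_
  simp [h0, h1]

lemma abs_re_mul_add_im_mul_le (u v : ℂ) : |u.re * v.re + u.im * v.im| ≤ ‖u‖ * ‖v‖ := by
  simpa [Complex.mul_re] using Complex.abs_re_le_norm (u * (starRingEnd ℂ) v)

namespace TileCutoff

variable {L δ D : ℝ} {ψ P : ℝ → ℝ}

lemma contDiff_windowed (h : TileCutoff L δ D ψ P) (d : ℝ) {u : ℝ → ℂ} (hu : ContDiff ℝ ∞ u) :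
    ContDiff ℝ ∞ (windowed ψ d u) :=
  (Complex.ofRealCLM.contDiff.comp h.contDiff).mul (hu.comp (contDiff_id.add contDiff_const))

lemma hasCompactSupport_windowed (h : TileCutoff L δ D ψ P) (d : ℝ) (u : ℝ → ℂ) :
    HasCompactSupport (windowed ψ d u) :=
  (h.hasCompactSupport.comp_left (g := ((↑) : ℝ → ℂ)) Complex.ofReal_zero).mul_right

lemma deriv_windowed (h : TileCutoff L δ D ψ P) (d : ℝ) {u : ℝ → ℂ} (hu : ContDiff ℝ ∞ u) (t : ℝ) :
    deriv (windowed ψ d u) t = (deriv ψ t : ℝ) * u (t + d) + ψ t * deriv u (t + d) :=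
  ((h.hasDerivAt t).ofReal_comp.mul
    ((hu.differentiable (by simp) _).hasDerivAt.comp_add_const t d)).deriv

lemma sum_norm_sq_mul (n : ℕ) (x : ℝ) (u : ℂ) :
    ∑ j ∈ Finset.range n, ‖(ψ (x - j * L) : ℂ) * u‖ ^ 2 =
      ‖u‖ ^ 2 * ∑ j ∈ Finset.range n, ψ (x - j * L) ^ 2 := by
  simp only [Finset.mul_sum, norm_mul, mul_pow, Complex.norm_real, Real.norm_eq_abs, sq_abs,
    mul_comm]

lemma norm_sq_sub_le_sum (h : TileCutoff L δ D ψ P) {n : ℕ} {x y s : ℝ} (hs : 0 < s)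
    (hin : |y| < s → 0 ≤ x ∧ x ≤ (n - 1) * L) (u : ℂ) :
    ‖u‖ ^ 2 - 1 / s ^ 2 * (y ^ 2 * ‖u‖ ^ 2) ≤
      ∑ j ∈ Finset.range n, ‖(ψ (x - j * L) : ℂ) * u‖ ^ 2 := by
  rw [sum_norm_sq_mul]
  rcases lt_or_ge |y| s with hy | hy
  · rw [h.sum_sq_eq_one (hin hy).1 (hin hy).2, mul_one, sub_le_self_iff]
    positivity
  · have hys : 1 ≤ 1 / s ^ 2 * y ^ 2 := by
      rw [one_div_mul_eq_div, one_le_div (by positivity), ← sq_abs y]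
      gcongr
    calc ‖u‖ ^ 2 - 1 / s ^ 2 * (y ^ 2 * ‖u‖ ^ 2) = (1 - 1 / s ^ 2 * y ^ 2) * ‖u‖ ^ 2 := by ring
      _ ≤ 0 := mul_nonpos_of_nonpos_of_nonneg (by linarith) (sq_nonneg _)
      _ ≤ _ := by positivity

-- The cross terms telescope, so they only survive at the two ends of the tiling, where `s ≤ |y|`.
lemma cross_term_le (h : TileCutoff L δ D ψ P) {n : ℕ} {x y s : ℝ} (hs : 0 < s)
    (hin : |y| < s → 0 ≤ x ∧ x ≤ (n - 1) * L) (u v : ℂ) :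
    (u.re * v.re + u.im * v.im) *
        ∑ j ∈ Finset.range n, 2 * ψ (x - j * L) * deriv ψ (x - j * L) ≤
      D / s * (y ^ 2 * ‖u‖ ^ 2 + ‖v‖ ^ 2) := by
  have hD := h.bound_nonneg
  rw [h.sum_two_mul_mul_deriv]
  rcases lt_or_ge |y| s with hy | hy
  · obtain ⟨h0, h1⟩ := hin hy
    have hlt := h.overlap_lt
    rw [h.deriv_step_eq_zero (x := x + L / 2) (lt_abs.2 (Or.inl (by linarith))),
      h.deriv_step_eq_zero (x := x + L / 2 - n * L) (lt_abs.2 (Or.inr (by linarith))), sub_zero,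
      mul_zero]
    positivity
  · have hends : |deriv P (x + L / 2) - deriv P (x + L / 2 - n * L)| ≤ 2 * D :=
      (abs_sub _ _).trans <| (add_le_add (h.abs_deriv_step_le _) (h.abs_deriv_step_le _)).trans
        (two_mul D).ge
    have hys : 1 ≤ |y| / s := (one_le_div hs).2 hy
    calc _ ≤ |u.re * v.re + u.im * v.im| * |deriv P (x + L / 2) - deriv P (x + L / 2 - n * L)| :=
          (le_abs_self _).trans (abs_mul _ _).le
      _ ≤ ‖u‖ * ‖v‖ * (2 * D) := by gcongr; exact abs_re_mul_add_im_mul_le u v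
      _ ≤ |y| / s * (‖u‖ * ‖v‖ * (2 * D)) := le_mul_of_one_le_left (by positivity) hys
      _ = D / s * (2 * (|y| * ‖u‖) * ‖v‖) := by ring
      _ ≤ D / s * ((|y| * ‖u‖) ^ 2 + ‖v‖ ^ 2) := by
          gcongr
          exact two_mul_le_add_sq _ _
      _ = _ := by rw [mul_pow, sq_abs]

lemma sum_energy_density_le (h : TileCutoff L δ D ψ P) {n : ℕ} {x y s : ℝ} (hs : 0 < s)
    (hin : |y| < s → 0 ≤ x ∧ x ≤ (n - 1) * L) (β : ℝ) (u v : ℂ) :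
    ∑ j ∈ Finset.range n, (β ^ 2 * y ^ 2 * ‖(ψ (x - j * L) : ℂ) * u‖ ^ 2 +
        ‖(deriv ψ (x - j * L) : ℝ) * u + ψ (x - j * L) * v‖ ^ 2) ≤
      (β ^ 2 + D / s) * (y ^ 2 * ‖u‖ ^ 2) + (1 + D / s) * ‖v‖ ^ 2 + 2 * D ^ 2 * ‖u‖ ^ 2 := by
  have hexpand (j : ℕ) : β ^ 2 * y ^ 2 * ‖(ψ (x - j * L) : ℂ) * u‖ ^ 2 +
        ‖(deriv ψ (x - j * L) : ℝ) * u + ψ (x - j * L) * v‖ ^ 2 =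
      (β ^ 2 * y ^ 2 * ‖u‖ ^ 2 + ‖v‖ ^ 2) * ψ (x - j * L) ^ 2 +
        ‖u‖ ^ 2 * deriv ψ (x - j * L) ^ 2 +
        (u.re * v.re + u.im * v.im) * (2 * ψ (x - j * L) * deriv ψ (x - j * L)) := by
    simp only [← Complex.normSq_eq_norm_sq, Complex.normSq_apply, Complex.add_re, Complex.add_im,
      Complex.re_ofReal_mul, Complex.im_ofReal_mul]
    ring
  simp only [hexpand, Finset.sum_add_distrib, ← Finset.mul_sum]
  have hmain := mul_le_mul_of_nonneg_left (h.sum_sq_le_one n x)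
    (by positivity : 0 ≤ β ^ 2 * y ^ 2 * ‖u‖ ^ 2 + ‖v‖ ^ 2)
  have hIMS := mul_le_mul_of_nonneg_left (h.sum_deriv_sq_le n x) (sq_nonneg ‖u‖)
  linarith [h.cross_term_le hs hin u v]

lemma integral_norm_sq_windowed (c : ℝ) (j : ℕ) (u : ℝ → ℂ) :
    ∫ t, ‖windowed ψ (j * L - c) u t‖ ^ 2 = ∫ y, ‖(ψ (y + c - j * L) : ℂ) * u y‖ ^ 2 := by
  rw [← integral_add_right_eq_self (fun y => ‖(ψ (y + c - j * L) : ℂ) * u y‖ ^ 2) (j * L - c)]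
  simp only [windowed, show ∀ t, t + (j * L - c) + c - j * L = t from fun t => by ring]

lemma oscillatorEnergy_windowed (h : TileCutoff L δ D ψ P) (β c : ℝ) (j : ℕ) {u : ℝ → ℂ}
    (hu : ContDiff ℝ ∞ u) :
    oscillatorEnergy β (j * L - c) (windowed ψ (j * L - c) u) =
      ∫ y, (β ^ 2 * y ^ 2 * ‖(ψ (y + c - j * L) : ℂ) * u y‖ ^ 2 +
        ‖(deriv ψ (y + c - j * L) : ℝ) * u y + ψ (y + c - j * L) * deriv u y‖ ^ 2) := by
  rw [oscillatorEnergy, ← integral_add_right_eq_self (fun y =>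
    β ^ 2 * y ^ 2 * ‖(ψ (y + c - j * L) : ℂ) * u y‖ ^ 2 +
      ‖(deriv ψ (y + c - j * L) : ℝ) * u y + ψ (y + c - j * L) * deriv u y‖ ^ 2) (j * L - c)]
  simp only [h.deriv_windowed _ hu, windowed,
    show ∀ t, t + (j * L - c) + c - j * L = t from fun t => by ring]

lemma integrable_norm_sq_shift (h : TileCutoff L δ D ψ P) (c : ℝ) (j : ℕ) {u : ℝ → ℂ}
    (hu : ContDiff ℝ ∞ u) : Integrable fun y => ‖(ψ (y + c - j * L) : ℂ) * u y‖ ^ 2 := by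
  refine ((integrable_norm_sq_of_hasCompactSupport (h.contDiff_windowed (j * L - c) hu)
    (h.hasCompactSupport_windowed _ u)).comp_add_right (c - j * L)).congr (.of_forall fun y => ?_)
  simp only [windowed, show y + (c - j * L) + (j * L - c) = y by ring, add_sub_assoc]

lemma integrable_energy_shift (h : TileCutoff L δ D ψ P) (β c : ℝ) (j : ℕ) {u : ℝ → ℂ}
    (hu : ContDiff ℝ ∞ u) :
    Integrable fun y => β ^ 2 * y ^ 2 * ‖(ψ (y + c - j * L) : ℂ) * u y‖ ^ 2 +
      ‖(deriv ψ (y + c - j * L) : ℝ) * u y + ψ (y + c - j * L) * deriv u y‖ ^ 2 := by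
  refine ((integrable_oscillatorEnergy (h.contDiff_windowed (j * L - c) hu)
    (h.hasCompactSupport_windowed _ u) β (j * L - c)).comp_add_right (c - j * L)).congr
      (.of_forall fun y => ?_)
  simp only [h.deriv_windowed _ hu, windowed, show y + (c - j * L) + (j * L - c) = y by ring,
    add_sub_assoc]

lemma mem_tiling {n : ℕ} {c s : ℝ} (hc : s ≤ c) (hc' : c ≤ (n - 1) * L - s) {y : ℝ}
    (hy : |y| < s) : 0 ≤ y + c ∧ y + c ≤ (n - 1) * L := by
  rw [abs_lt] at hy
  constructor <;> linarith

variable {u : ℝ → ℂ} {n : ℕ} {c s : ℝ}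

lemma sum_oscillatorEnergy_windowed_le (h : TileCutoff L δ D ψ P) (hu : ContDiff ℝ ∞ u)
    (hmass : Integrable fun t => ‖u t‖ ^ 2) (hmoment : Integrable fun t => t ^ 2 * ‖u t‖ ^ 2)
    (hkin : Integrable fun t => ‖deriv u t‖ ^ 2) (hs : 0 < s) (hc : s ≤ c)
    (hc' : c ≤ (n - 1) * L - s) (β : ℝ) :
    ∑ j ∈ Finset.range n, oscillatorEnergy β (j * L - c) (windowed ψ (j * L - c) u) ≤
      (β ^ 2 + D / s) * (∫ t, t ^ 2 * ‖u t‖ ^ 2) + (1 + D / s) * (∫ t, ‖deriv u t‖ ^ 2) +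
        2 * D ^ 2 * ∫ t, ‖u t‖ ^ 2 := by
  have hint : Integrable fun t => (β ^ 2 + D / s) * (t ^ 2 * ‖u t‖ ^ 2) +
      (1 + D / s) * ‖deriv u t‖ ^ 2 := (hmoment.const_mul _).add (hkin.const_mul _)
  simp only [h.oscillatorEnergy_windowed β c _ hu]
  rw [← integral_finsetSum _ fun j _ => h.integrable_energy_shift β c j hu, ← integral_const_mul,
    ← integral_const_mul, ← integral_const_mul,
    ← integral_add (hmoment.const_mul _) (hkin.const_mul _),
    ← integral_add hint (hmass.const_mul _)]
  exact integral_mono (integrable_finsetSum _ fun j _ => h.integrable_energy_shift β c j hu)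
    (hint.add (hmass.const_mul _))
    fun y => h.sum_energy_density_le hs (mem_tiling hc hc') β (u y) (deriv u y)

lemma le_sum_integral_norm_sq_windowed (h : TileCutoff L δ D ψ P) (hu : ContDiff ℝ ∞ u)
    (hmass : Integrable fun t => ‖u t‖ ^ 2) (hmoment : Integrable fun t => t ^ 2 * ‖u t‖ ^ 2)
    (hs : 0 < s) (hc : s ≤ c) (hc' : c ≤ (n - 1) * L - s) :
    (∫ t, ‖u t‖ ^ 2) - 1 / s ^ 2 * (∫ t, t ^ 2 * ‖u t‖ ^ 2) ≤
      ∑ j ∈ Finset.range n, ∫ t, ‖windowed ψ (j * L - c) u t‖ ^ 2 := by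
  simp only [integral_norm_sq_windowed]
  rw [← integral_finsetSum _ fun j _ => h.integrable_norm_sq_shift c j hu, ← integral_const_mul,
    ← integral_sub hmass (hmoment.const_mul _)]
  exact integral_mono (hmass.sub (hmoment.const_mul _))
    (integrable_finsetSum _ fun j _ => h.integrable_norm_sq_shift c j hu)
    fun y => h.norm_sq_sub_le_sum hs (mem_tiling hc hc') (u y)

end TileCutoff

lemma integral_norm_sq_deriv_polyGauss_le {β : ℝ} (hβ : 0 < β) {m : ℕ} {p : ℂ[X]}
    (hp : p.natDegree ≤ m) :
    ∫ t, ‖deriv (polyGauss β p) t‖ ^ 2 ≤ (2 * m + 1) * β * gaussNormSq β p := by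
  have hmoment : 0 ≤ ∫ t, t ^ 2 * ‖polyGauss β p t‖ ^ 2 := integral_nonneg fun t => by positivity
  nlinarith [integral_oscillator_energy_le hβ hp, mul_nonneg (sq_nonneg β) hmoment]

lemma integral_sq_mul_norm_sq_polyGauss_le {β : ℝ} (hβ : 0 < β) {m : ℕ} {p : ℂ[X]}
    (hp : p.natDegree ≤ m) :
    ∫ t, t ^ 2 * ‖polyGauss β p t‖ ^ 2 ≤ (2 * m + 1) / β * gaussNormSq β p := by
  have hkin : 0 ≤ ∫ t, ‖deriv (polyGauss β p) t‖ ^ 2 := integral_nonneg fun t => by positivity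
  rw [div_mul_eq_mul_div, le_div_iff₀ hβ]
  refine le_of_mul_le_mul_left ?_ hβ
  linarith [integral_oscillator_energy_le hβ hp]

lemma exists_pos_div_le_and_div_sq_le {ε : ℝ} (hε : 0 < ε) (A B : ℝ) :
    ∃ s > 0, A / s ≤ ε ∧ B / s ^ 2 ≤ ε := by
  have hA : Tendsto (fun s : ℝ => A / s) atTop (nhds 0) := tendsto_id.const_div_atTop A
  have hB : Tendsto (fun s : ℝ => B / s ^ 2) atTop (nhds 0) :=
    (tendsto_pow_atTop two_ne_zero).const_div_atTop B
  obtain ⟨s, ⟨hAs, hBs⟩, hs⟩ := (((hA.eventually_le_const hε).and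
    (hB.eventually_le_const hε)).and (eventually_gt_atTop 0)).exists
  exact ⟨s, hs, hAs, hBs⟩

lemma TileCutoff.exists_margin_polyGauss {L δ D : ℝ} {ψ P : ℝ → ℝ} (h : TileCutoff L δ D ψ P)
    {β : ℝ} (hβ : 0 < β) (m : ℕ) {ε : ℝ} (hε : 0 < ε) :
    ∃ s > 0, ∀ (n : ℕ) (c : ℝ) (p : ℂ[X]), s ≤ c → c ≤ (n - 1) * L - s → p.natDegree ≤ m →
      ∑ j ∈ Finset.range n,
          oscillatorEnergy β (j * L - c) (windowed ψ (j * L - c) (polyGauss β p)) ≤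
        ((2 * m + 1) * β + 2 * D ^ 2 + ε) * gaussNormSq β p ∧
      (1 - ε) * gaussNormSq β p ≤
        ∑ j ∈ Finset.range n, ∫ t, ‖windowed ψ (j * L - c) (polyGauss β p) t‖ ^ 2 := by
  obtain ⟨s, hs, hsE, hsM⟩ := exists_pos_div_le_and_div_sq_le hε
    (D * ((2 * m + 1) / β + (2 * m + 1) * β)) ((2 * m + 1) / β)
  refine ⟨s, hs, fun n c p hc hc' hp => ?_⟩
  have hsmooth := contDiff_polyGauss β p
  have hN := gaussNormSq_nonneg β p
  have hmass := integrable_norm_sq_polyGauss hβ p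
  have hmoment := integrable_sq_mul_norm_sq_polyGauss hβ p
  have hkin := integrable_norm_sq_deriv_polyGauss hβ p
  have hkin_le := integral_norm_sq_deriv_polyGauss_le hβ hp
  have hmoment_le := integral_sq_mul_norm_sq_polyGauss_le hβ hp
  constructor
  · have hends : D / s * ((∫ t, t ^ 2 * ‖polyGauss β p t‖ ^ 2) +
        ∫ t, ‖deriv (polyGauss β p) t‖ ^ 2) ≤ ε * gaussNormSq β p := by
      have := h.bound_nonneg
      calc _ ≤ D / s * ((2 * m + 1) / β * gaussNormSq β p +
            (2 * m + 1) * β * gaussNormSq β p) := by gcongr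
        _ = D * ((2 * m + 1) / β + (2 * m + 1) * β) / s * gaussNormSq β p := by ring
        _ ≤ _ := by gcongr
    refine (h.sum_oscillatorEnergy_windowed_le hsmooth hmass hmoment hkin hs hc hc' β).trans ?_
    change _ + 2 * D ^ 2 * gaussNormSq β p ≤ _
    linarith [integral_oscillator_energy_le hβ hp]
  · refine le_trans ?_ (h.le_sum_integral_norm_sq_windowed hsmooth hmass hmoment hs hc hc')
    have htail : 1 / s ^ 2 * (∫ t, t ^ 2 * ‖polyGauss β p t‖ ^ 2) ≤ ε * gaussNormSq β p := by
      calc _ ≤ 1 / s ^ 2 * ((2 * m + 1) / β * gaussNormSq β p) := by gcongr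
        _ = (2 * m + 1) / β / s ^ 2 * gaussNormSq β p := by ring
        _ ≤ _ := by gcongr
    change _ ≤ gaussNormSq β p - _
    linarith

end Windows

section TestFunctions

namespace IsTestOn

variable {Ω : Set (ℝ × ℝ)} {u : ℝ × ℝ → ℂ}

lemma continuous (hu : IsTestOn Ω u) : Continuous u := hu.1.continuous

lemma continuous_dX (hu : IsTestOn Ω u) : Continuous (dX u) :=
  (hu.1.continuous_fderiv (by simp)).clm_apply continuous_const

lemma continuous_dY (hu : IsTestOn Ω u) : Continuous (dY u) :=
  (hu.1.continuous_fderiv (by simp)).clm_apply continuous_const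

lemma eq_zero_of_notMem_tsupport {E : Type*} [Zero E] {F : ℝ × ℝ → E}
    (h0 : ∀ q, u q = 0 → dX u q = 0 → dY u q = 0 → F q = 0) {q : ℝ × ℝ} (hq : q ∉ tsupport u) :
    F q = 0 := by
  have hfderiv : fderiv ℝ u q = 0 :=
    Function.notMem_support.1 fun h => hq (support_fderiv_subset ℝ h)
  refine h0 q (image_eq_zero_of_notMem_tsupport hq) ?_ ?_ <;> simp [dX, dY, hfderiv]

lemma integrable_of_eq_zero (hu : IsTestOn Ω u) {E : Type*} [NormedAddCommGroup E]
    {F : ℝ × ℝ → E} (hF : Continuous F)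
    (h0 : ∀ q, u q = 0 → dX u q = 0 → dY u q = 0 → F q = 0) : Integrable F :=
  hF.integrable_of_hasCompactSupport <|
    HasCompactSupport.intro hu.2.1 fun _ hq => eq_zero_of_notMem_tsupport h0 hq

lemma setIntegral_eq_integral (hu : IsTestOn Ω u) {E : Type*} [NormedAddCommGroup E]
    [NormedSpace ℝ E] {F : ℝ × ℝ → E}
    (h0 : ∀ q, u q = 0 → dX u q = 0 → dY u q = 0 → F q = 0) : ∫ q in Ω, F q = ∫ q, F q :=
  setIntegral_eq_integral_of_forall_compl_eq_zero fun _ hq =>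
    eq_zero_of_notMem_tsupport h0 fun h => hq (hu.2.2 h)

end IsTestOn

lemma hasDerivAt_dX {u : ℝ × ℝ → ℂ} (hu : Differentiable ℝ u) (q : ℝ × ℝ) :
    HasDerivAt (fun x => u (x, q.2)) (dX u q) q.1 :=
  (hu q).hasFDerivAt.comp_hasDerivAt q.1
    ((hasDerivAt_id q.1).prodMk (hasDerivAt_const q.1 q.2))

lemma hasDerivAt_dY {u : ℝ × ℝ → ℂ} (hu : Differentiable ℝ u) (q : ℝ × ℝ) :
    HasDerivAt (fun t => u (q.1, t)) (dY u q) q.2 :=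
  (hu q).hasFDerivAt.comp_hasDerivAt q.2
    ((hasDerivAt_const q.2 q.1).prodMk (hasDerivAt_id q.2))

end TestFunctions

section WavePackets

open scoped ContDiff

variable {ι : Type*} [Fintype ι]

/-- A superposition of plane waves in `x` whose amplitudes `h i` depend on `t`, cut off by `χ`. -/
def wavePacket (χ : ℝ → ℝ) (ν : ι → ℝ) (h : ι → ℝ → ℂ) (q : ℝ × ℝ) : ℂ :=
  χ q.1 * trigSum ν (fun i => h i q.2) q.1

namespace TileCutoff

variable {L δ D : ℝ} {χ P : ℝ → ℝ} {ν : ι → ℝ} {h : ι → ℝ → ℂ}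

lemma contDiff_wavePacket (hχ : TileCutoff L δ D χ P) (hh : ∀ i, ContDiff ℝ ∞ (h i)) :
    ContDiff ℝ ∞ (wavePacket χ ν h) :=
  (Complex.ofRealCLM.contDiff.comp (hχ.contDiff.comp contDiff_fst)).mul <|
    ContDiff.sum fun i _ => ((hh i).comp contDiff_snd).mul
      ((contDiff_planeWave (ν i)).comp contDiff_fst)

lemma wavePacket_support_subset (hχ : TileCutoff L δ D χ P) {ρ : ℝ}
    (hh : ∀ i t, ρ ≤ |t| → h i t = 0) :
    Function.support (wavePacket χ ν h) ⊆
      Set.Icc (-((L + δ) / 2)) ((L + δ) / 2) ×ˢ Set.Icc (-ρ) ρ := by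
  intro q hq
  obtain ⟨hqχ, hqh⟩ := mul_ne_zero_iff.1 hq
  obtain ⟨i, -, hi⟩ := Finset.exists_ne_zero_of_sum_ne_zero hqh
  refine ⟨Set.Ioo_subset_Icc_self (hχ.support_subset ?_), abs_le.1 ?_⟩
  · exact fun h0 => hqχ (by simp [h0])
  · by_contra! hlt
    exact hi (mul_eq_zero_of_left (hh i _ hlt.le) _)

lemma isTestOn_univ_wavePacket (hχ : TileCutoff L δ D χ P) (hh : ∀ i, ContDiff ℝ ∞ (h i)) {ρ : ℝ}
    (h0 : ∀ i t, ρ ≤ |t| → h i t = 0) : IsTestOn Set.univ (wavePacket χ ν h) :=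
  ⟨hχ.contDiff_wavePacket hh, (isCompact_Icc.prod isCompact_Icc).of_isClosed_subset
    (isClosed_tsupport _) (closure_minimal (hχ.wavePacket_support_subset h0)
      (isClosed_Icc.prod isClosed_Icc)), Set.subset_univ _⟩

lemma isTestOn_wavePacket (hχ : TileCutoff L δ D χ P) (hh : ∀ i, ContDiff ℝ ∞ (h i)) {ρ : ℝ}
    (h0 : ∀ i t, ρ ≤ |t| → h i t = 0) {x₀ t₀ a ε₀ : ℝ} (hL : L + δ < ε₀ * a * rexp t₀)
    (hρ : ρ < ε₀ / 2) :
    IsTestOn (Krect x₀ t₀ a ε₀) fun q => wavePacket χ ν h (q - (x₀, t₀)) := by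
  have htest := hχ.isTestOn_univ_wavePacket (ν := ν) hh h0
  have hsupp : tsupport (fun q => wavePacket χ ν h (q - (x₀, t₀))) ⊆
      Set.Icc (x₀ - (L + δ) / 2) (x₀ + (L + δ) / 2) ×ˢ Set.Icc (t₀ - ρ) (t₀ + ρ) := by
    refine closure_minimal (fun q hq => ?_) (isClosed_Icc.prod isClosed_Icc)
    obtain ⟨⟨hx, hx'⟩, ht, ht'⟩ := hχ.wavePacket_support_subset h0 hq
    simp only [Prod.fst_sub, Prod.snd_sub] at hx hx' ht ht'
    exact ⟨⟨by linarith, by linarith⟩, by linarith, by linarith⟩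
  refine ⟨htest.1.comp (contDiff_id.sub contDiff_const),
    htest.2.1.comp_homeomorph (Homeomorph.subRight (x₀, t₀)), hsupp.trans (Set.prod_mono ?_ ?_)⟩ <;>
  apply Set.Icc_subset_Ioo <;> linarith

lemma dX_wavePacket (hχ : TileCutoff L δ D χ P) (hh : ∀ i, ContDiff ℝ ∞ (h i)) (q : ℝ × ℝ) :
    dX (wavePacket χ ν h) q = deriv (fun x => (χ x : ℂ) * trigSum ν (fun i => h i q.2) x) q.1 :=
  (hasDerivAt_dX ((hχ.contDiff_wavePacket hh).differentiable (by simp)) q).deriv.symm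

lemma dY_wavePacket (hχ : TileCutoff L δ D χ P) (hh : ∀ i, ContDiff ℝ ∞ (h i)) (q : ℝ × ℝ) :
    dY (wavePacket χ ν h) q = wavePacket χ ν (fun i => deriv (h i)) q := by
  rw [← (hasDerivAt_dY ((hχ.contDiff_wavePacket hh).differentiable (by simp)) q).deriv]
  exact (HasDerivAt.const_mul (χ q.1 : ℂ) (HasDerivAt.fun_sum (u := Finset.univ) fun i _ =>
    ((hh i).differentiable (by simp) q.2).hasDerivAt.mul_const (planeWave (ν i) q.1))).deriv

lemma integral_norm_sq_wavePacket (hχ : TileCutoff L δ D χ P) (hν : OrthogonalFrequencies L ν)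
    (hint : Integrable fun q => ‖wavePacket χ ν h q‖ ^ 2)
    (hint' : ∀ i, Integrable fun t => ‖h i t‖ ^ 2) :
    ∫ q, ‖wavePacket χ ν h q‖ ^ 2 = L * ∑ i, ∫ t, ‖h i t‖ ^ 2 := by
  rw [Measure.volume_eq_prod] at hint ⊢
  rw [integral_prod_symm _ hint, ← integral_finsetSum _ fun i _ => hint' i, ← integral_const_mul]
  refine integral_congr_ae (.of_forall fun t => ?_)
  simp only [wavePacket, norm_mul, mul_pow, Complex.norm_real, Real.norm_eq_abs, sq_abs]
  exact hχ.integral_sq_mul_norm_sq_trigSum hν fun i => h i t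

lemma integral_norm_sq_magnetic_dX_wavePacket_le (hχ : TileCutoff L δ D χ P)
    (hν : OrthogonalFrequencies L ν) (hh : ∀ i, ContDiff ℝ ∞ (h i)) {A : ℝ → ℝ}
    (hint : Integrable fun q : ℝ × ℝ =>
      ‖-Complex.I * dX (wavePacket χ ν h) q - A q.2 * wavePacket χ ν h q‖ ^ 2)
    (hint' : ∀ i, Integrable fun t => ((ν i - A t) ^ 2 + 2 * D ^ 2) * ‖h i t‖ ^ 2) :
    ∫ q : ℝ × ℝ, ‖-Complex.I * dX (wavePacket χ ν h) q - A q.2 * wavePacket χ ν h q‖ ^ 2 ≤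
      L * ∑ i, ∫ t, ((ν i - A t) ^ 2 + 2 * D ^ 2) * ‖h i t‖ ^ 2 := by
  rw [Measure.volume_eq_prod] at hint ⊢
  rw [integral_prod_symm _ hint, ← integral_finsetSum _ fun i _ => hint' i, ← integral_const_mul]
  refine integral_mono hint.integral_prod_right
    ((integrable_finsetSum _ fun i _ => hint' i).const_mul L) fun t => ?_
  simp only [hχ.dX_wavePacket hh, wavePacket]
  exact hχ.integral_norm_sq_magnetic_deriv_trigSum_le hν (fun i => h i t) (A t)

end TileCutoff

lemma qK0_comp_sub {w : ℝ × ℝ → ℂ} {x₀ t₀ a ε₀ : ℝ} (b₀ : ℝ) (hw : IsTestOn Set.univ w)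
    (hw' : IsTestOn (Krect x₀ t₀ a ε₀) fun q => w (q - (x₀, t₀))) :
    qK0 x₀ t₀ a ε₀ b₀ (fun q => w (q - (x₀, t₀))) =
      rexp (2 * t₀) * (∫ q, ‖-Complex.I * dX w q - (-q.2 * rexp (-t₀) * b₀ : ℝ) * w q‖ ^ 2) +
        (∫ q, ‖dY w q‖ ^ 2) + 1 / 4 * ∫ q, ‖w q‖ ^ 2 := by
  have hc := hw.continuous
  have hcX := hw.continuous_dX
  have hcY := hw.continuous_dY
  have hX : Integrable fun q : ℝ × ℝ => rexp (2 * t₀) *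
      ‖-Complex.I * dX w q - (-q.2 * rexp (-t₀) * b₀ : ℝ) * w q‖ ^ 2 :=
    hw.integrable_of_eq_zero (by fun_prop) fun q h0 h1 _ => by simp [h0, h1]
  have hY : Integrable fun q => ‖dY w q‖ ^ 2 :=
    hw.integrable_of_eq_zero (by fun_prop) fun q _ _ h2 => by simp [h2]
  have hXY : Integrable fun q : ℝ × ℝ => rexp (2 * t₀) *
      ‖-Complex.I * dX w q - (-q.2 * rexp (-t₀) * b₀ : ℝ) * w q‖ ^ 2 + ‖dY w q‖ ^ 2 := hX.add hY
  have hm : Integrable fun q => 1 / 4 * ‖w q‖ ^ 2 :=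
    hw.integrable_of_eq_zero (by fun_prop) fun q h0 _ _ => by simp [h0]
  rw [qK0, hw'.setIntegral_eq_integral fun q h0 h1 h2 => by simp [h0, h1, h2],
    ← integral_const_mul, ← integral_const_mul, ← integral_add hX hY, ← integral_add hXY hm,
    ← integral_sub_right_eq_self (fun q => rexp (2 * t₀) * _ + _ + 1 / 4 * ‖w q‖ ^ 2) (x₀, t₀)]
  simp only [dX, dY, Azero, fderiv_comp_sub, Prod.snd_sub]

lemma exp_two_mul_mul_sq {ν b₀ d : ℝ} (t₀ t : ℝ) (hν : ν = b₀ * rexp (-t₀) * d) :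
    rexp (2 * t₀) * (ν - -t * rexp (-t₀) * b₀) ^ 2 = b₀ ^ 2 * (t + d) ^ 2 := by
  have hexp : rexp (2 * t₀) * rexp (-t₀) ^ 2 = 1 := by
    rw [← Real.exp_nat_mul, ← Real.exp_add, Nat.cast_ofNat,
      show 2 * t₀ + 2 * -t₀ = 0 by ring, Real.exp_zero]
  rw [hν]
  linear_combination b₀ ^ 2 * (t + d) ^ 2 * hexp

lemma exp_two_mul_mul_integral_add {h : ℝ → ℂ} (hh : ContDiff ℝ ∞ h) (hc : HasCompactSupport h)
    {ν t₀ b₀ d : ℝ} (hν : ν = b₀ * rexp (-t₀) * d) (D : ℝ) :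
    rexp (2 * t₀) * (∫ t, ((ν - -t * rexp (-t₀) * b₀) ^ 2 + 2 * D ^ 2) * ‖h t‖ ^ 2) +
        ∫ t, ‖deriv h t‖ ^ 2 =
      oscillatorEnergy b₀ d h + 2 * rexp (2 * t₀) * D ^ 2 * ∫ t, ‖h t‖ ^ 2 := by
  have hcont := hh.continuous
  have hcont' : Continuous (deriv h) := hh.continuous_deriv (by simp)
  have hmag : Integrable fun t =>
      rexp (2 * t₀) * (((ν - -t * rexp (-t₀) * b₀) ^ 2 + 2 * D ^ 2) * ‖h t‖ ^ 2) :=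
    integrable_of_eq_zero_of_hasCompactSupport (by fun_prop) hc fun t h0 _ => by simp [h0]
  have hkin : Integrable fun t => ‖deriv h t‖ ^ 2 :=
    integrable_of_eq_zero_of_hasCompactSupport (by fun_prop) hc fun t _ h1 => by simp [h1]
  have hmass := integrable_norm_sq_of_hasCompactSupport hh hc
  rw [oscillatorEnergy, ← integral_const_mul, ← integral_const_mul, ← integral_add hmag hkin,
    ← integral_add (integrable_oscillatorEnergy hh hc b₀ d) (hmass.const_mul _)]
  refine integral_congr_ae (.of_forall fun t => ?_)
  linear_combination ‖h t‖ ^ 2 * exp_two_mul_mul_sq t₀ t hν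

lemma TileCutoff.qK0_wavePacket_le {L δ D : ℝ} {χ P : ℝ → ℝ} (hχ : TileCutoff L δ D χ P)
    {ν d : ι → ℝ} (hν : OrthogonalFrequencies L ν) {h : ι → ℝ → ℂ}
    (hh : ∀ i, ContDiff ℝ ∞ (h i)) (hc : ∀ i, HasCompactSupport (h i)) {x₀ t₀ a ε₀ b₀ : ℝ}
    (hd : ∀ i, ν i = b₀ * rexp (-t₀) * d i) (hw : IsTestOn Set.univ (wavePacket χ ν h))
    (hw' : IsTestOn (Krect x₀ t₀ a ε₀) fun q => wavePacket χ ν h (q - (x₀, t₀))) :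
    qK0 x₀ t₀ a ε₀ b₀ (fun q => wavePacket χ ν h (q - (x₀, t₀))) ≤
      L * ∑ i, (oscillatorEnergy b₀ (d i) (h i) +
        (2 * rexp (2 * t₀) * D ^ 2 + 1 / 4) * ∫ t, ‖h i t‖ ^ 2) := by
  have hcont := hw.continuous
  have hcontX := hw.continuous_dX
  have hcontY := hw.continuous_dY
  have hhc := fun i => (hh i).continuous
  have hhc' : ∀ i, Continuous (deriv (h i)) := fun i => (hh i).continuous_deriv (by simp)
  have hmag := hχ.integral_norm_sq_magnetic_dX_wavePacket_le hν hh
    (A := fun t => -t * rexp (-t₀) * b₀)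
    (hw.integrable_of_eq_zero (by fun_prop) fun q h0 h1 _ => by simp [h0, h1])
    fun i => integrable_of_eq_zero_of_hasCompactSupport (by fun_prop) (hc i)
      fun t h0 _ => by simp [h0]
  have hmass := hχ.integral_norm_sq_wavePacket hν
    (hw.integrable_of_eq_zero (by fun_prop) fun q h0 _ _ => by simp [h0])
    fun i => integrable_norm_sq_of_hasCompactSupport (hh i) (hc i)
  have hkin : ∫ q, ‖dY (wavePacket χ ν h) q‖ ^ 2 = L * ∑ i, ∫ t, ‖deriv (h i) t‖ ^ 2 := by
    have hint : Integrable fun q => ‖dY (wavePacket χ ν h) q‖ ^ 2 :=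
      hw.integrable_of_eq_zero (by fun_prop) fun q _ _ h2 => by simp [h2]
    simp only [hχ.dY_wavePacket hh] at hint ⊢
    exact hχ.integral_norm_sq_wavePacket hν hint fun i =>
      integrable_of_eq_zero_of_hasCompactSupport (by fun_prop) (hc i) fun t _ h1 => by simp [h1]
  rw [qK0_comp_sub b₀ hw hw', hmass, hkin]
  calc _ ≤ rexp (2 * t₀) * (L * ∑ i, ∫ t,
            ((ν i - -t * rexp (-t₀) * b₀) ^ 2 + 2 * D ^ 2) * ‖h i t‖ ^ 2) +
          (L * ∑ i, ∫ t, ‖deriv (h i) t‖ ^ 2) + 1 / 4 * (L * ∑ i, ∫ t, ‖h i t‖ ^ 2) := by gcongr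
    _ = L * ∑ i, (rexp (2 * t₀) *
          (∫ t, ((ν i - -t * rexp (-t₀) * b₀) ^ 2 + 2 * D ^ 2) * ‖h i t‖ ^ 2) +
          (∫ t, ‖deriv (h i) t‖ ^ 2) + 1 / 4 * ∫ t, ‖h i t‖ ^ 2) := by
        rw [Finset.sum_add_distrib, Finset.sum_add_distrib, ← Finset.mul_sum, ← Finset.mul_sum]
        ring
    _ = _ := by
        refine congrArg (L * ·) (Finset.sum_congr rfl fun i _ => ?_)
        rw [exp_two_mul_mul_integral_add (hh i) (hc i) (hd i), add_mul, add_assoc]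

end WavePackets

section FieldVariation

lemma abs_fderiv_apply_le (f : ℝ × ℝ → ℝ) (p v : ℝ × ℝ) :
    |fderiv ℝ f p v| ≤ (|v.1| + |v.2|) * √(dXr f p ^ 2 + dYr f p ^ 2) := by
  have hv : v = v.1 • ((1 : ℝ), (0 : ℝ)) + v.2 • ((0 : ℝ), (1 : ℝ)) := by ext <;> simp
  have hsplit : fderiv ℝ f p v = v.1 * dXr f p + v.2 * dYr f p := by
    conv_lhs => rw [hv, map_add, map_smul, map_smul]
    rfl
  have hX : |dXr f p| ≤ √(dXr f p ^ 2 + dYr f p ^ 2) :=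
    abs_le_sqrt (le_add_of_nonneg_right (sq_nonneg _))
  have hY : |dYr f p| ≤ √(dXr f p ^ 2 + dYr f p ^ 2) :=
    abs_le_sqrt (le_add_of_nonneg_left (sq_nonneg _))
  calc |fderiv ℝ f p v| ≤ |v.1| * |dXr f p| + |v.2| * |dYr f p| := by
        rw [hsplit, ← abs_mul, ← abs_mul]
        exact abs_add_le _ _
    _ ≤ |v.1| * √(dXr f p ^ 2 + dYr f p ^ 2) + |v.2| * √(dXr f p ^ 2 + dYr f p ^ 2) := by gcongr
    _ = _ := by ring

lemma exp_le_one_add_two_mul {x : ℝ} (hx : 0 ≤ x) (hx1 : x ≤ 1) : rexp x ≤ 1 + 2 * x := by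
  have := (abs_le.1 (abs_exp_sub_one_le ((abs_of_nonneg hx).trans_le hx1))).2
  rw [abs_of_nonneg hx] at this
  linarith

lemma abs_sub_le_of_abs_deriv_le_mul_abs_add_one {g g' : ℝ → ℝ} {k : ℝ} (hk : 0 < k) (hk1 : k ≤ 1)
    (hg : ∀ s, HasDerivAt g (g' s) s) (hbound : ∀ s ∈ Set.Ico (0 : ℝ) 1, |g' s| ≤ k * (|g s| + 1)) :
    |g 1 - g 0| ≤ 2 * k * (|g 0| + 1) := by
  have hderiv : ∀ s, HasDerivAt (fun s => g s - g 0) (g' s) s := fun s => (hg s).sub_const _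
  have hbound' : ∀ s ∈ Set.Ico (0 : ℝ) 1, ‖g' s‖ ≤ k * ‖g s - g 0‖ + k * (|g 0| + 1) := by
    intro s hs
    have htri : |g s| ≤ |g s - g 0| + |g 0| := by simpa using abs_add_le (g s - g 0) (g 0)
    calc ‖g' s‖ ≤ k * (|g s| + 1) := hbound s hs
      _ ≤ k * (|g s - g 0| + |g 0| + 1) := by gcongr
      _ = _ := by rw [Real.norm_eq_abs]; ring
  have hgronwall := norm_le_gronwallBound_of_norm_deriv_right_le (a := 0) (b := 1) (δ := 0)
    (fun s _ => (hderiv s).continuousAt.continuousWithinAt)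
    (fun s _ => (hderiv s).hasDerivWithinAt) (by simp) hbound' 1 (by simp)
  rw [gronwallBound_of_K_ne_0 hk.ne', mul_div_cancel_left₀ _ hk.ne', sub_zero] at hgronwall
  calc |g 1 - g 0| ≤ (|g 0| + 1) * (rexp k - 1) := by simpa using hgronwall
    _ ≤ (|g 0| + 1) * (2 * k) := by gcongr; linarith [exp_le_one_add_two_mul hk.le hk1]
    _ = _ := by ring

lemma exp_le_two_mul_exp {s t : ℝ} (h : s - t ≤ 1 / 4) : rexp s ≤ 2 * rexp t := by
  have hlog : s ≤ Real.log 2 + t := by linarith [Real.log_two_gt_d9]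
  calc rexp s ≤ rexp (Real.log 2 + t) := exp_le_exp.2 hlog
    _ = 2 * rexp t := by rw [exp_add, exp_log two_pos]

lemma isOpen_UHP : IsOpen UHP := isOpen_lt continuous_const continuous_snd

variable {f : ℝ × ℝ → ℝ} {C₀ a₀ a ε₀ x₀ t₀ x r : ℝ}

lemma abs_fderiv_path_le
    (hgrad : ∀ p ∈ UHP, p.2 * √(dXr f p ^ 2 + dYr f p ^ 2) ≤ C₀ * (|f p| + 1))
    (ha : 0 < a) (ha₀ : a ≤ a₀) (hε : 0 < ε₀) (hε2 : ε₀ ≤ 1 / 2)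
    (hx : |x - x₀| ≤ ε₀ * a * rexp t₀ / 2) (hr : |r - t₀| ≤ ε₀ / 2) {s : ℝ}
    (hs : s ∈ Set.Ico (0 : ℝ) 1) {p : ℝ × ℝ} (hp : p.2 = rexp (t₀ + s * (r - t₀))) :
    |fderiv ℝ f p (x - x₀, p.2 * (r - t₀))| ≤ C₀ * (a₀ + 1) * ε₀ * (|f p| + 1) := by
  have ha₀' : 0 < a₀ := ha.trans_le ha₀
  have hp0 : 0 < p.2 := hp ▸ exp_pos _
  have hsr : |s * (r - t₀)| ≤ 1 / 4 := by
    rw [abs_mul, abs_of_nonneg hs.1]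
    calc s * |r - t₀| ≤ 1 * (ε₀ / 2) := by gcongr; exact hs.2.le
      _ ≤ 1 / 4 := by linarith
  have hexp : rexp t₀ ≤ 2 * p.2 := hp ▸ exp_le_two_mul_exp (by linarith [(abs_le.1 hsr).1])
  have hx' : |x - x₀| ≤ ε₀ * a₀ * p.2 := by
    calc |x - x₀| ≤ ε₀ * a₀ * (2 * p.2) / 2 := hx.trans (by gcongr)
      _ = ε₀ * a₀ * p.2 := by ring
  calc |fderiv ℝ f p (x - x₀, p.2 * (r - t₀))|
      ≤ (|x - x₀| + p.2 * |r - t₀|) * √(dXr f p ^ 2 + dYr f p ^ 2) := by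
        simpa [abs_mul, abs_of_pos hp0] using abs_fderiv_apply_le f p (x - x₀, p.2 * (r - t₀))
    _ ≤ (ε₀ * a₀ * p.2 + p.2 * ε₀) * √(dXr f p ^ 2 + dYr f p ^ 2) := by
        gcongr
        linarith
    _ = ε₀ * (a₀ + 1) * (p.2 * √(dXr f p ^ 2 + dYr f p ^ 2)) := by ring
    _ ≤ ε₀ * (a₀ + 1) * (C₀ * (|f p| + 1)) :=
        mul_le_mul_of_nonneg_left (hgrad p hp0) (by positivity)
    _ = _ := by ring

-- The path `s ↦ (x₀ + s (x - x₀), e^{t₀ + s (r - t₀)})` has hyperbolic length `O(ε₀)`.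
lemma abs_sub_center_le (hf : ContDiffOn ℝ 1 f UHP) (hC₀ : 0 < C₀)
    (hgrad : ∀ p ∈ UHP, p.2 * √(dXr f p ^ 2 + dYr f p ^ 2) ≤ C₀ * (|f p| + 1))
    (ha : 0 < a) (ha₀ : a ≤ a₀) (hε : 0 < ε₀) (hε2 : ε₀ ≤ 1 / 2) (hk : C₀ * (a₀ + 1) * ε₀ ≤ 1)
    (hβ : 1 < |f (x₀, rexp t₀)|) (hx : |x - x₀| ≤ ε₀ * a * rexp t₀ / 2) (hr : |r - t₀| ≤ ε₀ / 2) :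
    |f (x, rexp r) - f (x₀, rexp t₀)| ≤ 4 * (C₀ * (a₀ + 1)) * ε₀ * |f (x₀, rexp t₀)| := by
  have ha₀' : 0 < a₀ := ha.trans_le ha₀
  let X : ℝ → ℝ := fun s => x₀ + s * (x - x₀)
  let Y : ℝ → ℝ := fun s => rexp (t₀ + s * (r - t₀))
  have hX : ∀ s, HasDerivAt X (x - x₀) s := fun s => by
    have := ((hasDerivAt_id' s).mul_const (x - x₀)).const_add x₀
    rwa [one_mul] at this
  have hY : ∀ s, HasDerivAt Y (Y s * (r - t₀)) s := fun s => by
    simpa using (((hasDerivAt_id s).mul_const (r - t₀)).const_add t₀).exp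
  have hderiv : ∀ s, HasDerivAt (fun s => f (X s, Y s))
      (fderiv ℝ f (X s, Y s) (x - x₀, Y s * (r - t₀))) s := by
    intro s
    have hd : DifferentiableAt ℝ f (X s, Y s) :=
      (hf.differentiableOn (by simp)).differentiableAt (isOpen_UHP.mem_nhds (exp_pos _))
    exact hd.hasFDerivAt.comp_hasDerivAt s ((hX s).prodMk (hY s))
  have hgrowth := abs_sub_le_of_abs_deriv_le_mul_abs_add_one (by positivity) hk hderiv
    fun s hs => abs_fderiv_path_le hgrad ha ha₀ hε hε2 hx hr hs (p := (X s, Y s)) rfl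
  simp only [X, Y, one_mul, zero_mul, add_zero, add_sub_cancel] at hgrowth
  calc _ ≤ 2 * (C₀ * (a₀ + 1) * ε₀) * (|f (x₀, rexp t₀)| + 1) := hgrowth
    _ ≤ 2 * (C₀ * (a₀ + 1) * ε₀) * (2 * |f (x₀, rexp t₀)|) := by gcongr; linarith
    _ = _ := by ring

end FieldVariation

section VectorPotential

variable {A₁ A₂ : ℝ × ℝ → ℝ} {C₀ a₀ a ε₀ x₀ t₀ : ℝ}

lemma contDiffOn_fieldB (hA₁ : ContDiffOn ℝ 2 A₁ UHP) (hA₂ : ContDiffOn ℝ 2 A₂ UHP) :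
    ContDiffOn ℝ 1 (fieldB A₁ A₂) UHP := by
  have hdA₁ := hA₁.fderiv_of_isOpen isOpen_UHP (m := 1) (by norm_num)
  have hdA₂ := hA₂.fderiv_of_isOpen isOpen_UHP (m := 1) (by norm_num)
  exact (contDiff_snd.pow 2).contDiffOn.mul
    ((hdA₂.clm_apply contDiffOn_const).sub (hdA₁.clm_apply contDiffOn_const))

lemma continuous_fieldB_exp (hB : ContinuousOn (fieldB A₁ A₂) UHP) :
    Continuous fun q : ℝ × ℝ => fieldB A₁ A₂ (q.1, rexp q.2) :=
  hB.comp_continuous (by fun_prop) fun _ => exp_pos _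

lemma Atil_eq_neg_integral_exp (hB : ContinuousOn (fieldB A₁ A₂) UHP) (t₀ : ℝ) (q : ℝ × ℝ) :
    Atil A₁ A₂ t₀ q = -∫ r in t₀..q.2, fieldB A₁ A₂ (q.1, rexp r) * rexp (-r) := by
  have hcont : ContinuousOn (fun s => fieldB A₁ A₂ (q.1, s) / s ^ 2) (Set.Ioi 0) :=
    (hB.comp (f := fun s => (q.1, s)) (by fun_prop) fun s hs => hs).div (by fun_prop)
      fun s hs => pow_ne_zero 2 (ne_of_gt hs)
  rw [Atil, ← intervalIntegral.integral_comp_mul_deriv' (f := rexp) (f' := rexp)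
    (fun x _ => hasDerivAt_exp x) continuous_exp.continuousOn
    (hcont.mono (by rintro _ ⟨r, _, rfl⟩; exact exp_pos r))]
  congr 2
  ext r
  rw [Function.comp_apply, exp_neg]
  field_simp

lemma continuous_Atil (hB : ContinuousOn (fieldB A₁ A₂) UHP) (t₀ : ℝ) :
    Continuous (Atil A₁ A₂ t₀) := by
  have hcont := continuous_fieldB_exp hB
  rw [funext (Atil_eq_neg_integral_exp hB t₀)]
  refine (intervalIntegral.continuous_parametric_intervalIntegral_of_continuous
    (f := fun (q : ℝ × ℝ) r => fieldB A₁ A₂ (q.1, rexp r) * rexp (-r)) ?_ (by fun_prop)).neg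
  exact (hcont.comp (f := fun z : (ℝ × ℝ) × ℝ => (z.1.1, z.2)) (by fun_prop)).mul (by fun_prop)

lemma abs_const_sub_mul_exp_le {b₀ g c ε r t₀ : ℝ} (hε2 : ε ≤ 1 / 2)
    (hg : |g - b₀| ≤ c * ε * |b₀|) (hr : |r - t₀| ≤ ε / 2) :
    |rexp (-t₀) * b₀ - g * rexp (-r)| ≤ (2 * c + 1) * ε * |b₀| * rexp (-t₀) := by
  let z := rexp (-(r - t₀))
  have hz : |z - 1| ≤ ε := by
    refine (abs_exp_sub_one_le (by rw [abs_neg]; linarith)).trans ?_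
    rw [abs_neg]; linarith
  have hz0 : 0 ≤ z := (exp_pos _).le
  have hz2 : z ≤ 2 := by linarith [(abs_le.1 hz).2]
  have hdecomp : rexp (-t₀) * b₀ - g * rexp (-r) =
      -(rexp (-t₀) * ((g - b₀) * z + b₀ * (z - 1))) := by
    have : rexp (-r) = rexp (-t₀) * z := by rw [← exp_add]; ring_nf
    rw [this]; ring
  calc _ = rexp (-t₀) * |(g - b₀) * z + b₀ * (z - 1)| := by
        rw [hdecomp, abs_neg, abs_mul, abs_of_pos (exp_pos _)]
    _ ≤ rexp (-t₀) * (|g - b₀| * z + |b₀| * |z - 1|) := by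
        gcongr
        simpa only [abs_mul, abs_of_nonneg hz0] using abs_add_le ((g - b₀) * z) (b₀ * (z - 1))
    _ ≤ rexp (-t₀) * (c * ε * |b₀| * 2 + |b₀| * ε) := by
        have : 0 ≤ c * ε * |b₀| := (abs_nonneg _).trans hg
        gcongr
    _ = _ := by ring

lemma abs_Atil_sub_Azero_le (hB : ContDiffOn ℝ 1 (fieldB A₁ A₂) UHP) (hC₀ : 0 < C₀)
    (hH : H2 C₀ A₁ A₂) (ha : 0 < a) (ha₀ : a ≤ a₀) (hε : 0 < ε₀) (hε2 : ε₀ ≤ 1 / 2)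
    (hk : C₀ * (a₀ + 1) * ε₀ ≤ 1) (hβ : 1 < intenB A₁ A₂ (x₀, rexp t₀)) {q : ℝ × ℝ}
    (hq : q ∈ Krect x₀ t₀ a ε₀) :
    |Atil A₁ A₂ t₀ q - Azero t₀ (fieldB A₁ A₂ (x₀, rexp t₀)) q| ≤
      (8 * (C₀ * (a₀ + 1)) + 1) * ε₀ ^ 2 * intenB A₁ A₂ (x₀, rexp t₀) * rexp (-t₀) := by
  obtain ⟨x, t⟩ := q
  obtain ⟨⟨hx₁, hx₂⟩, ht₁, ht₂⟩ := hq
  simp only at hx₁ hx₂ ht₁ ht₂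
  unfold intenB at *
  set b₀ := fieldB A₁ A₂ (x₀, rexp t₀)
  have hAzero : Azero t₀ b₀ (x, t) = -∫ _ in t₀..t, rexp (-t₀) * b₀ := by
    rw [intervalIntegral.integral_const, smul_eq_mul, Azero]; ring
  have hcont : Continuous fun r => fieldB A₁ A₂ (x, rexp r) * rexp (-r) :=
    ((continuous_fieldB_exp hB.continuousOn).comp (f := fun r => (x, r)) (by fun_prop)).mul
      (by fun_prop)
  have hpointwise : ∀ r ∈ Set.uIoc t₀ t,
      ‖rexp (-t₀) * b₀ - fieldB A₁ A₂ (x, rexp r) * rexp (-r)‖ ≤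
        (2 * (4 * (C₀ * (a₀ + 1))) + 1) * ε₀ * |b₀| * rexp (-t₀) := by
    intro r hr
    have hr' : |r - t₀| ≤ ε₀ / 2 := by
      rcases Set.mem_uIoc.1 hr with h | h <;> rw [abs_le] <;> constructor <;> linarith
    have hx : |x - x₀| ≤ ε₀ * a * rexp t₀ / 2 := by rw [abs_le]; constructor <;> linarith
    exact abs_const_sub_mul_exp_le hε2
      (abs_sub_center_le hB hC₀ hH ha ha₀ hε hε2 hk hβ hx hr') hr'
  have hbound := intervalIntegral.norm_integral_le_of_norm_le_const hpointwise
  have ha₀' : 0 < a₀ := ha.trans_le ha₀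
  rw [Atil_eq_neg_integral_exp hB.continuousOn, hAzero, neg_sub_neg,
    ← intervalIntegral.integral_sub (by simp) (hcont.intervalIntegrable _ _)]
  calc _ ≤ (2 * (4 * (C₀ * (a₀ + 1))) + 1) * ε₀ * |b₀| * rexp (-t₀) * |t - t₀| := hbound
    _ ≤ (2 * (4 * (C₀ * (a₀ + 1))) + 1) * ε₀ * |b₀| * rexp (-t₀) * ε₀ := by
        gcongr
        rw [abs_le]; constructor <;> linarith
    _ = _ := by ring

end VectorPotential

section FormComparison

lemma norm_sub_mul_sq_le (z w : ℂ) (A B : ℝ) {η : ℝ} (hη : 0 < η) :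
    ‖z - A * w‖ ^ 2 ≤
      (1 + η ^ 2) * ‖z - B * w‖ ^ 2 + (1 + 1 / η ^ 2) * ((A - B) ^ 2 * ‖w‖ ^ 2) := by
  have hsplit : z - (A : ℂ) * w = (z - B * w) - ((A - B : ℝ) : ℂ) * w := by push_cast; ring
  have htri : ‖z - (A : ℂ) * w‖ ≤ ‖z - (B : ℂ) * w‖ + |A - B| * ‖w‖ := by
    rw [hsplit, ← Real.norm_eq_abs, ← Complex.norm_real, ← norm_mul]
    exact norm_sub_le _ _
  have hyoung : ∀ y d : ℝ, (y + d) ^ 2 ≤ (1 + η ^ 2) * y ^ 2 + (1 + 1 / η ^ 2) * d ^ 2 := by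
    intro y d
    have hexpand : (η * y - d / η) ^ 2 = η ^ 2 * y ^ 2 - 2 * y * d + 1 / η ^ 2 * d ^ 2 := by
      field_simp
      ring
    linarith [sq_nonneg (η * y - d / η), add_sq y d]
  calc ‖z - (A : ℂ) * w‖ ^ 2 ≤ (‖z - (B : ℂ) * w‖ + |A - B| * ‖w‖) ^ 2 := by gcongr
    _ ≤ _ := by simpa only [mul_pow, sq_abs] using hyoung ‖z - (B : ℂ) * w‖ (|A - B| * ‖w‖)

lemma exp_two_mul_le {t t₀ ε₀ C₁ : ℝ} (hε : 0 < ε₀) (hε1 : ε₀ ≤ 1) (hC₁ : 2 ≤ C₁)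
    (ht : t < t₀ + ε₀ / 2) : rexp (2 * t) ≤ (1 + ε₀ * C₁) * rexp (2 * t₀) := by
  calc rexp (2 * t) ≤ rexp (ε₀ + 2 * t₀) := exp_le_exp.2 (by linarith)
    _ = rexp ε₀ * rexp (2 * t₀) := exp_add _ _
    _ ≤ (1 + ε₀ * C₁) * rexp (2 * t₀) := by
        gcongr
        nlinarith [exp_le_one_add_two_mul hε.le hε1]

lemma IsTestOn.integrable_form {Ω : Set (ℝ × ℝ)} {w : ℝ × ℝ → ℂ} (hw : IsTestOn Ω w)
    {W A : ℝ × ℝ → ℝ} (hW : Continuous W) (hA : Continuous A) :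
    Integrable fun p => W p * ‖-Complex.I * dX w p - (A p : ℂ) * w p‖ ^ 2 + ‖dY w p‖ ^ 2
      + (1 / 4) * ‖w p‖ ^ 2 := by
  have hw₀ := hw.continuous
  have hwX := hw.continuous_dX
  have hwY := hw.continuous_dY
  exact hw.integrable_of_eq_zero (by fun_prop) fun q h₀ hX hY => by simp [h₀, hX, hY]

lemma IsTestOn.integrable_norm_sq {Ω : Set (ℝ × ℝ)} {w : ℝ × ℝ → ℂ} (hw : IsTestOn Ω w) :
    Integrable fun p => ‖w p‖ ^ 2 :=
  hw.integrable_of_eq_zero (hw.continuous.norm.pow 2) fun q h₀ _ _ => by simp [h₀]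

lemma continuous_Azero (t₀ b₀ : ℝ) : Continuous (Azero t₀ b₀) := by
  unfold Azero
  fun_prop

variable {A₁ A₂ : ℝ × ℝ → ℝ} {C₀ a₀ a ε₀ x₀ t₀ C₁ η : ℝ}

lemma exp_mul_Atil_sub_Azero_sq_le (hB : ContDiffOn ℝ 1 (fieldB A₁ A₂) UHP) (hC₀ : 0 < C₀)
    (hH : H2 C₀ A₁ A₂) (ha : 0 < a) (ha₀ : a ≤ a₀) (hε : 0 < ε₀) (hε2 : ε₀ ≤ 1 / 2)
    (hk : C₀ * (a₀ + 1) * ε₀ ≤ 1) (hβ : 1 < intenB A₁ A₂ (x₀, rexp t₀))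
    (hC₁ : 2 * (8 * (C₀ * (a₀ + 1)) + 1) ^ 2 ≤ C₁) (hη : 0 < η) (hη1 : η ≤ 1) {q : ℝ × ℝ}
    (hq : q ∈ Krect x₀ t₀ a ε₀) :
    rexp (2 * t₀) * ((1 + 1 / η ^ 2) *
        (Atil A₁ A₂ t₀ q - Azero t₀ (fieldB A₁ A₂ (x₀, rexp t₀)) q) ^ 2) ≤
      ε₀ ^ 4 / η ^ 2 * C₁ * intenB A₁ A₂ (x₀, rexp t₀) ^ 2 := by
  have hdiff := abs_Atil_sub_Azero_le hB hC₀ hH ha ha₀ hε hε2 hk hβ hq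
  set β := intenB A₁ A₂ (x₀, rexp t₀)
  set c := 8 * (C₀ * (a₀ + 1)) + 1
  have hη' : 1 + 1 / η ^ 2 ≤ 2 / η ^ 2 := by
    have : 1 ≤ 1 / η ^ 2 := by rw [one_le_div (by positivity)]; exact pow_le_one₀ hη.le hη1
    calc 1 + 1 / η ^ 2 ≤ 1 / η ^ 2 + 1 / η ^ 2 := by gcongr
      _ = 2 / η ^ 2 := by ring
  have hexp : rexp (2 * t₀) * rexp (-t₀) ^ 2 = 1 := by
    rw [← exp_nat_mul, ← exp_add]; simp
  rw [← sq_abs (Atil A₁ A₂ t₀ q - _)]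
  calc _ ≤ rexp (2 * t₀) * (2 / η ^ 2 * (c * ε₀ ^ 2 * β * rexp (-t₀)) ^ 2) := by gcongr
    _ = (rexp (2 * t₀) * rexp (-t₀) ^ 2) * (ε₀ ^ 4 / η ^ 2 * (2 * c ^ 2) * β ^ 2) := by ring
    _ ≤ _ := by rw [hexp, one_mul]; gcongr

lemma exp_mul_norm_sub_Atil_mul_sq_le (hB : ContDiffOn ℝ 1 (fieldB A₁ A₂) UHP) (hC₀ : 0 < C₀)
    (hH : H2 C₀ A₁ A₂) (ha : 0 < a) (ha₀ : a ≤ a₀) (hε : 0 < ε₀) (hε2 : ε₀ ≤ 1 / 2)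
    (hk : C₀ * (a₀ + 1) * ε₀ ≤ 1) (hβ : 1 < intenB A₁ A₂ (x₀, rexp t₀))
    (hC₁ : 2 * (8 * (C₀ * (a₀ + 1)) + 1) ^ 2 ≤ C₁) (hη : 0 < η) (hη1 : η ≤ 1) {q : ℝ × ℝ}
    (hq : q ∈ Krect x₀ t₀ a ε₀) (z v : ℂ) :
    rexp (2 * t₀) * ‖z - Atil A₁ A₂ t₀ q * v‖ ^ 2 ≤
      (1 + η ^ 2) * (rexp (2 * t₀) *
          ‖z - Azero t₀ (fieldB A₁ A₂ (x₀, rexp t₀)) q * v‖ ^ 2) +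
        ε₀ ^ 4 / η ^ 2 * C₁ * intenB A₁ A₂ (x₀, rexp t₀) ^ 2 * ‖v‖ ^ 2 := by
  have hpot := exp_mul_Atil_sub_Azero_sq_le hB hC₀ hH ha ha₀ hε hε2 hk hβ hC₁ hη hη1 hq
  set b₀ := fieldB A₁ A₂ (x₀, rexp t₀)
  set Z := ‖z - (Azero t₀ b₀ q : ℂ) * v‖ ^ 2
  calc _ ≤ rexp (2 * t₀) * ((1 + η ^ 2) * Z + (1 + 1 / η ^ 2) *
        ((Atil A₁ A₂ t₀ q - Azero t₀ b₀ q) ^ 2 * ‖v‖ ^ 2)) := by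
        gcongr
        exact norm_sub_mul_sq_le z v _ _ hη
    _ = (1 + η ^ 2) * (rexp (2 * t₀) * Z) + rexp (2 * t₀) * ((1 + 1 / η ^ 2) *
        (Atil A₁ A₂ t₀ q - Azero t₀ b₀ q) ^ 2) * ‖v‖ ^ 2 := by ring
    _ ≤ _ := add_le_add_right (mul_le_mul_of_nonneg_right hpot (sq_nonneg _)) _

lemma qhatK_le (hB : ContDiffOn ℝ 1 (fieldB A₁ A₂) UHP) (hC₀ : 0 < C₀)
    (hH : H2 C₀ A₁ A₂) (ha : 0 < a) (ha₀ : a ≤ a₀) (hε : 0 < ε₀) (hε2 : ε₀ ≤ 1 / 2)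
    (hk : C₀ * (a₀ + 1) * ε₀ ≤ 1) (hβ : 1 < intenB A₁ A₂ (x₀, rexp t₀))
    (hC₁ : 2 * (8 * (C₀ * (a₀ + 1)) + 1) ^ 2 ≤ C₁) (hη : 0 < η) (hη1 : η ≤ 1)
    {w : ℝ × ℝ → ℂ} (hw : IsTestOn (Krect x₀ t₀ a ε₀) w) :
    qhatK A₁ A₂ x₀ t₀ a ε₀ w ≤
      (1 + ε₀ * C₁) * ((1 + η ^ 2) * qK0 x₀ t₀ a ε₀ (fieldB A₁ A₂ (x₀, rexp t₀)) w +
        ε₀ ^ 4 / η ^ 2 * C₁ * intenB A₁ A₂ (x₀, rexp t₀) ^ 2 *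
          ∫ q in Krect x₀ t₀ a ε₀, ‖w q‖ ^ 2) := by
  have hC₁2 : 2 ≤ C₁ := by nlinarith [mul_pos hC₀ (by linarith : 0 < a₀ + 1)]
  have hAtil := hw.integrable_form (W := fun p => rexp (2 * p.2)) (by fun_prop)
    (continuous_Atil hB.continuousOn t₀)
  set b₀ := fieldB A₁ A₂ (x₀, rexp t₀)
  set β := intenB A₁ A₂ (x₀, rexp t₀)
  have hAzero := (hw.integrable_form (W := fun _ => rexp (2 * t₀)) (by fun_prop)
    (continuous_Azero t₀ b₀)).integrableOn (s := Krect x₀ t₀ a ε₀)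
  have hnorm := hw.integrable_norm_sq.integrableOn (s := Krect x₀ t₀ a ε₀)
  unfold qhatK qK0
  rw [← integral_const_mul, ← integral_const_mul, ← integral_add (hAzero.const_mul _)
    (hnorm.const_mul _), ← integral_const_mul]
  refine setIntegral_mono_on hAtil.integrableOn
    (((hAzero.const_mul _).add (hnorm.const_mul _)).const_mul _)
    (measurableSet_Ioo.prod measurableSet_Ioo) fun q hq => ?_
  have hmag := exp_mul_norm_sub_Atil_mul_sq_le hB hC₀ hH ha ha₀ hε hε2 hk hβ hC₁ hη hη1 hq
    (-Complex.I * dX w q) (w q)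
  set X := ‖-Complex.I * dX w q - (Atil A₁ A₂ t₀ q : ℂ) * w q‖ ^ 2
  have hone : 1 ≤ 1 + ε₀ * C₁ := by nlinarith
  have hrest : 0 ≤ ‖dY w q‖ ^ 2 + 1 / 4 * ‖w q‖ ^ 2 := by positivity
  calc rexp (2 * q.2) * X + ‖dY w q‖ ^ 2 + 1 / 4 * ‖w q‖ ^ 2
      ≤ (1 + ε₀ * C₁) * rexp (2 * t₀) * X +
          (1 + ε₀ * C₁) * ((1 + η ^ 2) * (‖dY w q‖ ^ 2 + 1 / 4 * ‖w q‖ ^ 2)) := by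
        rw [add_assoc]
        gcongr
        · exact exp_two_mul_le hε (by linarith) hC₁2 hq.2.2
        · exact (le_mul_of_one_le_left hrest (le_add_of_nonneg_right (sq_nonneg η))).trans
            (le_mul_of_one_le_left (by positivity) hone)
    _ ≤ _ := by
        rw [mul_assoc (1 + ε₀ * C₁), ← mul_add]
        exact mul_le_mul_of_nonneg_left (by linarith) (by positivity)

end FormComparison

section CellPoincare

lemma sq_integral_le {a b : ℝ} (hab : a < b) {f : ℝ → ℝ} (hf : Continuous f) :
    (∫ x in a..b, f x) ^ 2 ≤ (b - a) * ∫ x in a..b, f x ^ 2 := by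
  set I := ∫ x in a..b, f x
  have hba : 0 < b - a := sub_pos.2 hab
  let c := I / (b - a)
  have hc : c * (b - a) = I := div_mul_cancel₀ _ hba.ne'
  have hexpand : ∫ x in a..b, (f x - c) ^ 2 =
      (∫ x in a..b, f x ^ 2) - 2 * c * I + (b - a) * c ^ 2 := by
    have hsq : ∀ x, (f x - c) ^ 2 = f x ^ 2 - 2 * c * f x + c ^ 2 := fun x => by ring
    simp_rw [hsq]
    rw [intervalIntegral.integral_add, intervalIntegral.integral_sub,
      intervalIntegral.integral_const_mul, intervalIntegral.integral_const, smul_eq_mul]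
    all_goals exact Continuous.intervalIntegrable (by fun_prop) _ _
  have hnonneg : 0 ≤ ∫ x in a..b, (f x - c) ^ 2 :=
    intervalIntegral.integral_nonneg hab.le fun x _ => sq_nonneg _
  nlinarith

lemma norm_sub_sq_le_integral_norm_deriv_sq {g g' : ℝ → ℂ} {a b x s : ℝ} (hab : a < b)
    (hg : ∀ r, HasDerivAt g (g' r) r) (hg' : Continuous g') (hx : x ∈ Set.Icc a b)
    (hs : s ∈ Set.Icc a b) : ‖g x - g s‖ ^ 2 ≤ (b - a) * ∫ r in a..b, ‖g' r‖ ^ 2 := by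
  have hsub : Set.uIoc s x ⊆ Set.uIoc a b := by
    rw [Set.uIoc_of_le hab.le]
    exact Set.Ioc_subset_Ioc (le_inf hs.1 hx.1) (sup_le hs.2 hx.2)
  have hle : ‖g x - g s‖ ≤ |∫ r in a..b, ‖g' r‖| := by
    rw [← intervalIntegral.integral_eq_sub_of_hasDerivAt (fun r _ => hg r)
      (hg'.intervalIntegrable _ _)]
    exact intervalIntegral.norm_integral_le_abs_integral_norm.trans
      (intervalIntegral.abs_integral_mono_interval hsub
        (Eventually.of_forall fun r => norm_nonneg _) (hg'.norm.intervalIntegrable _ _))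
  calc ‖g x - g s‖ ^ 2 ≤ |∫ r in a..b, ‖g' r‖| ^ 2 := by gcongr
    _ = (∫ r in a..b, ‖g' r‖) ^ 2 := sq_abs _
    _ ≤ _ := sq_integral_le hab hg'.norm

lemma mul_norm_sq_le_integral_norm_sub_sq {v : ℝ → ℂ} (hv : Continuous v) {a b : ℝ} (hab : a ≤ b)
    (h0 : ∫ s in a..b, v s = 0) (z : ℂ) : (b - a) * ‖z‖ ^ 2 ≤ ∫ s in a..b, ‖z - v s‖ ^ 2 := by
  have hcross : ∫ s in a..b, inner ℝ z (v s) = 0 := by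
    have := (innerSL ℝ z).intervalIntegral_comp_comm (μ := volume) (hv.intervalIntegrable a b)
    rwa [h0, map_zero] at this
  have hinner : Continuous fun s => inner ℝ z (v s) := continuous_const.inner hv
  calc (b - a) * ‖z‖ ^ 2 = ∫ s in a..b, (‖z‖ ^ 2 - 2 * inner ℝ z (v s)) := by
        rw [intervalIntegral.integral_sub (by simp) ((hinner.const_mul 2).intervalIntegrable _ _),
          intervalIntegral.integral_const_mul, hcross]
        simp
    _ ≤ ∫ s in a..b, ‖z - v s‖ ^ 2 := by
        refine intervalIntegral.integral_mono_on hab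
          (Continuous.intervalIntegrable (by fun_prop) _ _)
          (Continuous.intervalIntegrable (by fun_prop) _ _) fun s _ => ?_
        rw [norm_sub_sq_real]
        linarith [sq_nonneg ‖v s‖]

/-- The iterated integral of `F` over the rectangle `[a, b] × [c, d]`; an iterated interval
integral is additive in its endpoints, which is what subdividing the rectangle into cells needs. -/
def rectIntegral (F : ℝ × ℝ → ℝ) (a b c d : ℝ) : ℝ := ∫ x in a..b, ∫ t in c..d, F (x, t)

variable {F : ℝ × ℝ → ℝ} {a b c d : ℝ}

lemma continuous_integral_snd (hF : Continuous F) (c d : ℝ) :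
    Continuous fun x => ∫ t in c..d, F (x, t) :=
  intervalIntegral.continuous_parametric_intervalIntegral_of_continuous'
    (f := fun x t => F (x, t)) hF c d

lemma continuous_integral_fst (hF : Continuous F) (a b : ℝ) :
    Continuous fun t => ∫ x in a..b, F (x, t) :=
  continuous_integral_snd (hF.comp continuous_swap) a b

lemma rectIntegral_swap (hF : Continuous F) (a b c d : ℝ) :
    rectIntegral F a b c d = ∫ t in c..d, ∫ x in a..b, F (x, t) := by
  refine intervalIntegral_intervalIntegral_swap ?_
  exact (hF.continuousOn.integrableOn_compact (isCompact_uIcc.prod isCompact_uIcc)).mono_set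
    (Set.prod_mono Set.uIoc_subset_uIcc Set.uIoc_subset_uIcc)

lemma sum_rectIntegral (hF : Continuous F) (X T : ℕ → ℝ) (m : ℕ) :
    ∑ i ∈ Finset.range m, ∑ j ∈ Finset.range m, rectIntegral F (X i) (X (i + 1)) (T j) (T (j + 1)) =
      rectIntegral F (X 0) (X m) (T 0) (T m) := by
  have hcont := continuous_integral_snd hF
  have hcolumn : ∀ i, ∑ j ∈ Finset.range m, rectIntegral F (X i) (X (i + 1)) (T j) (T (j + 1)) =
      rectIntegral F (X i) (X (i + 1)) (T 0) (T m) := by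
    intro i
    unfold rectIntegral
    rw [← intervalIntegral.integral_finsetSum fun j _ => (hcont _ _).intervalIntegrable _ _]
    congr 1; ext x
    exact intervalIntegral.sum_integral_adjacent_intervals
      fun k _ => Continuous.intervalIntegrable (by fun_prop) _ _
  simp_rw [hcolumn]
  exact intervalIntegral.sum_integral_adjacent_intervals
    fun k _ => (hcont _ _).intervalIntegrable _ _

lemma setIntegral_Ioo_prod_Ioo (hab : a ≤ b) (hcd : c ≤ d) (hF : Continuous F) :
    ∫ p in Set.Ioo a b ×ˢ Set.Ioo c d, F p = rectIntegral F a b c d := by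
  have hint : IntegrableOn F (Set.Ioo a b ×ˢ Set.Ioo c d) (volume.prod volume) :=
    (hF.continuousOn.integrableOn_compact (isCompact_Icc.prod isCompact_Icc)).mono_set
      (Set.prod_mono Set.Ioo_subset_Icc_self Set.Ioo_subset_Icc_self)
  rw [Measure.volume_eq_prod, setIntegral_prod _ hint]
  simp only [rectIntegral, intervalIntegral.integral_of_le hab, intervalIntegral.integral_of_le hcd,
    integral_Ioc_eq_integral_Ioo]

variable {u : ℝ × ℝ → ℂ}

lemma norm_sq_le_of_integral_edge_eq_zero (hu : ContDiff ℝ 1 u) (hab : a < b) (hcd : c < d)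
    (h0 : ∫ x in a..b, u (x, c) = 0) {x t : ℝ} (hx : x ∈ Set.Icc a b) (ht : t ∈ Set.Icc c d) :
    (b - a) * ‖u (x, t)‖ ^ 2 ≤ 2 * (b - a) ^ 2 * (∫ r in a..b, ‖dX u (r, t)‖ ^ 2) +
      2 * (d - c) * rectIntegral (fun q => ‖dY u q‖ ^ 2) a b c d := by
  have hcu := hu.continuous
  have hcX : Continuous (dX u) := (hu.continuous_fderiv (by simp)).clm_apply continuous_const
  have hcY : Continuous (dY u) := (hu.continuous_fderiv (by simp)).clm_apply continuous_const
  have hdiff : Differentiable ℝ u := hu.differentiable (by simp)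
  have hcI := continuous_integral_snd (F := fun q => ‖dY u q‖ ^ 2) (by fun_prop) c d
  have hpath : ∀ s ∈ Set.Icc a b, ‖u (x, t) - u (s, c)‖ ^ 2 ≤
      2 * (b - a) * (∫ r in a..b, ‖dX u (r, t)‖ ^ 2) +
        2 * (d - c) * ∫ r in c..d, ‖dY u (s, r)‖ ^ 2 := by
    intro s hs
    have hhor := norm_sub_sq_le_integral_norm_deriv_sq (g := fun r => u (r, t)) hab
      (fun r => hasDerivAt_dX hdiff (r, t)) (by fun_prop) hx hs
    have hver := norm_sub_sq_le_integral_norm_deriv_sq (g := fun r => u (s, r)) hcd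
      (fun r => hasDerivAt_dY hdiff (s, r)) (by fun_prop) ht (Set.left_mem_Icc.2 hcd.le)
    have htri := norm_add_le (u (x, t) - u (s, t)) (u (s, t) - u (s, c))
    rw [sub_add_sub_cancel] at htri
    calc _ ≤ (‖u (x, t) - u (s, t)‖ + ‖u (s, t) - u (s, c)‖) ^ 2 := by gcongr
      _ ≤ 2 * (‖u (x, t) - u (s, t)‖ ^ 2 + ‖u (s, t) - u (s, c)‖ ^ 2) := add_sq_le
      _ ≤ _ := by linarith
  refine (mul_norm_sq_le_integral_norm_sub_sq (by fun_prop) hab.le h0 (u (x, t))).trans ?_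
  refine (intervalIntegral.integral_mono_on hab.le (Continuous.intervalIntegrable (by fun_prop) _ _)
    (Continuous.intervalIntegrable (by fun_prop) _ _) hpath).trans_eq ?_
  rw [intervalIntegral.integral_add (by simp) ((hcI.const_mul _).intervalIntegrable _ _),
    intervalIntegral.integral_const, intervalIntegral.integral_const_mul, smul_eq_mul, rectIntegral]
  ring

lemma rectIntegral_norm_sq_le_of_integral_edge_eq_zero (hu : ContDiff ℝ 1 u) (hab : a < b)
    (hcd : c < d) (h0 : ∫ x in a..b, u (x, c) = 0) :
    rectIntegral (fun q => ‖u q‖ ^ 2) a b c d ≤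
      2 * (b - a) ^ 2 * rectIntegral (fun q => ‖dX u q‖ ^ 2) a b c d +
        2 * (d - c) ^ 2 * rectIntegral (fun q => ‖dY u q‖ ^ 2) a b c d := by
  have hcu := hu.continuous
  have hcX : Continuous (dX u) := (hu.continuous_fderiv (by simp)).clm_apply continuous_const
  have hcI := continuous_integral_fst (F := fun q => ‖dX u q‖ ^ 2) (by fun_prop) a b
  set J := rectIntegral (fun q => ‖dY u q‖ ^ 2) a b c d
  let H : ℝ → ℝ := fun t => 2 * (b - a) ^ 2 * (∫ r in a..b, ‖dX u (r, t)‖ ^ 2) + 2 * (d - c) * J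
  have hH : ∫ t in c..d, H t = 2 * (b - a) ^ 2 * rectIntegral (fun q => ‖dX u q‖ ^ 2) a b c d +
      2 * (d - c) ^ 2 * J := by
    rw [intervalIntegral.integral_add ((hcI.const_mul _).intervalIntegrable _ _) (by simp),
      intervalIntegral.integral_const_mul, intervalIntegral.integral_const, smul_eq_mul,
      rectIntegral_swap (by fun_prop)]
    ring
  have hrow : ∀ x ∈ Set.Icc a b, (b - a) * ∫ t in c..d, ‖u (x, t)‖ ^ 2 ≤ ∫ t in c..d, H t := by
    intro x hx
    rw [← intervalIntegral.integral_const_mul]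
    exact intervalIntegral.integral_mono_on hcd.le
      (Continuous.intervalIntegrable (by fun_prop) _ _)
      (Continuous.intervalIntegrable (by fun_prop) _ _)
      fun t ht => norm_sq_le_of_integral_edge_eq_zero hu hab hcd h0 hx ht
  have hmean : (b - a) * rectIntegral (fun q => ‖u q‖ ^ 2) a b c d ≤
      (b - a) * ∫ t in c..d, H t := by
    rw [rectIntegral, ← intervalIntegral.integral_const_mul, ← smul_eq_mul (b - a),
      ← intervalIntegral.integral_const]
    exact intervalIntegral.integral_mono_on hab.le (((continuous_integral_snd
      (F := fun q => ‖u q‖ ^ 2) (by fun_prop) c d).const_mul _).intervalIntegrable _ _)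
      (by simp) hrow
  exact (le_of_mul_le_mul_left hmean (sub_pos.2 hab)).trans_eq hH

lemma rectIntegral_norm_sq_le_of_integral_edges_eq_zero (hu : ContDiff ℝ 1 u) (x₁ t₁ : ℝ) {h k : ℝ}
    (hh : 0 < h) (hk : 0 < k) {m : ℕ}
    (h0 : ∀ i j : Fin m, ∫ x in x₁ + (i : ℕ) * h..x₁ + ((i : ℕ) + 1 : ℕ) * h,
      u (x, t₁ + (j : ℕ) * k) = 0) :
    rectIntegral (fun q => ‖u q‖ ^ 2) x₁ (x₁ + m * h) t₁ (t₁ + m * k) ≤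
      2 * h ^ 2 * rectIntegral (fun q => ‖dX u q‖ ^ 2) x₁ (x₁ + m * h) t₁ (t₁ + m * k) +
      2 * k ^ 2 * rectIntegral (fun q => ‖dY u q‖ ^ 2) x₁ (x₁ + m * h) t₁ (t₁ + m * k) := by
  have hcu := hu.continuous
  have hcX : Continuous (dX u) := (hu.continuous_fderiv (by simp)).clm_apply continuous_const
  have hcY : Continuous (dY u) := (hu.continuous_fderiv (by simp)).clm_apply continuous_const
  let X : ℕ → ℝ := fun i => x₁ + i * h
  let T : ℕ → ℝ := fun j => t₁ + j * k
  have hcells : ∀ F : ℝ × ℝ → ℝ, Continuous F → rectIntegral F x₁ (x₁ + m * h) t₁ (t₁ + m * k) =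
      ∑ i ∈ Finset.range m, ∑ j ∈ Finset.range m,
        rectIntegral F (X i) (X (i + 1)) (T j) (T (j + 1)) := by
    intro F hF
    rw [sum_rectIntegral hF X T m]
    simp [X, T]
  rw [hcells _ (by fun_prop), hcells _ (by fun_prop), hcells _ (by fun_prop)]
  simp only [Finset.mul_sum, ← Finset.sum_add_distrib]
  refine Finset.sum_le_sum fun i hi => Finset.sum_le_sum fun j hj => ?_
  have hX : X (i + 1) - X i = h := by simp only [X]; push_cast; ring
  have hT : T (j + 1) - T j = k := by simp only [T]; push_cast; ring
  simpa only [hX, hT] using rectIntegral_norm_sq_le_of_integral_edge_eq_zero hu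
    (sub_pos.1 (hh.trans_eq hX.symm)) (sub_pos.1 (hk.trans_eq hT.symm))
    (h0 ⟨i, Finset.mem_range.1 hi⟩ ⟨j, Finset.mem_range.1 hj⟩)

end CellPoincare

section TestSpace

/-- The space `C₀^∞(Ω; ℂ)` of test functions on `Ω`, as a complex vector space. -/
def testFunctions (Ω : Set (ℝ × ℝ)) : Submodule ℂ (ℝ × ℝ → ℂ) where
  carrier := {w | IsTestOn Ω w}
  add_mem' := by
    rintro u v ⟨hu, hu', hu''⟩ ⟨hv, hv', hv''⟩
    exact ⟨hu.add hv, hu'.add hv', (tsupport_add u v).trans (Set.union_subset hu'' hv'')⟩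
  zero_mem' := ⟨contDiff_const, HasCompactSupport.zero, by simp⟩
  smul_mem' := by
    rintro c u ⟨hu, hu', hu''⟩
    exact ⟨contDiff_const.smul hu, hu'.smul_left (f := fun _ => c),
      (closure_mono (Function.support_const_smul_subset c u)).trans hu''⟩

/-- The integrals of a test function over the bottom edges of the `m²` cells of size `h × k` of a
grid with lower left corner `(x₁, t₁)`. -/
def edgeIntegrals (Ω : Set (ℝ × ℝ)) (x₁ t₁ h k : ℝ) (m : ℕ) :
    testFunctions Ω →ₗ[ℂ] (Fin m × Fin m → ℂ) where
  toFun u ij := ∫ x in x₁ + (ij.1 : ℕ) * h..x₁ + ((ij.1 : ℕ) + 1 : ℕ) * h,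
    u.1 (x, t₁ + (ij.2 : ℕ) * k)
  map_add' u v := by
    ext ij
    have hu := u.2.continuous
    have hv := v.2.continuous
    exact intervalIntegral.integral_add (Continuous.intervalIntegrable (by fun_prop) _ _)
      (Continuous.intervalIntegrable (by fun_prop) _ _)
  map_smul' z u := by
    ext ij
    exact intervalIntegral.integral_const_mul z _

lemma exists_linearMap_integral_norm_sq_le {a b c d : ℝ} (hab : a < b) (hcd : c < d) {δ : ℝ}
    (hδ : 0 < δ) :
    ∃ (m : ℕ) (ℓ : testFunctions (Set.Ioo a b ×ˢ Set.Ioo c d) →ₗ[ℂ] (Fin m × Fin m → ℂ)),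
      ∀ u, ℓ u = 0 → ∫ p in Set.Ioo a b ×ˢ Set.Ioo c d, ‖u.1 p‖ ^ 2 ≤
        δ * ((∫ p in Set.Ioo a b ×ˢ Set.Ioo c d, ‖dX u.1 p‖ ^ 2) +
          ∫ p in Set.Ioo a b ×ˢ Set.Ioo c d, ‖dY u.1 p‖ ^ 2) := by
  have hba := sub_pos.2 hab
  have hdc := sub_pos.2 hcd
  obtain ⟨m, hm⟩ := exists_nat_gt (max 1 (max (2 * (b - a) ^ 2 / δ) (2 * (d - c) ^ 2 / δ)))
  obtain ⟨hm1, hmX, hmT⟩ : (1 : ℝ) < m ∧ 2 * (b - a) ^ 2 / δ < m ∧ 2 * (d - c) ^ 2 / δ < m := by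
    simpa only [max_lt_iff] using hm
  have hm0 : (0 : ℝ) < m := one_pos.trans hm1
  have hsmall : ∀ r : ℝ, 2 * r ^ 2 / δ < m → 2 * (r / m) ^ 2 ≤ δ := by
    intro r hr
    rw [div_lt_iff₀ hδ] at hr
    rw [div_pow, mul_div_assoc', div_le_iff₀ (by positivity)]
    nlinarith [mul_pos hm0 hδ]
  refine ⟨m, edgeIntegrals _ a c ((b - a) / m) ((d - c) / m) m, fun u hu0 => ?_⟩
  have hu := u.2.continuous
  have huX := u.2.continuous_dX
  have huY := u.2.continuous_dY
  rw [setIntegral_Ioo_prod_Ioo hab.le hcd.le (by fun_prop),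
    setIntegral_Ioo_prod_Ioo hab.le hcd.le (by fun_prop),
    setIntegral_Ioo_prod_Ioo hab.le hcd.le (by fun_prop)]
  have hpoincare := rectIntegral_norm_sq_le_of_integral_edges_eq_zero (u.2.1.of_le (by simp)) a c
    (div_pos hba hm0) (div_pos hdc hm0) fun i j => congrFun hu0 (i, j)
  rw [mul_div_cancel₀ _ hm0.ne', mul_div_cancel₀ _ hm0.ne', add_sub_cancel, add_sub_cancel]
    at hpoincare
  have hnonneg : ∀ G : ℝ × ℝ → ℂ, 0 ≤ rectIntegral (fun q => ‖G q‖ ^ 2) a b c d := fun G =>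
    intervalIntegral.integral_nonneg hab.le fun x _ =>
      intervalIntegral.integral_nonneg hcd.le fun t _ => sq_nonneg _
  rw [mul_add]
  exact hpoincare.trans (add_le_add
    (mul_le_mul_of_nonneg_right (hsmall _ hmX) (hnonneg _))
    (mul_le_mul_of_nonneg_right (hsmall _ hmT) (hnonneg _)))

end TestSpace

section NegativeIndex

variable {E F : Type*} [AddCommGroup E] [Module ℂ E] [AddCommGroup F] [Module ℂ F]
  {B : E →ₗ⋆[ℂ] E →ₗ[ℂ] ℂ} {W : Submodule ℂ E}

/-- The sesquilinear form `B` is negative definite on the subspace `W`. -/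
def NegativeOn (B : E →ₗ⋆[ℂ] E →ₗ[ℂ] ℂ) (W : Submodule ℂ E) : Prop :=
  ∀ v ∈ W, v ≠ 0 → (B v v).re < 0

/-- The largest dimension of a subspace on which `B` is negative definite. The supremum is taken in
`ℕ`, so the value is meaningful only if these dimensions are bounded. -/
def negIndex (B : E →ₗ⋆[ℂ] E →ₗ[ℂ] ℂ) : ℕ :=
  sSup {n | ∃ W : Submodule ℂ E, Module.finrank ℂ W = n ∧ NegativeOn B W}

lemma NegativeOn.injective_domRestrict (hW : NegativeOn B W) {ℓ : E →ₗ[ℂ] F}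
    (hℓ : ∀ u, ℓ u = 0 → 0 ≤ (B u u).re) : Function.Injective (ℓ.domRestrict W) := by
  rw [injective_iff_map_eq_zero]
  intro w hw
  by_contra hne
  exact (hW w w.2 (by simpa using hne)).not_ge (hℓ w hw)

lemma re_apply_add_smul_self (hB : B.IsSymm) {u v : E} (h : B v u = 0) (c : ℂ) :
    (B (v + c • u) (v + c • u)).re = (B v v).re + ‖c‖ ^ 2 * (B u u).re := by
  have h' : B u v = 0 := hB.eq_iff.1 h
  simp only [map_add, LinearMap.map_smulₛₗ, LinearMap.add_apply, LinearMap.smul_apply, smul_eq_mul,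
    h, h', mul_zero, add_zero, zero_add, Complex.add_re, RingHom.id_apply]
  rw [← mul_assoc, Complex.mul_conj', ← Complex.ofReal_pow, Complex.re_ofReal_mul]

lemma NegativeOn.sup_span_singleton (hB : B.IsSymm) (hW : NegativeOn B W) {u : E}
    (hu : ∀ v ∈ W, B v u = 0) (hneg : (B u u).re < 0) :
    NegativeOn B (W ⊔ Submodule.span ℂ {u}) := by
  intro w hw hw0
  obtain ⟨v, hv, z, hz, rfl⟩ := Submodule.mem_sup.1 hw
  obtain ⟨c, rfl⟩ := Submodule.mem_span_singleton.1 hz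
  rw [re_apply_add_smul_self hB (hu v hv)]
  by_cases hv0 : v = 0
  · have hc : c ≠ 0 := by rintro rfl; simp [hv0] at hw0
    simpa [hv0] using mul_neg_of_pos_of_neg (by positivity) hneg
  · exact add_neg_of_neg_of_nonpos (hW v hv hv0)
      (mul_nonpos_of_nonneg_of_nonpos (sq_nonneg _) hneg.le)

variable [FiniteDimensional ℂ F]

lemma finrank_le_negIndex {ℓ : E →ₗ[ℂ] F} (hℓ : ∀ u, ℓ u = 0 → 0 ≤ (B u u).re)
    (hW : NegativeOn B W) : Module.finrank ℂ W ≤ negIndex B := by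
  refine le_csSup ⟨Module.finrank ℂ F, ?_⟩ ⟨W, rfl, hW⟩
  rintro n ⟨W', rfl, hW'⟩
  exact LinearMap.finrank_le_finrank_of_injective (hW'.injective_domRestrict hℓ)

lemma exists_finrank_eq_negIndex {ℓ : E →ₗ[ℂ] F} (hℓ : ∀ u, ℓ u = 0 → 0 ≤ (B u u).re) :
    ∃ W : Submodule ℂ E, Module.finrank ℂ W = negIndex B ∧ NegativeOn B W := by
  refine Nat.sSup_mem (s := {n | ∃ W : Submodule ℂ E, Module.finrank ℂ W = n ∧ NegativeOn B W})
    ⟨0, ⊥, finrank_bot ℂ E, fun v hv hv0 => absurd ((Submodule.mem_bot ℂ).1 hv) hv0⟩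
    ⟨negIndex B, ?_⟩
  rintro n ⟨W, rfl, hW⟩
  exact finrank_le_negIndex hℓ hW

-- A negative vector orthogonal to a maximal negative subspace would enlarge it, so the functionals
-- `B v` with `v` in a basis of that subspace do the job.
lemma exists_linearMap_nonneg_of_eq_zero (hB : B.IsSymm) {ℓ : E →ₗ[ℂ] F}
    (hℓ : ∀ u, ℓ u = 0 → 0 ≤ (B u u).re) :
    ∃ Φ : Fin (negIndex B) → (E →ₗ[ℂ] ℂ), ∀ u, (∀ i, Φ i u = 0) → 0 ≤ (B u u).re := by
  obtain ⟨W, hdim, hW⟩ := exists_finrank_eq_negIndex hℓ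
  have hfin : FiniteDimensional ℂ W := Module.Finite.of_injective _ (hW.injective_domRestrict hℓ)
  let e := Module.finBasisOfFinrankEq ℂ W hdim
  refine ⟨fun i => B (e i), fun u hu => ?_⟩
  by_contra! hneg
  have hWu : ∀ v ∈ W, B v u = 0 := by
    intro v hv
    have hzero : (B u).domRestrict W = 0 := e.ext fun i => hB.eq_iff.1 (hu i)
    exact hB.eq_iff.1 (LinearMap.congr_fun hzero ⟨v, hv⟩)
  have huW : u ∉ W := fun h => by simp [hWu u h] at hneg
  have hu0 : u ≠ 0 := fun h => huW (h ▸ W.zero_mem)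
  have hsup := Submodule.finrank_sup_add_finrank_inf_eq W (Submodule.span ℂ {u})
  rw [((Submodule.disjoint_span_singleton' hu0).2 huW).eq_bot, finrank_bot, hdim,
    finrank_span_singleton hu0] at hsup
  have hle := finrank_le_negIndex hℓ (hW.sup_span_singleton hB hWu hneg)
  lia

end NegativeIndex

section MagneticForm

open scoped ComplexConjugate

variable {Ω : Set (ℝ × ℝ)} {A : ℝ × ℝ → ℝ}

lemma dX_add {u v : ℝ × ℝ → ℂ} (hu : Differentiable ℝ u) (hv : Differentiable ℝ v) (q : ℝ × ℝ) :
    dX (u + v) q = dX u q + dX v q := by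
  rw [dX, fderiv_add (hu q) (hv q)]; rfl

lemma dY_add {u v : ℝ × ℝ → ℂ} (hu : Differentiable ℝ u) (hv : Differentiable ℝ v) (q : ℝ × ℝ) :
    dY (u + v) q = dY u q + dY v q := by
  rw [dY, fderiv_add (hu q) (hv q)]; rfl

lemma dX_smul {u : ℝ × ℝ → ℂ} (hu : Differentiable ℝ u) (c : ℂ) (q : ℝ × ℝ) :
    dX (c • u) q = c * dX u q := by
  rw [dX, fderiv_const_smul (hu q)]; rfl

lemma dY_smul {u : ℝ × ℝ → ℂ} (hu : Differentiable ℝ u) (c : ℂ) (q : ℝ × ℝ) :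
    dY (c • u) q = c * dY u q := by
  rw [dY, fderiv_const_smul (hu q)]; rfl

/-- The integrand of the polarised form `q - lam ‖·‖²`, where `q` is the magnetic form with
potential `A` and weight `e^{2t}`. It is conjugate linear in the first function. -/
def formDensity (A : ℝ × ℝ → ℝ) (lam : ℝ) (u v : ℝ × ℝ → ℂ) (q : ℝ × ℝ) : ℂ :=
  (rexp (2 * q.2) : ℂ) *
      (conj (-Complex.I * dX u q - (A q : ℂ) * u q) * (-Complex.I * dX v q - (A q : ℂ) * v q)) +
    conj (dY u q) * dY v q + (1 / 4 - lam : ℂ) * (conj (u q) * v q)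

lemma IsTestOn.integrable_formDensity {u v : ℝ × ℝ → ℂ} (hu : IsTestOn Ω u) (hv : IsTestOn Ω v)
    (hA : Continuous A) (lam : ℝ) : Integrable (formDensity A lam u v) := by
  have hcu := hu.continuous
  have hcuX := hu.continuous_dX
  have hcuY := hu.continuous_dY
  have hcv := hv.continuous
  have hcvX := hv.continuous_dX
  have hcvY := hv.continuous_dY
  refine hu.integrable_of_eq_zero (by unfold formDensity; fun_prop) fun q h hX hY => ?_
  simp [formDensity, h, hX, hY]

lemma conj_formDensity (A : ℝ × ℝ → ℝ) (lam : ℝ) (u v : ℝ × ℝ → ℂ) (q : ℝ × ℝ) :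
    conj (formDensity A lam u v q) = formDensity A lam v u q := by
  simp only [formDensity, map_add, map_mul, map_sub, map_neg, map_div₀, map_one, map_ofNat,
    Complex.conj_conj, Complex.conj_ofReal]
  ring

lemma formDensity_self (A : ℝ × ℝ → ℝ) (lam : ℝ) (u : ℝ × ℝ → ℂ) (q : ℝ × ℝ) :
    formDensity A lam u u q = ((rexp (2 * q.2) * ‖-Complex.I * dX u q - (A q : ℂ) * u q‖ ^ 2 +
      ‖dY u q‖ ^ 2 + (1 / 4) * ‖u q‖ ^ 2 - lam * ‖u q‖ ^ 2 : ℝ) : ℂ) := by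
  rw [formDensity, Complex.conj_mul', Complex.conj_mul', Complex.conj_mul']
  push_cast
  ring

/-- The sesquilinear form on `C₀^∞(Ω)` whose quadratic form is `q - lam ‖·‖²`, where `q` is the
magnetic form with potential `A` and weight `e^{2t}`. -/
def magneticForm (hA : Continuous A) (lam : ℝ) (Ω : Set (ℝ × ℝ)) :
    testFunctions Ω →ₗ⋆[ℂ] testFunctions Ω →ₗ[ℂ] ℂ :=
  have hdiff (u : testFunctions Ω) : Differentiable ℝ u.1 := u.2.1.differentiable (by simp)
  LinearMap.mk₂'ₛₗ _ _ (fun u v => ∫ q in Ω, formDensity A lam u.1 v.1 q)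
    (fun u u' v => by
      rw [← integral_add (u.2.integrable_formDensity v.2 hA lam).integrableOn
        (u'.2.integrable_formDensity v.2 hA lam).integrableOn]
      congr 1 with q
      simp only [formDensity, Submodule.coe_add, dX_add (hdiff u) (hdiff u'),
        dY_add (hdiff u) (hdiff u'), Pi.add_apply, map_add, map_sub, map_mul]
      ring)
    (fun c u v => by
      rw [smul_eq_mul, ← integral_const_mul]
      congr 1 with q
      simp only [formDensity, Submodule.coe_smul, dX_smul (hdiff u), dY_smul (hdiff u),
        Pi.smul_apply, smul_eq_mul, map_sub, map_mul]
      ring)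
    (fun u v v' => by
      rw [← integral_add (u.2.integrable_formDensity v.2 hA lam).integrableOn
        (u.2.integrable_formDensity v'.2 hA lam).integrableOn]
      congr 1 with q
      simp only [formDensity, Submodule.coe_add, dX_add (hdiff v) (hdiff v'),
        dY_add (hdiff v) (hdiff v'), Pi.add_apply]
      ring)
    (fun c u v => by
      rw [smul_eq_mul, RingHom.id_apply, ← integral_const_mul]
      congr 1 with q
      simp only [formDensity, Submodule.coe_smul, dX_smul (hdiff v), dY_smul (hdiff v),
        Pi.smul_apply, smul_eq_mul]
      ring)

lemma isSymm_magneticForm (hA : Continuous A) (lam : ℝ) (Ω : Set (ℝ × ℝ)) :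
    (magneticForm hA lam Ω).IsSymm := by
  refine LinearMap.isSymm_def.2 fun u v => ?_
  change conj (∫ q in Ω, formDensity A lam u.1 v.1 q) = ∫ q in Ω, formDensity A lam v.1 u.1 q
  simp_rw [← integral_conj, conj_formDensity]

lemma re_magneticForm_self (hA : Continuous A) (lam : ℝ) (u : testFunctions Ω) :
    (magneticForm hA lam Ω u u).re =
      (∫ q in Ω, (rexp (2 * q.2) * ‖-Complex.I * dX u.1 q - (A q : ℂ) * u.1 q‖ ^ 2 +
        ‖dY u.1 q‖ ^ 2 + (1 / 4) * ‖u.1 q‖ ^ 2)) - lam * ∫ q in Ω, ‖u.1 q‖ ^ 2 := by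
  change (∫ q in Ω, formDensity A lam u.1 u.1 q).re = _
  simp_rw [formDensity_self]
  rw [integral_complex_ofReal, Complex.ofReal_re, integral_sub
    (u.2.integrable_form (by fun_prop) hA).integrableOn
    (u.2.integrable_norm_sq.integrableOn.const_mul _), integral_const_mul]

end MagneticForm

section CountingFunctionals

variable {A₁ A₂ : ℝ × ℝ → ℝ} {t₀ : ℝ}

lemma NKA_eq_negIndex (hA : Continuous (Atil A₁ A₂ t₀)) (x₀ a ε₀ lam : ℝ) :
    NKA A₁ A₂ x₀ t₀ a ε₀ lam = negIndex (magneticForm hA lam (Krect x₀ t₀ a ε₀)) := by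
  have hneg (u : testFunctions (Krect x₀ t₀ a ε₀)) :
      (magneticForm hA lam (Krect x₀ t₀ a ε₀) u u).re < 0 ↔
        qhatK A₁ A₂ x₀ t₀ a ε₀ u.1 < lam * ∫ p in Krect x₀ t₀ a ε₀, ‖u.1 p‖ ^ 2 := by
    rw [re_magneticForm_self, qhatK, sub_neg]
  refine congrArg sSup (Set.ext fun n => ⟨?_, ?_⟩)
  · rintro ⟨V, hV, hdim, hVneg⟩
    refine ⟨V.comap (testFunctions _).subtype, ?_, fun v hv hv0 => (hneg v).2 ?_⟩
    · rw [(Submodule.comapSubtypeEquivOfLe hV).finrank_eq, hdim]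
    · exact hVneg v.1 hv (by simpa using hv0)
  · rintro ⟨W, hdim, hW⟩
    refine ⟨W.map (testFunctions _).subtype, ?_, ?_, ?_⟩
    · exact Submodule.map_subtype_le _ W
    · rw [Submodule.finrank_map_subtype_eq, hdim]
    · rintro _ ⟨v, hv, rfl⟩ hv0
      exact (hneg v).1 (hW v hv (by simpa using hv0))

lemma norm_dX_sq_le {u : ℝ × ℝ → ℂ} {A M : ℝ} (hA : |A| ≤ M) (q : ℝ × ℝ) :
    ‖dX u q‖ ^ 2 ≤ 2 * ‖-Complex.I * dX u q - (A : ℂ) * u q‖ ^ 2 + 2 * M ^ 2 * ‖u q‖ ^ 2 := by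
  have htri : ‖dX u q‖ ≤ ‖-Complex.I * dX u q - (A : ℂ) * u q‖ + |A| * ‖u q‖ := by
    simpa using norm_le_norm_sub_add (-Complex.I * dX u q) ((A : ℂ) * u q)
  calc ‖dX u q‖ ^ 2 ≤ (‖-Complex.I * dX u q - (A : ℂ) * u q‖ + M * ‖u q‖) ^ 2 := by
        gcongr
        exact htri.trans (by gcongr)
    _ ≤ 2 * (‖-Complex.I * dX u q - (A : ℂ) * u q‖ ^ 2 + (M * ‖u q‖) ^ 2) := add_sq_le
    _ = _ := by ring

lemma exists_abs_Atil_le (hA : Continuous (Atil A₁ A₂ t₀)) (x₀ a ε₀ : ℝ) :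
    ∃ M, ∀ p ∈ Krect x₀ t₀ a ε₀, |Atil A₁ A₂ t₀ p| ≤ M := by
  obtain ⟨M, hM⟩ := (isCompact_Icc.prod isCompact_Icc).exists_bound_of_continuousOn
    (hA.continuousOn (s := Set.Icc (x₀ - ε₀ * a * rexp t₀ / 2) (x₀ + ε₀ * a * rexp t₀ / 2) ×ˢ
      Set.Icc (t₀ - ε₀ / 2) (t₀ + ε₀ / 2)))
  exact ⟨M, fun p hp => hM p (Set.prod_mono Set.Ioo_subset_Icc_self Set.Ioo_subset_Icc_self hp)⟩

lemma exists_integral_norm_grad_sq_le (hA : Continuous (Atil A₁ A₂ t₀)) (x₀ a ε₀ : ℝ) :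
    ∃ C, 0 < C ∧ ∀ u, IsTestOn (Krect x₀ t₀ a ε₀) u →
      (∫ p in Krect x₀ t₀ a ε₀, ‖dX u p‖ ^ 2) + ∫ p in Krect x₀ t₀ a ε₀, ‖dY u p‖ ^ 2 ≤
        C * (qhatK A₁ A₂ x₀ t₀ a ε₀ u + ∫ p in Krect x₀ t₀ a ε₀, ‖u p‖ ^ 2) := by
  obtain ⟨M, hM⟩ := exists_abs_Atil_le hA x₀ a ε₀
  set c := rexp (ε₀ - 2 * t₀)
  have hc : 0 < c := exp_pos _
  refine ⟨2 * c + 2 * M ^ 2 + 1, by positivity, fun u hu => ?_⟩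
  have hcX := hu.continuous_dX
  have hcY := hu.continuous_dY
  have hintX : Integrable fun p => ‖dX u p‖ ^ 2 :=
    hu.integrable_of_eq_zero (by fun_prop) fun q _ hX _ => by simp [hX]
  have hintY : Integrable fun p => ‖dY u p‖ ^ 2 :=
    hu.integrable_of_eq_zero (by fun_prop) fun q _ _ hY => by simp [hY]
  have hform := hu.integrable_form (W := fun p => rexp (2 * p.2)) (by fun_prop) hA
  rw [qhatK, ← integral_add hintX.integrableOn hintY.integrableOn,
    ← integral_add hform.integrableOn hu.integrable_norm_sq.integrableOn, ← integral_const_mul]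
  refine setIntegral_mono_on (hintX.add hintY).integrableOn
    ((hform.add hu.integrable_norm_sq).const_mul _).integrableOn
    (measurableSet_Ioo.prod measurableSet_Ioo) fun p hp => ?_
  have hX := norm_dX_sq_le (u := u) (hM p hp) p
  set X := ‖-Complex.I * dX u p - (Atil A₁ A₂ t₀ p : ℂ) * u p‖ ^ 2
  have hweight : X ≤ c * (rexp (2 * p.2) * X) := by
    rw [← mul_assoc, ← exp_add]
    exact le_mul_of_one_le_left (sq_nonneg _) (one_le_exp (by linarith [hp.2.1]))
  have hX0 : 0 ≤ rexp (2 * p.2) * X := by positivity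
  nlinarith [mul_nonneg hc.le (sq_nonneg ‖dY u p‖), mul_nonneg hc.le (sq_nonneg ‖u p‖),
    mul_nonneg (sq_nonneg M) (sq_nonneg ‖dY u p‖), mul_nonneg (sq_nonneg M) hX0,
    mul_nonneg (sq_nonneg M) (sq_nonneg ‖u p‖), sq_nonneg ‖u p‖]

lemma exists_linearMap_finite_le_qhatK (hA : Continuous (Atil A₁ A₂ t₀)) {x₀ a ε₀ : ℝ}
    (ha : 0 < a) (hε : 0 < ε₀) (lam : ℝ) :
    ∃ (m : ℕ) (ℓ : testFunctions (Krect x₀ t₀ a ε₀) →ₗ[ℂ] (Fin m × Fin m → ℂ)), ∀ u, ℓ u = 0 →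
      lam * (∫ p in Krect x₀ t₀ a ε₀, ‖u.1 p‖ ^ 2) ≤ qhatK A₁ A₂ x₀ t₀ a ε₀ u.1 := by
  obtain ⟨C, hC, hgrad⟩ := exists_integral_norm_grad_sq_le hA x₀ a ε₀
  have hR : 0 < ε₀ * a * rexp t₀ := by positivity
  obtain ⟨m, ℓ, hℓ⟩ : ∃ (m : ℕ) (ℓ : testFunctions (Krect x₀ t₀ a ε₀) →ₗ[ℂ] (Fin m × Fin m → ℂ)),
      ∀ u, ℓ u = 0 → ∫ p in Krect x₀ t₀ a ε₀, ‖u.1 p‖ ^ 2 ≤ 1 / (C * (|lam| + 1)) *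
        ((∫ p in Krect x₀ t₀ a ε₀, ‖dX u.1 p‖ ^ 2) + ∫ p in Krect x₀ t₀ a ε₀, ‖dY u.1 p‖ ^ 2) :=
    exists_linearMap_integral_norm_sq_le (by linarith) (by linarith) (by positivity)
  refine ⟨m, ℓ, fun u hu => ?_⟩
  have hmass : 0 ≤ ∫ p in Krect x₀ t₀ a ε₀, ‖u.1 p‖ ^ 2 := by positivity
  have hpoincare := (hℓ u hu).trans (mul_le_mul_of_nonneg_left (hgrad u.1 u.2) (by positivity))
  rw [one_div, mul_inv_rev, mul_assoc, inv_mul_cancel_left₀ hC.ne', ← div_eq_inv_mul,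
    le_div_iff₀ (by positivity)] at hpoincare
  linarith [mul_le_mul_of_nonneg_right (le_abs_self lam) hmass]

theorem exists_linearMap_le_qhatK (hA : Continuous (Atil A₁ A₂ t₀)) {x₀ a ε₀ : ℝ} (ha : 0 < a)
    (hε : 0 < ε₀) (lam : ℝ) :
    ∃ Φ : Fin (NKA A₁ A₂ x₀ t₀ a ε₀ lam) → (testFunctions (Krect x₀ t₀ a ε₀) →ₗ[ℂ] ℂ),
      ∀ u, (∀ i, Φ i u = 0) →
        lam * (∫ p in Krect x₀ t₀ a ε₀, ‖u.1 p‖ ^ 2) ≤ qhatK A₁ A₂ x₀ t₀ a ε₀ u.1 := by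
  have hre (u : testFunctions (Krect x₀ t₀ a ε₀)) :
      0 ≤ (magneticForm hA lam (Krect x₀ t₀ a ε₀) u u).re ↔
        lam * (∫ p in Krect x₀ t₀ a ε₀, ‖u.1 p‖ ^ 2) ≤ qhatK A₁ A₂ x₀ t₀ a ε₀ u.1 := by
    rw [re_magneticForm_self, qhatK, sub_nonneg]
  obtain ⟨m, ℓ, hℓ⟩ := exists_linearMap_finite_le_qhatK hA ha hε lam
  obtain ⟨Φ, hΦ⟩ := exists_linearMap_nonneg_of_eq_zero (isSymm_magneticForm hA lam _)
    fun u hu => (hre u).2 (hℓ u hu)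
  rw [NKA_eq_negIndex hA]
  exact ⟨Φ, fun u hu => (hre u).1 (hΦ u hu)⟩

end CountingFunctionals

section LandauTiles

open Polynomial
open scoped ContDiff

variable {ι : Type*} [Fintype ι]

/-- The superposition of Landau states of field strength `β` and frequencies `ν i`, multiplied by
the cutoff `χ` in `x` and by one window `ψ` in `t`, and moved to the point `(x₀, t₀)`; `d i` is the
position of the window relative to the centre of the `i`-th state. -/
def landauTile (χ ψ : ℝ → ℝ) (β x₀ t₀ : ℝ) (ν d : ι → ℝ) (p : ι → ℂ[X]) (q : ℝ × ℝ) : ℂ :=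
  wavePacket χ ν (fun i => windowed ψ (d i) (polyGauss β (p i))) (q - (x₀, t₀))

section Linearity

variable (χ ψ : ℝ → ℝ) (β x₀ t₀ : ℝ) (ν d : ι → ℝ)

lemma landauTile_add (p r : ι → ℂ[X]) :
    landauTile χ ψ β x₀ t₀ ν d (fun i => p i + r i) =
      landauTile χ ψ β x₀ t₀ ν d p + landauTile χ ψ β x₀ t₀ ν d r := by
  funext q
  simp only [landauTile, wavePacket, trigSum, windowed, polyGauss_add, Pi.add_apply, mul_add,
    Finset.sum_add_distrib, add_mul]

lemma landauTile_smul (c : ℂ) (p : ι → ℂ[X]) :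
    landauTile χ ψ β x₀ t₀ ν d (fun i => c • p i) = c • landauTile χ ψ β x₀ t₀ ν d p := by
  funext q
  simp only [landauTile, wavePacket, trigSum, windowed, polyGauss_smul, Pi.smul_apply, smul_eq_mul,
    mul_left_comm _ c, mul_assoc c, ← Finset.mul_sum]

/-- `landauTile` as a linear map of the polynomials of degree less than `M`. -/
def landauTileLinearMap {Ω : Set (ℝ × ℝ)} (M : ℕ)
    (h : ∀ p, IsTestOn Ω (landauTile χ ψ β x₀ t₀ ν d p)) :
    (ι → degreeLT ℂ M) →ₗ[ℂ] testFunctions Ω where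
  toFun p := ⟨landauTile χ ψ β x₀ t₀ ν d fun i => p i, h _⟩
  map_add' _ _ := Subtype.ext (landauTile_add χ ψ β x₀ t₀ ν d _ _)
  map_smul' c _ := Subtype.ext (landauTile_smul χ ψ β x₀ t₀ ν d c _)

end Linearity

section Energy

variable {L δ D L' δ' D' : ℝ} {χ P ψ Q : ℝ → ℝ} {x₀ t₀ a ε₀ : ℝ} {ν d : ι → ℝ}

lemma windowed_eq_zero (hψ : TileCutoff L' δ' D' ψ Q) (d : ℝ) (u : ℝ → ℂ) {t : ℝ}
    (ht : (L' + δ') / 2 ≤ |t|) : windowed ψ d u t = 0 := by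
  rw [windowed, hψ.eq_zero t ht, Complex.ofReal_zero, zero_mul]

lemma isTestOn_landauTile (hχ : TileCutoff L δ D χ P) (hψ : TileCutoff L' δ' D' ψ Q)
    (hL : L + δ < ε₀ * a * rexp t₀) (hL' : L' + δ' < ε₀) (β : ℝ) (p : ι → ℂ[X]) :
    IsTestOn (Krect x₀ t₀ a ε₀) (landauTile χ ψ β x₀ t₀ ν d p) :=
  hχ.isTestOn_wavePacket (fun i => hψ.contDiff_windowed (d i) (contDiff_polyGauss β (p i)))
    (fun _ _ ht => windowed_eq_zero hψ _ _ ht) hL (by linarith)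

lemma isTestOn_univ_wavePacket_windowed (hχ : TileCutoff L δ D χ P)
    (hψ : TileCutoff L' δ' D' ψ Q) (β : ℝ) (p : ι → ℂ[X]) :
    IsTestOn Set.univ (wavePacket χ ν fun i => windowed ψ (d i) (polyGauss β (p i))) :=
  hχ.isTestOn_univ_wavePacket
    (fun i => hψ.contDiff_windowed (d i) (contDiff_polyGauss β (p i)))
    fun _ _ ht => windowed_eq_zero hψ _ _ ht

lemma setIntegral_norm_sq_landauTile (hχ : TileCutoff L δ D χ P) (hψ : TileCutoff L' δ' D' ψ Q)
    (hL : L + δ < ε₀ * a * rexp t₀) (hL' : L' + δ' < ε₀) (hν : OrthogonalFrequencies L ν) (β : ℝ)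
    (p : ι → ℂ[X]) :
    ∫ q in Krect x₀ t₀ a ε₀, ‖landauTile χ ψ β x₀ t₀ ν d p q‖ ^ 2 =
      L * ∑ i, ∫ t, ‖windowed ψ (d i) (polyGauss β (p i)) t‖ ^ 2 := by
  have hw := isTestOn_univ_wavePacket_windowed (ν := ν) (d := d) hχ hψ β p
  have hcont := hw.continuous
  rw [(isTestOn_landauTile (ν := ν) (d := d) hχ hψ hL hL' β p).setIntegral_eq_integral
      fun q h0 _ _ => by simp [h0],
    ← hχ.integral_norm_sq_wavePacket hν
      (hw.integrable_of_eq_zero (by fun_prop) fun q h0 _ _ => by simp [h0])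
      fun i => integrable_norm_sq_of_hasCompactSupport
        (hψ.contDiff_windowed (d i) (contDiff_polyGauss β (p i)))
        (hψ.hasCompactSupport_windowed _ _)]
  exact integral_sub_right_eq_self
    (fun q => ‖wavePacket χ ν (fun i => windowed ψ (d i) (polyGauss β (p i))) q‖ ^ 2) (x₀, t₀)

lemma oscillatorEnergy_abs (b₀ d : ℝ) (h : ℝ → ℂ) :
    oscillatorEnergy |b₀| d h = oscillatorEnergy b₀ d h := by
  simp only [oscillatorEnergy, sq_abs]

lemma mul_sum_mass_le_sum_oscillatorEnergy (hχ : TileCutoff L δ D χ P)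
    (hψ : TileCutoff L' δ' D' ψ Q) (hL : L + δ < ε₀ * a * rexp t₀) (hL' : L' + δ' < ε₀)
    (hν : OrthogonalFrequencies L ν) {b₀ Λ : ℝ} (hd : ∀ i, ν i = b₀ * rexp (-t₀) * d i)
    {p : ι → ℂ[X]}
    (hΛ : (Λ * ∫ q in Krect x₀ t₀ a ε₀, ‖landauTile χ ψ |b₀| x₀ t₀ ν d p q‖ ^ 2) ≤
      qK0 x₀ t₀ a ε₀ b₀ (landauTile χ ψ |b₀| x₀ t₀ ν d p)) :
    (Λ - (2 * rexp (2 * t₀) * D ^ 2 + 1 / 4)) *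
        ∑ i, ∫ t, ‖windowed ψ (d i) (polyGauss |b₀| (p i)) t‖ ^ 2 ≤
      ∑ i, oscillatorEnergy |b₀| (d i) (windowed ψ (d i) (polyGauss |b₀| (p i))) := by
  have henergy := hΛ.trans <| hχ.qK0_wavePacket_le hν
    (fun i => hψ.contDiff_windowed (d i) (contDiff_polyGauss |b₀| (p i)))
    (fun i => hψ.hasCompactSupport_windowed _ _) hd
    (isTestOn_univ_wavePacket_windowed hχ hψ |b₀| p)
    (isTestOn_landauTile hχ hψ hL hL' |b₀| p)
  rw [setIntegral_norm_sq_landauTile hχ hψ hL hL' hν, Finset.sum_add_distrib,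
    ← Finset.mul_sum] at henergy
  simp only [oscillatorEnergy_abs]
  refine le_of_mul_le_mul_left ?_ hχ.length_pos
  linarith

end Energy

/-- The distance between the centres of Landau states whose plane waves have consecutive
frequencies on a circle of length `L`. -/
def landauSpacing (L b₀ t₀ : ℝ) : ℝ := 2 * π * rexp t₀ / (L * |b₀|)

lemma landauSpacing_pos {L b₀ : ℝ} (hL : 0 < L) (hb : b₀ ≠ 0) (t₀ : ℝ) :
    0 < landauSpacing L b₀ t₀ := by
  rw [landauSpacing]
  positivity

lemma orthogonalFrequencies_equally_spaced {L b₀ : ℝ} (hL : 0 < L) (hb : b₀ ≠ 0) (t₀ s c₀ : ℝ)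
    (k : ℕ) :
    OrthogonalFrequencies L fun i : Fin k =>
      b₀ * rexp (-t₀) * (s - (c₀ + (i : ℕ)) * landauSpacing L b₀ t₀) := by
  intro i j hij
  have hdiff : (b₀ * rexp (-t₀) * (s - (c₀ + (i : ℕ)) * landauSpacing L b₀ t₀) -
      b₀ * rexp (-t₀) * (s - (c₀ + (j : ℕ)) * landauSpacing L b₀ t₀)) * L =
        2 * π * (b₀ / |b₀| * ((j : ℕ) - (i : ℕ))) := by
    rw [Real.exp_neg, landauSpacing]
    field_simp
    ring
  rw [hdiff]
  rcases hb.lt_or_gt with hneg | hpos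
  · refine ⟨(i : ℕ) - (j : ℕ), by omega, ?_⟩
    rw [abs_of_neg hneg, div_neg, div_self hb]
    push_cast
    ring
  · refine ⟨(j : ℕ) - (i : ℕ), by omega, ?_⟩
    rw [abs_of_pos hpos, div_self hb]
    push_cast
    ring

end LandauTiles

section CountingLandauStates

open Polynomial

lemma finrank_fun_degreeLT (k M : ℕ) : Module.finrank ℂ (Fin k → degreeLT ℂ M) = k * M := by
  simp [Module.finrank_pi_fintype, (degreeLTEquiv ℂ M).finrank_eq]

lemma exists_ne_zero_forall_apply_eq_zero {F U E : Type*} [Field F] [AddCommGroup U] [Module F U]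
    [Module.Finite F U] [AddCommGroup E] [Module F E] {n N : ℕ} (T : ℕ → U →ₗ[F] E)
    (Φ : Fin N → E →ₗ[F] F) (h : n * N < Module.finrank F U) :
    ∃ u, u ≠ 0 ∧ ∀ j < n, ∀ i, Φ i (T j u) = 0 := by
  let Ψ : U →ₗ[F] (Fin n × Fin N → F) := LinearMap.pi fun ji => (Φ ji.2).comp (T ji.1)
  have hker : LinearMap.ker Ψ ≠ ⊥ := LinearMap.ker_ne_bot_of_finrank_lt (by simpa using h)
  obtain ⟨u, hu, hu0⟩ := (Submodule.ne_bot_iff _).1 hker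
  exact ⟨u, hu0, fun j hj i => congrFun (LinearMap.mem_ker.1 hu) (⟨j, hj⟩, i)⟩

lemma mul_one_sub_le_of_sum_le {ι : Type*} [Fintype ι] {n : ℕ} {Λ E₀ ε : ℝ} {E M : ℕ → ι → ℝ}
    {G : ι → ℝ} (hΛ : 0 ≤ Λ) (htile : ∀ j < n, Λ * ∑ i, M j i ≤ ∑ i, E j i)
    (hE : ∀ i, ∑ j ∈ Finset.range n, E j i ≤ (E₀ + ε) * G i)
    (hM : ∀ i, (1 - ε) * G i ≤ ∑ j ∈ Finset.range n, M j i) (hG : 0 < ∑ i, G i) :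
    Λ * (1 - ε) ≤ E₀ + ε := by
  refine le_of_mul_le_mul_right ?_ hG
  calc Λ * (1 - ε) * ∑ i, G i = Λ * ∑ i, (1 - ε) * G i := by rw [← Finset.mul_sum, mul_assoc]
    _ ≤ Λ * ∑ i, ∑ j ∈ Finset.range n, M j i := by gcongr with i; exact hM i
    _ = ∑ j ∈ Finset.range n, Λ * ∑ i, M j i := by rw [Finset.sum_comm, Finset.mul_sum]
    _ ≤ ∑ j ∈ Finset.range n, ∑ i, E j i :=
        Finset.sum_le_sum fun j hj => htile j (Finset.mem_range.1 hj)
    _ = ∑ i, ∑ j ∈ Finset.range n, E j i := Finset.sum_comm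
    _ ≤ ∑ i, (E₀ + ε) * G i := Finset.sum_le_sum fun i _ => hE i
    _ = (E₀ + ε) * ∑ i, G i := Finset.mul_sum .. |>.symm

lemma sum_gaussNormSq_pos {ι : Type*} [Fintype ι] {β : ℝ} (hβ : 0 < β) {M : ℕ}
    {p : ι → degreeLT ℂ M} (hp : p ≠ 0) : 0 < ∑ i, gaussNormSq β (p i : ℂ[X]) := by
  obtain ⟨i, hi⟩ := Function.ne_iff.1 hp
  exact Finset.sum_pos' (fun i _ => gaussNormSq_nonneg β _)
    ⟨i, Finset.mem_univ i, gaussNormSq_pos hβ fun h => hi (Subtype.ext h)⟩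

lemma natDegree_le_of_mem_degreeLT {R : Type*} [Semiring R] {m : ℕ} {p : R[X]}
    (hp : p ∈ degreeLT R (m + 1)) : p.natDegree ≤ m :=
  natDegree_le_iff_coeff_eq_zero.2 fun _ hk =>
    coeff_eq_zero_of_degree_lt ((mem_degreeLT.1 hp).trans_le (by exact_mod_cast hk))

variable {L δ D L' δ' D' : ℝ} {χ P ψ Q : ℝ → ℝ} {x₀ t₀ a ε₀ b₀ Λ : ℝ} {N m : ℕ}

lemma mul_le_mul_of_margin (hχ : TileCutoff L δ D χ P) (hψ : TileCutoff L' δ' D' ψ Q)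
    (hL : L + δ < ε₀ * a * rexp t₀) (hL' : L' + δ' < ε₀) (hb : b₀ ≠ 0)
    (Φ : Fin N → testFunctions (Krect x₀ t₀ a ε₀) →ₗ[ℂ] ℂ)
    (hΦ : ∀ u : testFunctions (Krect x₀ t₀ a ε₀), (∀ i, Φ i u = 0) →
      (Λ * ∫ q in Krect x₀ t₀ a ε₀, ‖u.1 q‖ ^ 2) ≤ qK0 x₀ t₀ a ε₀ b₀ u.1)
    {E₀ ε c₀ : ℝ} {n k : ℕ} (hΛ : 0 ≤ Λ - (2 * rexp (2 * t₀) * D ^ 2 + 1 / 4))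
    (hε : E₀ + ε < (Λ - (2 * rexp (2 * t₀) * D ^ 2 + 1 / 4)) * (1 - ε))
    (hmargin : ∀ (i : Fin k) (p : ℂ[X]), p.natDegree ≤ m →
      let d : ℕ → ℝ := fun j => j * L' - (c₀ + (i : ℕ)) * landauSpacing L b₀ t₀
      (∑ j ∈ Finset.range n, oscillatorEnergy |b₀| (d j) (windowed ψ (d j) (polyGauss |b₀| p)) ≤
        (E₀ + ε) * gaussNormSq |b₀| p) ∧
      (1 - ε) * gaussNormSq |b₀| p ≤
        ∑ j ∈ Finset.range n, ∫ t, ‖windowed ψ (d j) (polyGauss |b₀| p) t‖ ^ 2) :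
    k * (m + 1) ≤ n * N := by
  by_contra! hlt
  let d : ℕ → Fin k → ℝ := fun j i => j * L' - (c₀ + (i : ℕ)) * landauSpacing L b₀ t₀
  let ν : ℕ → Fin k → ℝ := fun j i => b₀ * rexp (-t₀) * d j i
  let T := fun j => landauTileLinearMap χ ψ |b₀| x₀ t₀ (ν j) (d j) (m + 1)
    (isTestOn_landauTile (x₀ := x₀) hχ hψ hL hL' |b₀|)
  have : Module.Finite ℂ (degreeLT ℂ (m + 1)) := .equiv (degreeLTEquiv ℂ (m + 1)).symm
  obtain ⟨p, hp, hker⟩ := exists_ne_zero_forall_apply_eq_zero T Φ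
    (hlt.trans_eq (finrank_fun_degreeLT k (m + 1)).symm)
  have htile : ∀ j < n, _ := fun j hj => mul_sum_mass_le_sum_oscillatorEnergy hχ hψ hL hL'
    (orthogonalFrequencies_equally_spaced hχ.length_pos hb t₀ (j * L') c₀ k) (fun _ => rfl)
    (hΦ (T j p) (hker j hj))
  have hdeg := fun i => hmargin i _ (natDegree_le_of_mem_degreeLT (p i).2)
  exact hε.not_ge (mul_one_sub_le_of_sum_le hΛ htile (fun i => (hdeg i).1) (fun i => (hdeg i).2)
    (sum_gaussNormSq_pos (abs_pos.2 hb) hp))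

lemma exists_small_loss {E₀ Λ : ℝ} (hE : 0 ≤ E₀) (hΛ : E₀ < Λ) :
    ∃ ε > 0, E₀ + ε < Λ * (1 - ε) := by
  have hΛ' : 0 < 1 + Λ := by linarith
  refine ⟨(Λ - E₀) / (2 * (1 + Λ)), div_pos (by linarith) (by linarith), ?_⟩
  have hloss : (Λ - E₀) / (2 * (1 + Λ)) * (1 + Λ) = (Λ - E₀) / 2 := by field_simp
  linarith

lemma exists_forall_mul_le_mul (hχ : TileCutoff L δ D χ P) (hψ : TileCutoff L' δ' D' ψ Q)
    (hL : L + δ < ε₀ * a * rexp t₀) (hL' : L' + δ' < ε₀) (hb : b₀ ≠ 0)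
    (Φ : Fin N → testFunctions (Krect x₀ t₀ a ε₀) →ₗ[ℂ] ℂ)
    (hΦ : ∀ u : testFunctions (Krect x₀ t₀ a ε₀), (∀ i, Φ i u = 0) →
      (Λ * ∫ q in Krect x₀ t₀ a ε₀, ‖u.1 q‖ ^ 2) ≤ qK0 x₀ t₀ a ε₀ b₀ u.1)
    (hgap : (2 * m + 1) * |b₀| + 2 * D' ^ 2 < Λ - (2 * rexp (2 * t₀) * D ^ 2 + 1 / 4)) :
    ∃ S : ℝ, ∀ n k : ℕ, k * landauSpacing L b₀ t₀ + S ≤ n * L' → k * (m + 1) ≤ n * N := by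
  have hE₀ : 0 ≤ (2 * m + 1) * |b₀| + 2 * D' ^ 2 := by positivity
  obtain ⟨ε, hε, hloss⟩ := exists_small_loss hE₀ hgap
  obtain ⟨s, -, hmargin⟩ := hψ.exists_margin_polyGauss (abs_pos.2 hb) m hε
  have hκ := landauSpacing_pos hχ.length_pos hb t₀
  set κ := landauSpacing L b₀ t₀ with hκ_def
  refine ⟨s + L' + s, fun n k hnk => mul_le_mul_of_margin (c₀ := s / κ) hχ hψ hL hL' hb Φ hΦ
    (hE₀.trans hgap.le) hloss fun i p hp => hmargin n _ p ?_ ?_ hp⟩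
  all_goals rw [← hκ_def, add_mul, div_mul_cancel₀ _ hκ.ne']
  · have : 0 ≤ (i : ℕ) * κ := by positivity
    linarith
  · have : (i : ℕ) * κ ≤ k * κ := by gcongr; exact i.2.le
    linarith

lemma mul_div_le_of_forall_mul_le_mul {κ ℓ S : ℝ} (hκ : 0 < κ) (hℓ : 0 < ℓ) {M N : ℕ}
    (h : ∀ n k : ℕ, k * κ + S ≤ n * ℓ → k * M ≤ n * N) : M * (ℓ / κ) ≤ N := by
  by_contra! hlt
  have hexcess : 0 < M - κ * N / ℓ := by
    rw [sub_pos, div_lt_iff₀ hℓ]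
    rw [← mul_div_assoc, lt_div_iff₀ hκ] at hlt
    linarith
  obtain ⟨k, hk⟩ := exists_nat_gt ((|S| / ℓ + 1) * N / (M - κ * N / ℓ))
  rw [div_lt_iff₀ hexcess] at hk
  let n := ⌈(k * κ + |S|) / ℓ⌉₊
  have hn : k * κ + |S| ≤ n * ℓ := (div_le_iff₀ hℓ).1 (Nat.le_ceil _)
  have hkn : (k : ℝ) * M ≤ n * N := by exact_mod_cast h n k (by linarith [le_abs_self S])
  have hnN : (n : ℝ) * N ≤ ((k * κ + |S|) / ℓ + 1) * N := by
    gcongr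
    exact (Nat.ceil_lt_add_one (by positivity)).le
  have hsplit : ((k * κ + |S|) / ℓ + 1) * N = k * (κ * N / ℓ) + (|S| / ℓ + 1) * N := by ring
  linarith

end CountingLandauStates

section LandauLevels

variable {β : ℝ}

lemma lt_ceil_landau_iff (hβ : 0 < β) (Λ : ℝ) (k : ℕ) :
    k < ⌈(Λ / β - 1) / 2⌉₊ ↔ (2 * k + 1) * β < Λ := by
  rw [Nat.lt_ceil, lt_div_iff₀ (by norm_num), lt_sub_iff_add_lt, lt_div_iff₀ hβ, mul_comm (k : ℝ)]

lemma tsum_heav (hβ : 0 < β) (Λ : ℝ) :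
    ∑' k : ℕ, heav (Λ - (2 * k + 1) * β) = ⌈(Λ / β - 1) / 2⌉₊ := by
  have hheav (k : ℕ) : heav (Λ - (2 * k + 1) * β) =
      if k ∈ Finset.range ⌈(Λ / β - 1) / 2⌉₊ then 1 else 0 := by
    simp only [heav, sub_pos, Finset.mem_range, lt_ceil_landau_iff hβ]
  rw [tsum_eq_sum fun k hk => (hheav k).trans (if_neg hk), Finset.sum_congr rfl fun k hk =>
    (hheav k).trans (if_pos hk), Finset.sum_const, Finset.card_range, nsmul_one]

lemma mul_tsum_heav_le (hβ : 0 < β) {Λ c N : ℝ} (hN : 0 ≤ N)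
    (h : ∀ m : ℕ, (2 * m + 1) * β < Λ → c * (m + 1) ≤ N) :
    c * ∑' k : ℕ, heav (Λ - (2 * k + 1) * β) ≤ N := by
  rw [tsum_heav hβ]
  rcases hM : ⌈(Λ / β - 1) / 2⌉₊ with - | m
  · simpa using hN
  · push_cast
    exact h m ((lt_ceil_landau_iff hβ Λ m).1 (by lia))

end LandauLevels

section Constants

lemma localization_error_le {τ ε₀ a a₀ : ℝ} (hτ : 0 < τ) (hε : 0 < ε₀) (ha₀ : 1 < a₀)
    (ha : 1 / a₀ < a) (C t₀ : ℝ) :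
    2 * (C / (τ * ε₀ / 4)) ^ 2 + 2 * rexp (2 * t₀) * (C / (τ * (ε₀ * a * rexp t₀) / 4)) ^ 2 ≤
      64 * C ^ 2 * a₀ ^ 2 / (τ * ε₀) ^ 2 := by
  have ha' : 0 < a := lt_trans (by positivity) ha
  have hinv : 1 / a ≤ a₀ := (one_div_lt (by positivity) ha').1 ha |>.le
  calc _ = 32 * C ^ 2 * (1 + (1 / a) ^ 2) / (τ * ε₀) ^ 2 := by
        rw [two_mul t₀, Real.exp_add]
        field_simp
        ring
    _ ≤ 32 * C ^ 2 * (a₀ ^ 2 + a₀ ^ 2) / (τ * ε₀) ^ 2 := by gcongr; exact one_le_pow₀ ha₀.le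
    _ = 64 * C ^ 2 * a₀ ^ 2 / (τ * ε₀) ^ 2 := by ring

lemma inv_mul_sub_mul_le {lam p s r I q : ℝ} (hp : 0 < p) (hs : 0 < s)
    (h : lam * I ≤ p * (s * q + r * I)) : s⁻¹ * (lam / p - r) * I ≤ q := by
  rw [mul_assoc, inv_mul_le_iff₀ hs, sub_mul, div_mul_eq_mul_div, sub_le_iff_le_add,
    div_le_iff₀ hp, mul_comm _ p]
  exact h

end Constants

section CountingLowerBound

variable {x₀ t₀ a ε₀ : ℝ} {N : ℕ}

lemma sq_mul_succ_le_of_functionals {C : ℝ}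
    (hcut : ∀ L δ, 0 < δ → δ < L → ∃ χ P, TileCutoff L δ (C / δ) χ P) {a₀ b₀ Λ τ : ℝ}
    (ha₀ : 1 < a₀) (ha : 1 / a₀ < a) (hε : 0 < ε₀) (hb : b₀ ≠ 0) (hτ : 0 < τ) (hτ' : τ < 1)
    (Φ : Fin N → testFunctions (Krect x₀ t₀ a ε₀) →ₗ[ℂ] ℂ)
    (hΦ : ∀ u : testFunctions (Krect x₀ t₀ a ε₀), (∀ i, Φ i u = 0) →
      (Λ * ∫ q in Krect x₀ t₀ a ε₀, ‖u.1 q‖ ^ 2) ≤ qK0 x₀ t₀ a ε₀ b₀ u.1)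
    {m : ℕ} (hm : (2 * m + 1) * |b₀| < Λ - 1 / 4 - 64 * C ^ 2 * a₀ ^ 2 / (τ * ε₀) ^ 2) :
    (1 - τ) ^ 2 * (a * ε₀ ^ 2 * rexp t₀ * |b₀| / (2 * π * rexp t₀)) * (m + 1) ≤ N := by
  have ha' : 0 < a := lt_trans (by positivity) ha
  set R := ε₀ * a * rexp t₀ with hR
  have hRpos : 0 < R := by positivity
  obtain ⟨χ, P, hχ⟩ := hcut ((1 - τ / 2) * R) (τ * R / 4) (by positivity) (by nlinarith)
  obtain ⟨ψ, Q, hψ⟩ := hcut ((1 - τ / 2) * ε₀) (τ * ε₀ / 4) (by positivity) (by nlinarith)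
  obtain ⟨S, hS⟩ := exists_forall_mul_le_mul (m := m) hχ hψ (by nlinarith) (by nlinarith) hb Φ hΦ
    (by linarith [localization_error_le hτ hε ha₀ ha C t₀])
  have hdensity := mul_div_le_of_forall_mul_le_mul
    (landauSpacing_pos hχ.length_pos hb t₀) hψ.length_pos hS
  calc _ ≤ (1 - τ / 2) ^ 2 * (a * ε₀ ^ 2 * rexp t₀ * |b₀| / (2 * π * rexp t₀)) * (m + 1) := by
        have : 0 ≤ 1 - τ := by linarith
        gcongr
        linarith
    _ = (m + 1 : ℕ) * ((1 - τ / 2) * ε₀ / landauSpacing ((1 - τ / 2) * R) b₀ t₀) := by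
        have : 0 < 1 - τ / 2 := by linarith
        rw [landauSpacing, hR]
        push_cast
        field_simp
    _ ≤ N := hdensity

variable {A₁ A₂ : ℝ × ℝ → ℝ}

lemma exists_linearMap_le_qK0 (hB : ContDiffOn ℝ 1 (fieldB A₁ A₂) UHP) {C₀ a₀ C₁ : ℝ}
    (hC₀ : 0 < C₀) (ha₀ : 1 < a₀) (hH : H2 C₀ A₁ A₂)
    (hC₁ : 2 * (8 * (C₀ * (a₀ + 1)) + 1) ^ 2 ≤ C₁) (ha : 0 < a) (ha' : a ≤ a₀) (hε : 0 < ε₀)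
    (hε' : ε₀ < 1 / (2 * C₁)) (hβ : 1 < intenB A₁ A₂ (x₀, rexp t₀)) (lam : ℝ) {η : ℝ} (hη : 0 < η)
    (hη' : η ≤ 1) :
    ∃ Φ : Fin (NKA A₁ A₂ x₀ t₀ a ε₀ lam) → testFunctions (Krect x₀ t₀ a ε₀) →ₗ[ℂ] ℂ,
      ∀ u : testFunctions (Krect x₀ t₀ a ε₀), (∀ i, Φ i u = 0) →
        (1 + η ^ 2)⁻¹ * (lam / (1 + ε₀ * C₁) -
            (ε₀ ^ 4 / η ^ 2) * C₁ * intenB A₁ A₂ (x₀, rexp t₀) ^ 2) *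
          (∫ q in Krect x₀ t₀ a ε₀, ‖u.1 q‖ ^ 2) ≤
            qK0 x₀ t₀ a ε₀ (fieldB A₁ A₂ (x₀, rexp t₀)) u.1 := by
  have hprod : 0 < C₀ * (a₀ + 1) := by positivity
  have hC₁2 : 2 ≤ C₁ := by nlinarith
  have hC₁prod : C₀ * (a₀ + 1) ≤ C₁ := by nlinarith
  have hεC₁ : ε₀ * (2 * C₁) < 1 := (lt_div_iff₀ (by positivity)).1 hε'
  obtain ⟨Φ, hΦ⟩ := exists_linearMap_le_qhatK (continuous_Atil hB.continuousOn t₀)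
    (x₀ := x₀) ha hε lam
  exact ⟨Φ, fun u hu => inv_mul_sub_mul_le (by positivity) (by positivity) <| (hΦ u hu).trans <|
    qhatK_le hB hC₀ hH ha ha' hε (by nlinarith) (by nlinarith) hβ hC₁ hη hη' u.2⟩

end CountingLowerBound

theorem counting_lower_bound_variable_field_general
    (C₀ : ℝ) (hC₀ : 0 < C₀) (a₀ : ℝ) (ha₀ : 1 < a₀) :
    ∃ C₁ : ℝ, 1 < C₁ ∧ ∃ C₀' > 0,
      ∀ A₁ A₂ : ℝ × ℝ → ℝ, ContDiffOn ℝ 2 A₁ UHP → ContDiffOn ℝ 2 A₂ UHP →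
      H2 C₀ A₁ A₂ →
      ∀ a : ℝ, 1 / a₀ < a → a ≤ a₀ →
      ∀ ε₀ : ℝ, 0 < ε₀ → ε₀ < 1 / (2 * C₁) →
      ∀ x₀ t₀ : ℝ, 1 < intenB A₁ A₂ (x₀, Real.exp t₀) →
      ∀ lam η : ℝ, 0 < η → η ≤ 1 →
      ∀ τ : ℝ, 0 < τ → τ < 1 →
        (1 - τ) ^ 2 * ((a * ε₀ ^ 2 * Real.exp t₀) * intenB A₁ A₂ (x₀, Real.exp t₀) /
              (2 * π * Real.exp t₀)) *
            ∑' k : ℕ, heav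
              ((1 + η ^ 2)⁻¹ * (lam / (1 + ε₀ * C₁) -
                  (ε₀ ^ 4 / η ^ 2) * C₁ * intenB A₁ A₂ (x₀, Real.exp t₀) ^ 2)
                - 1/4 - C₀' / (τ * ε₀) ^ 2
                - (2 * (k : ℝ) + 1) * intenB A₁ A₂ (x₀, Real.exp t₀))
          ≤ (NKA A₁ A₂ x₀ t₀ a ε₀ lam : ℝ) := by
  obtain ⟨C, hC, hcut⟩ := exists_tileCutoff
  refine ⟨2 * (8 * (C₀ * (a₀ + 1)) + 1) ^ 2, ?_, 64 * C ^ 2 * a₀ ^ 2, by positivity, ?_⟩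
  · nlinarith [mul_pos hC₀ (by linarith : 0 < a₀ + 1)]
  intro A₁ A₂ hA₁ hA₂ hH a ha ha' ε₀ hε hε' x₀ t₀ hβ lam η hη hη' τ hτ hτ'
  obtain ⟨Φ, hΦ⟩ := exists_linearMap_le_qK0 (contDiffOn_fieldB hA₁ hA₂) hC₀ ha₀ hH le_rfl
    (lt_trans (by positivity) ha) ha' hε hε' hβ lam hη hη'
  have hb : fieldB A₁ A₂ (x₀, rexp t₀) ≠ 0 := abs_pos.1 (one_pos.trans hβ)
  exact mul_tsum_heav_le (one_pos.trans hβ) (Nat.cast_nonneg _) fun m hm =>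
    sq_mul_succ_le_of_functionals hcut ha₀ ha hε hb hτ hτ' Φ hΦ hm

/-- lower bound for the counting function of `q̂^Ã_K`. -/
theorem counting_lower_bound_variable_field
    (C₀ : ℝ) (hC₀ : 0 < C₀) (a₀ : ℝ) (ha₀ : 1 < a₀) :
    ∃ C₁ : ℝ, 1 < C₁ ∧ ∃ C₀' > 0,
      ∀ A₁ A₂ : ℝ × ℝ → ℝ, ContDiffOn ℝ 2 A₁ UHP → ContDiffOn ℝ 2 A₂ UHP →
      H2 C₀ A₁ A₂ →
      ∀ a : ℝ, 1 / a₀ < a → a ≤ a₀ →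
      ∀ ε₀ : ℝ, 0 < ε₀ → ε₀ < 1 / (2 * C₁) →
      ∀ x₀ t₀ : ℝ, 1 < intenB A₁ A₂ (x₀, Real.exp t₀) →
      ∀ lam : ℝ, 1 < lam → ∀ η : ℝ, 0 < η → η < 1 / 2 →
      (ε₀⁻¹) ^ 2 / C₀' ≤ intenB A₁ A₂ (x₀, Real.exp t₀) →
      ∀ τ : ℝ, 0 < τ → τ < 1 →
        (1 - τ) ^ 2 * ((a * ε₀ ^ 2 * Real.exp t₀) * intenB A₁ A₂ (x₀, Real.exp t₀) /
              (2 * π * Real.exp t₀)) *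
            ∑' k : ℕ, heav
              ((1 + η ^ 2)⁻¹ * (lam / (1 + ε₀ * C₁) -
                  (ε₀ ^ 4 / η ^ 2) * C₁ * intenB A₁ A₂ (x₀, Real.exp t₀) ^ 2)
                - 1/4 - C₀' / (τ * ε₀) ^ 2
                - (2 * (k : ℝ) + 1) * intenB A₁ A₂ (x₀, Real.exp t₀))
          ≤ (NKA A₁ A₂ x₀ t₀ a ε₀ lam : ℝ) := by
  obtain ⟨C₁, hC₁, C₀', hC₀', hbound⟩ :=
    counting_lower_bound_variable_field_general C₀ hC₀ a₀ ha₀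
  exact ⟨C₁, hC₁, C₀', hC₀', fun A₁ A₂ hA₁ hA₂ hH a ha ha' ε₀ hε hε' x₀ t₀ hβ lam _ η hη hη' _ =>
    hbound A₁ A₂ hA₁ hA₂ hH a ha ha' ε₀ hε hε' x₀ t₀ hβ lam η hη (by linarith)⟩
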